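/- arXiv:1711.00211 — 9 statements merged into one kernel-verified Lean document; each statement's English description precedes it below -/
import Mathlib

section
/- Let d ≥ 3, let t ∈ (0,1), and let X ⊂ S^{d−1} be a spherically convex set (the intersection of S^{d−1} with a convex cone containing a half-line) such that for some v ∈ X one has ⟨u, v⟩ ≥ t for all u ∈ X. Let X' = {t·u/⟨u,v⟩ : u ∈ X} be the radial projection of X into the hyperplane {y ∈ ℝ^d : ⟨y, v⟩ = t}. Then the (d−1)-dimensional Hausdorff measures satisfy H^{d−1}(X) ≥ H^{d−1}(X'). -/
open scoped RealInnerProductSpace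
open MeasureTheory

/-!
The radial projection `y` of a point `u ∈ X` lies in the closed unit ball, because `⟪u, v⟫ ≥ t`.
The ray from `y` in direction `v` therefore leaves the ball at some unit vector `w`, which is a
nonnegative combination of `u` and `v` and hence a point of `X`. Moving along `v` does not change
the orthogonal projection to the hyperplane, so `y` is the orthogonal projection of `w`. Thus the
radial projection of `X` is contained in the image of `X` under a `1`-Lipschitz map.
-/

theorem exists_nonneg_norm_add_smul_eq {E : Type*} [NormedAddCommGroup E] [NormedSpace ℝ E]
    {x v : E} {R : ℝ} (hx : ‖x‖ ≤ R) (hv : v ≠ 0) : ∃ b : ℝ, 0 ≤ b ∧ ‖x + b • v‖ = R := by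
  have hcont : Continuous fun b : ℝ => ‖x + b • v‖ := by fun_prop
  have hlower : ∀ b : ℝ, b * ‖v‖ - ‖x‖ ≤ ‖x + b • v‖ := fun b =>
    calc b * ‖v‖ - ‖x‖ ≤ ‖b • v‖ - ‖x‖ := by
          rw [norm_smul]
          gcongr
          exact Real.le_norm_self b
      _ ≤ ‖x + b • v‖ := by
          rw [add_comm]
          exact norm_sub_le_norm_add _ _
  have htop : Filter.Tendsto (fun b : ℝ => ‖x + b • v‖) Filter.atTop Filter.atTop :=
    Filter.tendsto_atTop_mono hlower <|
      Filter.tendsto_atTop_add_const_right _ _ <|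
        Filter.tendsto_id.atTop_mul_const (norm_pos_iff.2 hv)
  have hx0 : R ∈ Set.Ici ‖x + (0 : ℝ) • v‖ := by simpa using hx
  exact intermediate_value_Ici hcont.continuousOn htop hx0

section InnerProductSpace

variable {E : Type*} [NormedAddCommGroup E] [InnerProductSpace ℝ E]

/-- The radial (central) projection from the origin to the hyperplane `{y | ⟪y, v⟫ = t}`.
It takes the junk value `0` at points `u` with `⟪u, v⟫ = 0`. -/
noncomputable def radialProjection (v : E) (t : ℝ) (u : E) : E :=
  (t / ⟪u, v⟫) • u

/-- The orthogonal projection to the hyperplane `{y | ⟪y, v⟫ = t}`, for `v ≠ 0`. It is written as a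
map `E → E`: project to the parallel linear hyperplane, then translate along `v`. -/
noncomputable def hyperplaneProjection (v : E) (t : ℝ) (x : E) : E :=
  (ℝ ∙ v)ᗮ.starProjection x + (t / ‖v‖ ^ 2) • v

/-- A set `X` of unit vectors is spherically star-convex about `v` if it contains every unit vector
that is a nonnegative combination of `v` and a point of `X`. For a unit vector `v`, this says that
`X` contains the minimal geodesic to `v` from each of its points other than `-v`, and contains `v`
unless it is empty. -/
def SphericallyStarConvex (v : E) (X : Set E) : Prop :=
  X ⊆ Metric.sphere 0 1 ∧
    ∀ u ∈ X, ∀ a b : ℝ, 0 ≤ a → 0 ≤ b → a • u + b • v ∈ Metric.sphere (0 : E) 1 → a • u + b • v ∈ X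

theorem inner_radialProjection {u v : E} (huv : ⟪u, v⟫ ≠ 0) (t : ℝ) :
    ⟪radialProjection v t u, v⟫ = t := by
  rw [radialProjection, real_inner_smul_left, div_mul_cancel₀ t huv]

theorem norm_radialProjection_le {u v : E} {t : ℝ} (ht : 0 ≤ t) (htu : t ≤ ⟪u, v⟫) :
    ‖radialProjection v t u‖ ≤ ‖u‖ := by
  have huv : 0 ≤ ⟪u, v⟫ := ht.trans htu
  rw [radialProjection, norm_smul, Real.norm_of_nonneg (div_nonneg ht huv)]
  exact mul_le_of_le_one_left (norm_nonneg u) (div_le_one_of_le₀ htu huv)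

theorem lipschitzWith_hyperplaneProjection (v : E) (t : ℝ) :
    LipschitzWith 1 (hyperplaneProjection v t) :=
  LipschitzWith.of_dist_le_mul fun x y => by
    simpa only [hyperplaneProjection, dist_add_right] using
      (ℝ ∙ v)ᗮ.lipschitzWith_starProjection.dist_le_mul x y

theorem hyperplaneProjection_add_smul (v : E) (t : ℝ) (x : E) (b : ℝ) :
    hyperplaneProjection v t (x + b • v) = hyperplaneProjection v t x := by
  rw [hyperplaneProjection, map_add, map_smul,
    Submodule.starProjection_orthogonalComplement_singleton_eq_zero, smul_zero, add_zero,
    hyperplaneProjection]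

theorem hyperplaneProjection_eq_self {v x : E} {t : ℝ} (hx : ⟪x, v⟫ = t) :
    hyperplaneProjection v t x = x := by
  have hline : (ℝ ∙ v).starProjection x = (t / ‖v‖ ^ 2) • v := by
    rw [Submodule.starProjection_singleton, real_inner_comm, hx]
    rfl
  rw [hyperplaneProjection, ← hline, add_comm,
    Submodule.starProjection_add_starProjection_orthogonal]

theorem SphericallyStarConvex.radialProjection_image_subset {v : E} {X : Set E}
    (hX : SphericallyStarConvex v X) {t : ℝ} (ht : 0 < t) (hvt : ∀ u ∈ X, t ≤ ⟪u, v⟫) :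
    radialProjection v t '' X ⊆ hyperplaneProjection v t '' X := by
  rintro _ ⟨u, hu, rfl⟩
  have huv : 0 < ⟪u, v⟫ := ht.trans_le (hvt u hu)
  have hv : v ≠ 0 := by
    rintro rfl
    exact huv.ne' (inner_zero_right u)
  have hball : ‖radialProjection v t u‖ ≤ 1 :=
    (norm_radialProjection_le ht.le (hvt u hu)).trans_eq (mem_sphere_zero_iff_norm.1 (hX.1 hu))
  obtain ⟨b, hb, hnorm⟩ := exists_nonneg_norm_add_smul_eq hball hv
  refine ⟨radialProjection v t u + b • v, ?_, ?_⟩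
  · exact hX.2 u hu _ b (div_pos ht huv).le hb (mem_sphere_zero_iff_norm.2 hnorm)
  · rw [hyperplaneProjection_add_smul,
      hyperplaneProjection_eq_self (inner_radialProjection huv.ne' t)]

theorem hausdorffMeasure_hyperplaneProjection_image_le [MeasurableSpace E] [BorelSpace E]
    {p : ℝ} (hp : 0 ≤ p) (v : E) (t : ℝ) (X : Set E) :
    μH[p] (hyperplaneProjection v t '' X) ≤ μH[p] X := by
  simpa only [ENNReal.coe_one, ENNReal.one_rpow, one_mul] using
    (lipschitzWith_hyperplaneProjection v t).hausdorffMeasure_image_le hp X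

theorem radial_projection_measure_general [MeasurableSpace E] [BorelSpace E]
    {p : ℝ} (hp : 0 ≤ p) {v : E} {X : Set E} (hX : SphericallyStarConvex v X)
    {t : ℝ} (ht : 0 < t) (hvt : ∀ u ∈ X, t ≤ ⟪u, v⟫) :
    μH[p] (radialProjection v t '' X) ≤ μH[p] X :=
  (measure_mono (hX.radialProjection_image_subset ht hvt)).trans
    (hausdorffMeasure_hyperplaneProjection_image_le hp v t X)

end InnerProductSpace

/-- Radial projection of a spherically convex set to a hyperplane decreases
`(d-1)`-dimensional Hausdorff measure: if `X = C ∩ S^{d-1}` for a closed convex cone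
`C` containing a half-line, `v ∈ X`, and `⟨u,v⟩ ≥ t` for all `u ∈ X`, then the radial
projection `X'` of `X` to the hyperplane `{y : ⟨y,v⟩ = t}` satisfies
`H^{d-1}(X) ≥ H^{d-1}(X')`. -/
theorem radial_projection_measure (d : ℕ) (hd : 3 ≤ d)
    (t : ℝ) (ht : t ∈ Set.Ioo (0 : ℝ) 1)
    (C : Set (EuclideanSpace ℝ (Fin d)))
    (hCclosed : IsClosed C)
    (hCcone : ∀ x ∈ C, ∀ y ∈ C, ∀ α β : ℝ, 0 ≤ α → 0 ≤ β → α • x + β • y ∈ C)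
    (hChalf : ∃ u : EuclideanSpace ℝ (Fin d), u ≠ 0 ∧ ∀ s : ℝ, 0 ≤ s → s • u ∈ C)
    (X : Set (EuclideanSpace ℝ (Fin d)))
    (hX : X = C ∩ Metric.sphere (0 : EuclideanSpace ℝ (Fin d)) 1)
    (v : EuclideanSpace ℝ (Fin d)) (hv : v ∈ X)
    (hvt : ∀ u ∈ X, t ≤ ⟪u, v⟫) :
    μH[(d : ℝ) - 1] ((fun u => (t / ⟪u, v⟫) • u) '' X) ≤ μH[(d : ℝ) - 1] X := by
  subst hX
  have hp : (0 : ℝ) ≤ d - 1 := sub_nonneg.2 (Nat.one_le_cast.2 (by lia))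
  have hstar : SphericallyStarConvex v (C ∩ Metric.sphere 0 1) :=
    ⟨Set.inter_subset_right, fun u hu a b ha hb hsphere =>
      ⟨hCcone u hu.1 v hv.1 a b ha hb, hsphere⟩⟩
  exact radial_projection_measure_general hp hstar ht.1 hvt
end

section
/- Let d ≥ 3, let v be a unit vector in ℝ^d, let 0 < Θ < π/2, and let X ⊂ S^{d−1} be a compact set such that the spherical distance δ(u, v) ≤ Θ for all u ∈ X. Let X̃ = {u/⟨u,v⟩ : u ∈ X} be the radial projection of X into the hyperplane tangent to S^{d−1} at v. Then the (d−1)-dimensional Hausdorff measures satisfy H^{d−1}(X) ≥ (cos Θ)^d · H^{d−1}(X̃). -/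
open scoped RealInnerProductSpace
open MeasureTheory

/-!
Identify the tangent hyperplane at `v` with `vᗮ`. The inverse of the radial projection is then
`ψ y = (v + y) / ‖v + y‖`, and `μH[d - 1] (ψ '' Y)` is bounded from below by comparing `ψ` near each
point `y₀` with a map `G ∘ ψ` of `vᗮ` into itself, where `G` does not increase Hausdorff measure.
For `u = ψ y₀`, take for `G` the reflection exchanging `u` and `v` followed by the orthogonal
projection onto `vᗮ`; up to an isometry, this is the orthogonal projection onto the tangent
hyperplane at `u`, so to first order it loses nothing. Since `G u = 0`, differentiating the
normalizing factor of `ψ` contributes nothing, and the Jacobian of `G ∘ ψ` at `y₀` is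
`⟪u, v⟫ ^ (d - 1) * |det (G|vᗮ)| = ⟪u, v⟫ ^ d ≥ cos Θ ^ d`.
-/

open Module Set Topology
open scoped NNReal ENNReal

section LocalComparison

variable {α : Type*} [MeasurableSpace α] {μ ν : Measure α}

theorem restrict_le_restrict_of_subset {s t : Set α} (hst : s ⊆ t)
    (h : μ.restrict t ≤ ν.restrict t) : μ.restrict s ≤ ν.restrict s := by
  simpa only [Measure.restrict_restrict_of_subset hst] using Measure.restrict_mono_measure h s

theorem restrict_iUnion_le_restrict_iUnion {ι : Type*} [Countable ι] {t : ι → Set α}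
    (ht : ∀ i, MeasurableSet (t i)) (h : ∀ i, μ.restrict (t i) ≤ ν.restrict (t i)) :
    μ.restrict (⋃ i, t i) ≤ ν.restrict (⋃ i, t i) := by
  rcases isEmpty_or_nonempty ι with _ | _
  · simp
  obtain ⟨e, he⟩ := exists_surjective_nat ι
  have hdisj := disjoint_disjointed fun n => t (e n)
  have hmeas := MeasurableSet.disjointed fun n => ht (e n)
  rw [← he.iUnion_comp, ← iUnion_disjointed (f := fun n => t (e n)),
    Measure.restrict_iUnion hdisj hmeas, Measure.restrict_iUnion hdisj hmeas]
  refine Measure.le_iff.2 fun s hs => ?_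
  rw [Measure.sum_apply _ hs, Measure.sum_apply _ hs]
  exact ENNReal.tsum_le_tsum fun n =>
    restrict_le_restrict_of_subset (disjointed_subset _ n) (h (e n)) s

theorem measure_le_of_locally_restrict_le [TopologicalSpace α] [SecondCountableTopology α]
    [OpensMeasurableSpace α] {s : Set α}
    (h : ∀ x ∈ s, ∃ t ∈ 𝓝 x, μ.restrict t ≤ ν.restrict t) : μ s ≤ ν s := by
  choose! t ht hle using h
  obtain ⟨c, hcs, hc, hsc⟩ := TopologicalSpace.countable_cover_nhdsWithin (f := interior ∘ t)
    fun x hx => mem_nhdsWithin_of_mem_nhds (interior_mem_nhds.2 (ht x hx))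
  have := hc.to_subtype
  rw [biUnion_eq_iUnion] at hsc
  have hunion := restrict_iUnion_le_restrict_iUnion (μ := μ) (ν := ν)
    (t := fun x : c => interior (t x)) (fun _ => isOpen_interior.measurableSet)
    fun x => restrict_le_restrict_of_subset interior_subset (hle x (hcs x.2))
  calc μ s = μ.restrict _ s := (Measure.restrict_eq_self μ hsc).symm
    _ ≤ ν.restrict _ s := hunion s
    _ = ν s := Measure.restrict_eq_self ν hsc

end LocalComparison

section HausdorffMeasure

variable {E F : Type*} [NormedAddCommGroup E] [NormedSpace ℝ E] [FiniteDimensional ℝ E]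
  [MeasurableSpace E] [BorelSpace E] [EMetricSpace F] [MeasurableSpace F] [BorelSpace F]
  {f : E → F}

theorem exists_nhds_mul_hausdorffMeasure_le_image {g : F → E} (hg : LipschitzWith 1 g)
    {A : E →L[ℝ] E} {x : E} (hf : HasStrictFDerivAt (g ∘ f) A x) {m : ℝ≥0}
    (hm : (m : ℝ≥0∞) < ENNReal.ofReal |A.det|) :
    ∃ t ∈ 𝓝 x, ∀ s ⊆ t, (m : ℝ≥0∞) * μH[finrank ℝ E] s ≤ μH[finrank ℝ E] (f '' s) := by
  obtain ⟨δ, hδ, hδ0⟩ := ((mul_le_addHaar_image_of_lt_det (μ := μH[finrank ℝ E]) A hm).and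
    self_mem_nhdsWithin).exists
  obtain ⟨t, ht, happrox⟩ := hf.approximates_deriv_on_nhds (Or.inr hδ0)
  refine ⟨t, ht, fun s hs => ?_⟩
  calc (m : ℝ≥0∞) * μH[finrank ℝ E] s
      ≤ μH[finrank ℝ E] (g ∘ f '' s) := hδ s _ (happrox.mono_set hs)
    _ = μH[finrank ℝ E] (g '' (f '' s)) := by rw [image_comp]
    _ ≤ μH[finrank ℝ E] (f '' s) := by
      simpa using hg.hausdorffMeasure_image_le (Nat.cast_nonneg (finrank ℝ E)) (f '' s)

theorem mul_hausdorffMeasure_le_image_of_le_abs_det (hfc : Continuous f)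
    (hfi : Function.Injective f) {m : ℝ≥0∞} {s : Set E}
    (h : ∀ x ∈ s, ∃ (g : F → E) (A : E →L[ℝ] E), LipschitzWith 1 g ∧
      HasStrictFDerivAt (g ∘ f) A x ∧ m ≤ ENNReal.ofReal |A.det|) :
    m * μH[finrank ℝ E] s ≤ μH[finrank ℝ E] (f '' s) := by
  -- By injectivity `s ↦ μH (f '' s)` is a measure, so the comparison may be checked locally.
  have hfm : MeasurableEmbedding f := hfc.measurableEmbedding hfi
  refine ENNReal.mul_le_of_forall_lt fun a ha b hb => (mul_le_mul_right hb.le a).trans ?_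
  lift a to ℝ≥0 using ha.ne_top
  rw [← hfm.comap_apply, ← smul_eq_mul, ← Measure.smul_apply]
  refine measure_le_of_locally_restrict_le fun x hx => ?_
  obtain ⟨g, A, hg, hA, hmA⟩ := h x hx
  obtain ⟨t, ht, hle⟩ := exists_nhds_mul_hausdorffMeasure_le_image hg hA (ha.trans_le hmA)
  refine ⟨t, ht, Measure.le_iff.2 fun s hs => ?_⟩
  rw [Measure.restrict_apply hs, Measure.restrict_apply hs, hfm.comap_apply]
  exact hle _ inter_subset_right

end HausdorffMeasure

section RadialProjection

variable {V : Type*} [NormedAddCommGroup V] [InnerProductSpace ℝ V] {u v : V}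

/-- Reflection exchanging the unit vectors `u` and `v`, followed by orthogonal projection onto `vᗮ`.
It is an isometric copy, with values in a space independent of `u`, of the orthogonal projection
onto the tangent space of the unit sphere at `u`. -/
noncomputable def reflectionProj (u v : V) : V →L[ℝ] (ℝ ∙ v)ᗮ :=
  (ℝ ∙ v)ᗮ.orthogonalProjectionOnto ∘L ((ℝ ∙ (u - v))ᗮ.reflection : V →L[ℝ] V)

theorem lipschitzWith_reflectionProj (u v : V) : LipschitzWith 1 (reflectionProj u v) := by
  simpa using! (Submodule.lipschitzWith_orthogonalProjectionOnto (ℝ ∙ v)ᗮ).comp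
    (ℝ ∙ (u - v))ᗮ.reflection.lipschitz

theorem reflectionProj_self_left (h : ‖u‖ = ‖v‖) : reflectionProj u v u = 0 := by
  simp [reflectionProj, Submodule.reflection_sub h,
    Submodule.orthogonalProjectionOnto_orthogonalComplement_singleton_eq_zero]

-- For `u = v` the coefficient `-2 / 0 = 0` is harmless, both sides being the identity.
theorem reflectionProj_comp_subtypeL_eq_transvection (u v : V) :
    (reflectionProj u v ∘L (ℝ ∙ v)ᗮ.subtypeL : (ℝ ∙ v)ᗮ →ₗ[ℝ] (ℝ ∙ v)ᗮ) =
      LinearMap.transvection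
        ((-2 / ‖u - v‖ ^ 2) • innerₗ (ℝ ∙ v)ᗮ ((ℝ ∙ v)ᗮ.orthogonalProjectionOnto u))
        ((ℝ ∙ v)ᗮ.orthogonalProjectionOnto u) := by
  ext1 y
  have hPw : (ℝ ∙ v)ᗮ.orthogonalProjectionOnto (u - v) =
      (ℝ ∙ v)ᗮ.orthogonalProjectionOnto u := by
    simp [Submodule.orthogonalProjectionOnto_orthogonalComplement_singleton_eq_zero]
  have hwy : ⟪u - v, (y : V)⟫ = ⟪(ℝ ∙ v)ᗮ.orthogonalProjectionOnto u, y⟫ := by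
    rw [← hPw, Submodule.inner_orthogonalProjectionOnto_eq_of_mem_right]
  have hreflection : (ℝ ∙ (u - v))ᗮ.reflection (y : V) =
      y + (-2 / ‖u - v‖ ^ 2 * ⟪u - v, (y : V)⟫) • (u - v) := by
    rw [Submodule.reflection_orthogonal_apply, Submodule.reflection_singleton_apply]
    simp only [RCLike.ofReal_real_eq_id, id]
    module
  simp [reflectionProj, hreflection, hwy, hPw, LinearMap.transvection.apply]

theorem norm_sq_orthogonalProjectionOnto_orthogonal_singleton (u : V) (hv : ‖v‖ = 1) :
    ‖(ℝ ∙ v)ᗮ.orthogonalProjectionOnto u‖ ^ 2 = ‖u‖ ^ 2 - ⟪u, v⟫ ^ 2 := by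
  have hpythagoras := Submodule.norm_sq_eq_add_norm_sq_projection u (ℝ ∙ v)
  have hproj : ‖(ℝ ∙ v).orthogonalProjectionOnto u‖ = |⟪u, v⟫| := by
    rw [← Submodule.norm_coe, Submodule.coe_orthogonalProjectionOnto_apply,
      Submodule.starProjection_unit_singleton ℝ hv, norm_smul, hv, mul_one, Real.norm_eq_abs,
      real_inner_comm]
  rw [hpythagoras, hproj, sq_abs, add_sub_cancel_left]

theorem abs_det_reflectionProj_comp_subtypeL [FiniteDimensional ℝ V] (hu : ‖u‖ = 1)
    (hv : ‖v‖ = 1) : |(reflectionProj u v ∘L (ℝ ∙ v)ᗮ.subtypeL).det| = |⟪u, v⟫| := by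
  rw [ContinuousLinearMap.det, reflectionProj_comp_subtypeL_eq_transvection,
    LinearMap.transvection.det, LinearMap.smul_apply, innerₗ_apply_apply,
    real_inner_self_eq_norm_sq, norm_sq_orthogonalProjectionOnto_orthogonal_singleton u hv, hu,
    norm_sub_sq_real, hu, hv, smul_eq_mul]
  rcases eq_or_ne ⟪u, v⟫ 1 with huv | huv
  · simp [huv]
  · have hdet : 1 + -2 / (1 ^ 2 - 2 * ⟪u, v⟫ + 1 ^ 2) * (1 ^ 2 - ⟪u, v⟫ ^ 2) = -⟪u, v⟫ := by
      have hne : 1 - ⟪u, v⟫ ≠ 0 := sub_ne_zero.2 huv.symm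
      rw [show 1 ^ 2 - 2 * ⟪u, v⟫ + 1 ^ 2 = 2 * (1 - ⟪u, v⟫) by ring]
      field_simp
      ring
    rw [hdet, abs_neg]

/-- The inverse of the radial projection (gnomonic projection) of the hemisphere centred at `v`
into the tangent hyperplane at `v`, the latter being identified with `vᗮ` through `y ↦ v + y`. -/
noncomputable def invRadialProj (v : V) (y : (ℝ ∙ v)ᗮ) : V := NormedSpace.normalize (v + (y : V))

theorem inner_add_orthogonal_self (v : V) (y : (ℝ ∙ v)ᗮ) : ⟪v + (y : V), v⟫ = ‖v‖ ^ 2 := by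
  rw [inner_add_left, Submodule.mem_orthogonal_singleton_iff_inner_left.1 y.2, add_zero,
    real_inner_self_eq_norm_sq]

theorem add_orthogonal_ne_zero (hv : v ≠ 0) (y : (ℝ ∙ v)ᗮ) : v + (y : V) ≠ 0 := by
  intro h
  have hinner := inner_add_orthogonal_self v y
  rw [h, inner_zero_left] at hinner
  exact pow_ne_zero 2 (norm_ne_zero_iff.2 hv) hinner.symm

theorem norm_invRadialProj (hv : v ≠ 0) (y : (ℝ ∙ v)ᗮ) : ‖invRadialProj v y‖ = 1 :=
  NormedSpace.norm_normalize (add_orthogonal_ne_zero hv y)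

theorem inner_invRadialProj (hv : ‖v‖ = 1) (y : (ℝ ∙ v)ᗮ) :
    ⟪invRadialProj v y, v⟫ = ‖v + (y : V)‖⁻¹ := by
  rw [invRadialProj, NormedSpace.normalize, real_inner_smul_left,
    inner_add_orthogonal_self, hv, one_pow, mul_one]

theorem inv_inner_smul_invRadialProj (hv : ‖v‖ = 1) (y : (ℝ ∙ v)ᗮ) :
    ⟪invRadialProj v y, v⟫⁻¹ • invRadialProj v y = v + (y : V) := by
  rw [inner_invRadialProj hv, inv_inv, invRadialProj, NormedSpace.norm_smul_normalize]

theorem invRadialProj_injective (hv : ‖v‖ = 1) : Function.Injective (invRadialProj v) := by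
  intro y z hyz
  have h := inv_inner_smul_invRadialProj hv y
  rw [hyz, inv_inner_smul_invRadialProj hv z] at h
  exact Subtype.ext (add_left_cancel h).symm

theorem mem_range_invRadialProj (hu : ‖u‖ = 1) (hv : ‖v‖ = 1) (huv : 0 < ⟪u, v⟫) :
    u ∈ range (invRadialProj v) := by
  refine ⟨⟨⟪u, v⟫⁻¹ • u - v, ?_⟩, ?_⟩
  · rw [Submodule.mem_orthogonal_singleton_iff_inner_left, inner_sub_left, real_inner_smul_left,
      inv_mul_cancel₀ huv.ne', real_inner_self_eq_norm_sq, hv, one_pow, sub_self]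
  · rw [invRadialProj, add_sub_cancel, NormedSpace.normalize_smul_of_pos (inv_pos.2 huv),
      NormedSpace.normalize_eq_self_of_norm_eq_one hu]

theorem contDiff_inv_norm_add_orthogonal (hv : v ≠ 0) :
    ContDiff ℝ 1 fun y : (ℝ ∙ v)ᗮ => ‖v + (y : V)‖⁻¹ := by
  have hadd : ContDiff ℝ 1 fun y : (ℝ ∙ v)ᗮ => v + (y : V) :=
    contDiff_const.add (ℝ ∙ v)ᗮ.subtypeL.contDiff
  exact (hadd.norm ℝ (add_orthogonal_ne_zero hv)).inv
    fun y => norm_ne_zero_iff.2 (add_orthogonal_ne_zero hv y)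

theorem continuous_invRadialProj (hv : v ≠ 0) : Continuous (invRadialProj v) :=
  (contDiff_inv_norm_add_orthogonal hv).continuous.smul (by fun_prop)

theorem hasStrictFDerivAt_reflectionProj_comp_invRadialProj (hv : ‖v‖ = 1) (y₀ : (ℝ ∙ v)ᗮ) :
    HasStrictFDerivAt (reflectionProj (invRadialProj v y₀) v ∘ invRadialProj v)
      (⟪invRadialProj v y₀, v⟫ •
        (reflectionProj (invRadialProj v y₀) v ∘L (ℝ ∙ v)ᗮ.subtypeL)) y₀ := by
  have hv0 : v ≠ 0 := ne_zero_of_norm_ne_zero (by simp [hv])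
  set G := reflectionProj (invRadialProj v y₀) v
  set L := G ∘L (ℝ ∙ v)ᗮ.subtypeL
  have hG₀ : G (v + (y₀ : V)) = 0 := by
    rw [← inv_inner_smul_invRadialProj hv, map_smul,
      reflectionProj_self_left ((norm_invRadialProj hv0 y₀).trans hv.symm), smul_zero]
  have hG : G ∘ invRadialProj v = fun y : (ℝ ∙ v)ᗮ => ‖v + (y : V)‖⁻¹ • L (y - y₀) := by
    ext1 y
    have hsplit : v + (y : V) = v + y₀ + ((y - y₀ : (ℝ ∙ v)ᗮ) : V) := by push_cast; abel
    rw [Function.comp_apply, invRadialProj, NormedSpace.normalize, map_smul]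
    congr 1
    rw [hsplit, map_add, hG₀, zero_add]
    rfl
  have hscale : HasStrictFDerivAt (fun y : (ℝ ∙ v)ᗮ => ‖v + (y : V)‖⁻¹) _ y₀ :=
    (contDiff_inv_norm_add_orthogonal hv0).contDiffAt.hasStrictFDerivAt one_ne_zero
  have hL : HasStrictFDerivAt (fun y => L (y - y₀)) L y₀ := by
    simpa using L.hasStrictFDerivAt.comp y₀ ((hasStrictFDerivAt_id y₀).sub_const y₀)
  rw [hG, inner_invRadialProj hv]
  simpa using! hscale.smul hL

theorem finrank_orthogonal_span_singleton_add_one [FiniteDimensional ℝ V] (hv : v ≠ 0) :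
    finrank ℝ (ℝ ∙ v)ᗮ + 1 = finrank ℝ V := by
  rw [← (ℝ ∙ v).finrank_add_finrank_orthogonal, finrank_span_singleton hv, add_comm]

theorem abs_det_inner_smul_reflectionProj [FiniteDimensional ℝ V] (hu : ‖u‖ = 1) (hv : ‖v‖ = 1) :
    |(⟪u, v⟫ • (reflectionProj u v ∘L (ℝ ∙ v)ᗮ.subtypeL)).det| = |⟪u, v⟫| ^ finrank ℝ V := by
  have hv0 : v ≠ 0 := ne_zero_of_norm_ne_zero (by simp [hv])
  have hdet := abs_det_reflectionProj_comp_subtypeL hu hv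
  rw [ContinuousLinearMap.det] at hdet ⊢
  rw [ContinuousLinearMap.toLinearMap_smul, LinearMap.det_smul, abs_mul, abs_pow, hdet, ← pow_succ,
    finrank_orthogonal_span_singleton_add_one hv0]

variable [FiniteDimensional ℝ V] [MeasurableSpace V] [BorelSpace V]

theorem ofReal_pow_mul_hausdorffMeasure_le_image_invRadialProj (hv : ‖v‖ = 1) {c : ℝ} (hc : 0 ≤ c)
    {Y : Set (ℝ ∙ v)ᗮ} (hY : ∀ y ∈ Y, c ≤ ⟪invRadialProj v y, v⟫) :
    ENNReal.ofReal (c ^ finrank ℝ V) * μH[finrank ℝ (ℝ ∙ v)ᗮ] Y ≤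
      μH[finrank ℝ (ℝ ∙ v)ᗮ] (invRadialProj v '' Y) := by
  have hv0 : v ≠ 0 := ne_zero_of_norm_ne_zero (by simp [hv])
  refine mul_hausdorffMeasure_le_image_of_le_abs_det (continuous_invRadialProj hv0)
    (invRadialProj_injective hv) fun y hy => ⟨_, _, lipschitzWith_reflectionProj _ v,
      hasStrictFDerivAt_reflectionProj_comp_invRadialProj hv y, ENNReal.ofReal_le_ofReal ?_⟩
  rw [abs_det_inner_smul_reflectionProj (norm_invRadialProj hv0 y) hv]
  exact pow_le_pow_left₀ hc ((hY y hy).trans (le_abs_self _)) _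

theorem radial_projection_tangent_general (hv : ‖v‖ = 1) {c : ℝ} (hc : 0 < c) {X : Set V}
    (hXunit : ∀ u ∈ X, ‖u‖ = 1) (hXinner : ∀ u ∈ X, c ≤ ⟪u, v⟫) :
    ENNReal.ofReal (c ^ finrank ℝ V) *
        μH[(finrank ℝ V : ℝ) - 1] ((fun u => ⟪u, v⟫⁻¹ • u) '' X) ≤
      μH[(finrank ℝ V : ℝ) - 1] X := by
  have hv0 : v ≠ 0 := ne_zero_of_norm_ne_zero (by simp [hv])
  have hdim : (finrank ℝ V : ℝ) - 1 = finrank ℝ (ℝ ∙ v)ᗮ := by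
    rw [← finrank_orthogonal_span_singleton_add_one hv0, Nat.cast_succ, add_sub_cancel_right]
  obtain ⟨Y, rfl⟩ : ∃ Y, invRadialProj v '' Y = X := subset_range_iff_exists_image_eq.1 fun u hu =>
    mem_range_invRadialProj (hXunit u hu) hv (hc.trans_le (hXinner u hu))
  have htangent : Isometry fun y : (ℝ ∙ v)ᗮ => v + (y : V) :=
    (isometry_add_left v).comp isometry_subtype_coe
  simp_rw [image_image, inv_inner_smul_invRadialProj hv, hdim]
  rw [htangent.hausdorffMeasure_image (Or.inl (Nat.cast_nonneg _))]
  exact ofReal_pow_mul_hausdorffMeasure_le_image_invRadialProj hv hc.le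
    fun y hy => hXinner _ (mem_image_of_mem _ hy)

end RadialProjection

theorem cos_le_of_arccos_le {x θ : ℝ} (h : Real.arccos x ≤ θ) (hθ : θ < Real.pi) :
    Real.cos θ ≤ x := by
  rcases le_total 1 x with hx | hx
  · exact (Real.cos_le_one θ).trans hx
  · rw [← Real.cos_arccos (Real.arccos_lt_pi.1 (h.trans_lt hθ)).le hx]
    exact Real.cos_le_cos_of_nonneg_of_le_pi (Real.arccos_nonneg x) hθ.le h

/-- Radial projection to the tangent hyperplane at `v`: if `X` is a compact subset of
`S^{d-1}` within spherical distance `Θ < π/2` of `v`, then its radial projection `X̃`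
to the tangent hyperplane at `v` satisfies `H^{d-1}(X) ≥ (cos Θ)^d · H^{d-1}(X̃)`. -/
theorem radial_projection_tangent (d : ℕ) (hd : 3 ≤ d)
    (v : EuclideanSpace ℝ (Fin d)) (hv : ‖v‖ = 1)
    (Θ : ℝ) (hΘ0 : 0 < Θ) (hΘ1 : Θ < Real.pi / 2)
    (X : Set (EuclideanSpace ℝ (Fin d)))
    (hXcompact : IsCompact X)
    (hXunit : ∀ u ∈ X, ‖u‖ = 1)
    (hXdist : ∀ u ∈ X, Real.arccos ⟪u, v⟫ ≤ Θ) :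
    ENNReal.ofReal (Real.cos Θ ^ d) *
        μH[(d : ℝ) - 1] ((fun u => (⟪u, v⟫)⁻¹ • u) '' X)
      ≤ μH[(d : ℝ) - 1] X := by
  have hcos : 0 < Real.cos Θ := Real.cos_pos_of_mem_Ioo ⟨by linarith, hΘ1⟩
  simpa using radial_projection_tangent_general hv hcos hXunit
    fun u hu => cos_le_of_arccos_le (hXdist u hu) (by linarith)
end

section
/- Let d ≥ 3 and let u_0, …, u_d be unit vectors in ℝ^d such that the spherical distance δ(u_i, u_j) ≥ arccos(−1/d) − 2ε for all 0 ≤ i < j ≤ d, where 0 < ε < 1/(9·d^(3.5)). Then for all 0 ≤ i < j ≤ d one has −1/d − (3/2)·d·(d+1)·ε ≤ ⟨u_i, u_j⟩ ≤ −1/d + 2ε. -/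
open scoped RealInnerProductSpace

/-! Since `cos` is 1-Lipschitz, the separation gives `⟪u i, u j⟫ ≤ c` for `i ≠ j`, where
`c = -1 / d + 2 * ε`. The off-diagonal inner products sum to `‖∑ i, u i‖ ^ 2 - (d + 1)`, hence to at
least `-(d + 1)`, so the nonnegative defects `c - ⟪u i, u j⟫` over ordered pairs sum to at most
`2 * d * (d + 1) * ε`. Each unordered pair is counted twice, so a single defect is at most
`d * (d + 1) * ε`; as `c` exceeds `-1 / d` by `2 * ε`, the net loss below `-1 / d` is at most
`(d * (d + 1) - 2) * ε = (d - 1) * (d + 2) * ε`. -/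

lemma le_add_of_arccos_sub_le_arccos {x y t : ℝ} (hx : x ≤ 1) (hy : -1 ≤ y) (ht : 0 ≤ t)
    (h : Real.arccos y - t ≤ Real.arccos x) : x ≤ y + t := by
  rcases le_total x y with hxy | hyx
  · linarith
  have hangle : |Real.arccos x - Real.arccos y| ≤ t := by
    rw [abs_le]
    constructor <;> linarith [Real.arccos_le_arccos hyx]
  have hcos := Real.abs_cos_sub_cos_le (Real.arccos x) (Real.arccos y)
  rw [Real.cos_arccos (hy.trans hyx) hx, Real.cos_arccos hy (hyx.trans hx)] at hcos
  linarith [le_abs_self (x - y)]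

section InnerProductSpace

variable {ι E : Type*} [NormedAddCommGroup E] [InnerProductSpace ℝ E]

lemma norm_sum_sq_eq_sum_norm_sq_add_sum_offDiag_inner (s : Finset ι) (u : ι → E) :
    ‖∑ i ∈ s, u i‖ ^ 2 = ∑ i ∈ s, ‖u i‖ ^ 2 + ∑ p ∈ s.offDiag, ⟪u p.1, u p.2⟫ := by
  classical
  rw [← real_inner_self_eq_norm_sq, sum_inner]
  simp_rw [inner_sum, ← real_inner_self_eq_norm_sq]
  rw [← Finset.sum_product' s s fun i j ↦ ⟪u i, u j⟫, ← s.diag_union_offDiag,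
    Finset.sum_union s.disjoint_diag_offDiag, Finset.sum_diag]

lemma sum_offDiag_sub_inner_le (s : Finset ι) (u : ι → E) (c : ℝ) :
    ∑ p ∈ s.offDiag, (c - ⟪u p.1, u p.2⟫) ≤
      ∑ i ∈ s, ‖u i‖ ^ 2 + s.card * (s.card - 1) * c := by
  have hcard : (s.offDiag.card : ℝ) = s.card * (s.card - 1) := by
    rw [s.offDiag_card, Nat.cast_sub (Nat.le_mul_self _)]
    push_cast
    ring
  have hnonneg : 0 ≤ ∑ i ∈ s, ‖u i‖ ^ 2 + ∑ p ∈ s.offDiag, ⟪u p.1, u p.2⟫ := by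
    rw [← norm_sum_sq_eq_sum_norm_sq_add_sum_offDiag_inner]
    positivity
  rw [Finset.sum_sub_distrib, Finset.sum_const, nsmul_eq_mul, hcard]
  linarith

lemma two_mul_sub_inner_le_of_pairwise_inner_le {s : Finset ι} {u : ι → E} {c : ℝ}
    (hc : (s : Set ι).Pairwise fun i j ↦ ⟪u i, u j⟫ ≤ c) {i j : ι} (hi : i ∈ s) (hj : j ∈ s)
    (hij : i ≠ j) :
    2 * (c - ⟪u i, u j⟫) ≤ ∑ k ∈ s, ‖u k‖ ^ 2 + s.card * (s.card - 1) * c := by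
  have hdefect : ∀ p ∈ s.offDiag, 0 ≤ c - ⟪u p.1, u p.2⟫ := fun p hp ↦ by
    obtain ⟨h₁, h₂, hne⟩ := Finset.mem_offDiag.mp hp
    exact sub_nonneg.mpr (hc h₁ h₂ hne)
  have hij_mem : (i, j) ∈ s.offDiag := Finset.mem_offDiag.mpr ⟨hi, hj, hij⟩
  have hji_mem : (j, i) ∈ s.offDiag := Finset.mem_offDiag.mpr ⟨hj, hi, hij.symm⟩
  calc 2 * (c - ⟪u i, u j⟫)
      = (c - ⟪u i, u j⟫) + (c - ⟪u j, u i⟫) := by rw [real_inner_comm (u i) (u j), two_mul]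
    _ ≤ ∑ p ∈ s.offDiag, (c - ⟪u p.1, u p.2⟫) :=
      Finset.add_le_sum hdefect hij_mem hji_mem fun h ↦ hij (congrArg Prod.fst h)
    _ ≤ ∑ k ∈ s, ‖u k‖ ^ 2 + s.card * (s.card - 1) * c := sum_offDiag_sub_inner_le s u c

theorem simplex_inner_bounds_general [Fintype ι] {d : ℕ} (hd : Fintype.card ι = d + 1) {ε : ℝ}
    (hε : 0 ≤ ε) {u : ι → E} (hu : ∀ i, ‖u i‖ = 1)
    (hdist : ∀ i j, i ≠ j →
      Real.arccos (-1 / (d : ℝ)) - 2 * ε ≤ Real.arccos ⟪u i, u j⟫) {i j : ι} (hij : i ≠ j) :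
    -1 / (d : ℝ) - (d - 1) * (d + 2) * ε ≤ ⟪u i, u j⟫ ∧ ⟪u i, u j⟫ ≤ -1 / (d : ℝ) + 2 * ε := by
  have hd_pos : 0 < d := by
    have := Fintype.one_lt_card_iff.mpr ⟨i, j, hij⟩
    lia
  have hneg_one_le : -1 ≤ -1 / (d : ℝ) := by
    rw [neg_div, neg_le_neg_iff]
    exact div_le_self zero_le_one (Nat.one_le_cast.mpr hd_pos)
  have hupper (a b : ι) (hab : a ≠ b) : ⟪u a, u b⟫ ≤ -1 / (d : ℝ) + 2 * ε := by
    have hle_one : ⟪u a, u b⟫ ≤ 1 := by simpa [hu] using real_inner_le_norm (u a) (u b)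
    exact le_add_of_arccos_sub_le_arccos hle_one hneg_one_le (by positivity) (hdist a b hab)
  refine ⟨?_, hupper i j hij⟩
  have hdefect := two_mul_sub_inner_le_of_pairwise_inner_le (s := Finset.univ)
    (fun a _ b _ ↦ hupper a b) (Finset.mem_univ i) (Finset.mem_univ j) hij
  have htotal : (d + 1 : ℝ) + (d + 1) * d * (-1 / d + 2 * ε) = 2 * d * (d + 1) * ε := by
    field_simp
    ring
  simp only [hu, one_pow, Finset.sum_const, Finset.card_univ, hd, nsmul_eq_mul, mul_one,
    Nat.cast_add, Nat.cast_one, add_sub_cancel_right, htotal] at hdefect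
  linarith

end InnerProductSpace

/-- For `d+1` unit vectors in `ℝ^d` with pairwise spherical distances at least
`arccos(-1/d) - 2ε` where `0 < ε < 1/(9 d^{3.5})`, all pairwise inner products lie in
`[-1/d - (3/2)d(d+1)ε, -1/d + 2ε]`. -/
theorem simplex_inner_bounds (d : ℕ) (hd : 3 ≤ d) (ε : ℝ)
    (hε0 : 0 < ε) (hε1 : ε < 1 / (9 * (d : ℝ) ^ (3.5 : ℝ)))
    (u : Fin (d + 1) → EuclideanSpace ℝ (Fin d))
    (hu : ∀ i, ‖u i‖ = 1)
    (hdist : ∀ i j : Fin (d + 1), i ≠ j →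
      Real.arccos (-1 / (d : ℝ)) - 2 * ε ≤ Real.arccos ⟪u i, u j⟫) :
    ∀ i j : Fin (d + 1), i ≠ j →
      -1 / (d : ℝ) - (3 / 2) * d * (d + 1) * ε ≤ ⟪u i, u j⟫ ∧
      ⟪u i, u j⟫ ≤ -1 / (d : ℝ) + 2 * ε := by
  intro i j hij
  obtain ⟨hlower, hupper⟩ := simplex_inner_bounds_general (Fintype.card_fin _) hε0.le hu hdist hij
  have hslack : 0 ≤ (d : ℝ) * (d + 1) * ε := by positivity
  exact ⟨by linarith [hslack], hupper⟩
end

section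
/- Let d ≥ 2, let 0 < ε < 1/(64·d⁴), set s = sin(2ε), and let X ⊂ S^{d−1} be a finite set with |X| ≥ 2d such that the spherical distance δ(x,y) ≥ π/2 − 2ε for all distinct x, y ∈ X. Then for all distinct x, y ∈ X, either −1 ≤ ⟨x,y⟩ ≤ −1 + 1/(4d²) or −8d(d−1)·s ≤ ⟨x,y⟩ ≤ s; moreover, for every x ∈ X there exists exactly one y ∈ X with ⟨x,y⟩ ≤ −3/4. -/
open scoped RealInnerProductSpace

/-!
A set `X` of at least `2d` unit vectors in dimension `d` with pairwise inner products at most a tiny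
`s` is almost a tight frame. In the double sum for `‖∑ c z • z‖² + ‖∑ |c z| • z‖²` each coefficient
of `⟪x, y⟫` is nonnegative, so the one-sided bound `⟪x, y⟫ ≤ s` alone gives the upper frame bound
`2 + 2 |X| s`. The frame operator has trace `|X|`, so the upper bound forces `|X| = 2d` and a lower
bound `2 - O(d² s)`. Polarizing at two distinct `y, z ∈ X`, the terms `w = y` and `w = z` of
`∑ ⟪w, y⟫ * ⟪w, z⟫ ≈ 2 * ⟪y, z⟫` cancel the right-hand side, and each remaining term is at least
`-s`; hence `⟪x, y⟫ * ⟪x, z⟫` is at most `η = O(d² s)` for all distinct `x, y, z`.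
Since the squares `⟪x, z⟫²`, `z ≠ x`, add up to almost `1`, exactly one of the numbers `⟪x, z⟫` is
close to `-1`, and the product bound then keeps all others above `-(4 / 3) * η`.
-/

open Finset Module

section Real

theorem add_abs_mul_le {t u s : ℝ} (hs : 0 ≤ s) (hu : u ≤ s) : (t + |t|) * u ≤ 2 * s * |t| :=
  calc (t + |t|) * u ≤ (t + |t|) * s :=
        mul_le_mul_of_nonneg_left hu (by linarith [neg_abs_le t])
    _ ≤ (|t| + |t|) * s := by gcongr; exact le_abs_self t
    _ = 2 * s * |t| := by ring

theorem neg_le_mul_of_mem_Icc {a b s : ℝ} (hs : 0 ≤ s) (ha : a ∈ Set.Icc (-1) s)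
    (hb : b ∈ Set.Icc (-1) s) : -s ≤ a * b := by
  obtain ⟨ha₁, has⟩ := ha
  obtain ⟨hb₁, hbs⟩ := hb
  rcases le_total 0 a with _ | _ <;> rcases le_total 0 b with _ | _ <;> nlinarith

theorem sq_le_of_le_of_mul_le {a b η : ℝ} (hab : a ≤ b) (hb : b ≤ 1) (hbη : b ≤ η)
    (hmul : a * b ≤ η) : b ^ 2 ≤ η := by
  rcases le_total 0 b with h | h <;> nlinarith

theorem neg_le_of_mul_le {a b η : ℝ} (hη : 0 ≤ η) (ha : a ≤ -3 / 4) (hmul : a * b ≤ η) :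
    -(4 / 3 * η) ≤ b := by
  by_contra! hb
  nlinarith

theorem mul_sq_mul_le_one_div {c k m d s : ℝ} (hm : c * k = m) (hk : 0 < k) (hm₀ : 0 < m)
    (hd : 0 < d) (hs : s ≤ 1 / (m * d ^ 4)) : c * d ^ 2 * s ≤ 1 / (k * d ^ 2) := by
  subst hm
  rw [le_div_iff₀ (by positivity)] at hs ⊢
  linarith

theorem one_div_mul_sq_le {c d : ℝ} (hc : 0 < c) (hd : 2 ≤ d) :
    1 / (c * d ^ 2) ≤ 1 / (c * 4) := by
  gcongr
  nlinarith

theorem eight_mul_sq_mul_le {d s : ℝ} (hd : 2 ≤ d) (hs : s ≤ 1 / (32 * d ^ 4)) :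
    8 * d ^ 2 * s ≤ 1 / 16 :=
  calc 8 * d ^ 2 * s ≤ 1 / (4 * d ^ 2) :=
        mul_sq_mul_le_one_div (by norm_num) (by norm_num) (by norm_num) (by linarith) hs
    _ ≤ 1 / (4 * 4) := one_div_mul_sq_le (by norm_num) hd
    _ = 1 / 16 := by norm_num

theorem one_div_mul_pow_four_le_one {d : ℝ} (hd : 1 ≤ d) : 1 / (32 * d ^ 4) ≤ 1 := by
  have hpow : 1 ≤ d ^ 4 := one_le_pow₀ hd
  rw [div_le_one (by positivity)]
  linarith

theorem two_mul_sub_two_mul_le {d η : ℝ} (hd : 0 < d) (hη₀ : 0 ≤ η)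
    (hη : η ≤ 1 / (8 * d ^ 2)) : (2 * d - 2) * η ≤ 1 / 8 :=
  calc (2 * d - 2) * η ≤ d ^ 2 * η := by gcongr; nlinarith [sq_nonneg (d - 1)]
    _ ≤ d ^ 2 * (1 / (8 * d ^ 2)) := by gcongr
    _ = 1 / 8 := by field_simp

theorem add_mul_sq_le_one_div {d θ η : ℝ} (hd : 0 < d) (hη₀ : 0 ≤ η)
    (hη : η ≤ 1 / (8 * d ^ 2)) (hθ : θ ≤ 1 / (8 * d ^ 2)) :
    θ + (2 * d - 2) * (4 / 3 * η) ^ 2 ≤ 1 / (4 * d ^ 2) :=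
  calc θ + (2 * d - 2) * (4 / 3 * η) ^ 2 = θ + 16 / 9 * ((2 * d - 2) * η) * η := by ring
    _ ≤ 1 / (8 * d ^ 2) + 16 / 9 * (1 / 8) * (1 / (8 * d ^ 2)) := by
      gcongr
      exact two_mul_sub_two_mul_le hd hη₀ hη
    _ ≤ 1 / (8 * d ^ 2) + 1 * (1 / (8 * d ^ 2)) := by gcongr; norm_num
    _ = 1 / (4 * d ^ 2) := by ring

theorem pi_div_two_sub_le_arccos_iff {r t : ℝ} (hr : r ∈ Set.Ico (-(Real.pi / 2)) (Real.pi / 2)) :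
    Real.pi / 2 - r ≤ Real.arccos t ↔ t ≤ Real.sin r := by
  rw [Real.arccos_eq_pi_div_two_sub_arcsin, sub_le_sub_iff_left, Real.arcsin_le_iff_le_sin' hr]

theorem sin_mem_Icc {r c : ℝ} (hr : r ∈ Set.Icc 0 c) (hc : c ≤ Real.pi) :
    Real.sin r ∈ Set.Icc 0 c :=
  ⟨Real.sin_nonneg_of_nonneg_of_le_pi hr.1 (hr.2.trans hc), (Real.sin_le hr.1).trans hr.2⟩

end Real

section DominantTerm

variable {ι : Type*} {Y : Finset ι} {a : ι → ℝ} {y : ι} {η θ : ℝ}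

theorem sum_le_add_card_sub_one_mul {f : ι → ℝ} {t : ℝ} (hy : y ∈ Y)
    (hf : ∀ z ∈ Y, z ≠ y → f z ≤ t) : ∑ z ∈ Y, f z ≤ f y + (#Y - 1) * t := by
  classical
  rw [← add_sum_erase _ _ hy]
  have h := sum_le_card_nsmul (Y.erase y) f t fun z hz ↦
    hf z (mem_of_mem_erase hz) (ne_of_mem_erase hz)
  rw [nsmul_eq_mul, cast_card_erase_of_mem hy] at h
  gcongr

-- `7 / 16 = 1 - (3 / 4) ^ 2`
theorem exists_le_neg_three_quarters (ha : ∀ z ∈ Y, a z ≤ η) (hη : η ≤ 1 / 2)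
    (hmul : ∀ y ∈ Y, ∀ z ∈ Y, y ≠ z → a y * a z ≤ η) (hsum : 1 - θ ≤ ∑ z ∈ Y, a z ^ 2)
    (hθ : θ + (#Y - 1) * η ≤ 7 / 16) : ∃ y ∈ Y, a y ≤ -3 / 4 := by
  have hY : Y.Nonempty := by
    rw [nonempty_iff_ne_empty]
    rintro rfl
    norm_num at hsum hθ
    linarith
  obtain ⟨y, hy, hmin⟩ := exists_min_image Y a hY
  have hle : ∑ z ∈ Y, a z ^ 2 ≤ a y ^ 2 + (#Y - 1) * η :=
    sum_le_add_card_sub_one_mul hy fun z hz hzy ↦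
      sq_le_of_le_of_mul_le (hmin z hz) (by linarith [ha z hz]) (ha z hz) (hmul y hy z hz hzy.symm)
  refine ⟨y, hy, ?_⟩
  by_contra! hay
  have hsq : a y ^ 2 < (3 / 4) ^ 2 := sq_lt_sq' (by linarith) (by linarith [ha y hy])
  linarith

theorem le_neg_one_add_of_le_neg_three_quarters (hη : 0 ≤ η) (hy : y ∈ Y) (hay₁ : -1 ≤ a y)
    (hay : a y ≤ -3 / 4) (ha : ∀ z ∈ Y, a z ≤ η)
    (hmul : ∀ z ∈ Y, y ≠ z → a y * a z ≤ η) (hsum : 1 - θ ≤ ∑ z ∈ Y, a z ^ 2) :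
    a y ≤ -1 + θ + (#Y - 1) * (4 / 3 * η) ^ 2 := by
  have hle : ∑ z ∈ Y, a z ^ 2 ≤ a y ^ 2 + (#Y - 1) * (4 / 3 * η) ^ 2 :=
    sum_le_add_card_sub_one_mul hy fun z hz hzy ↦
      sq_le_sq' (neg_le_of_mul_le hη hay (hmul z hz hzy.symm)) (by linarith [ha z hz])
  have hsq : a y ^ 2 ≤ -a y := by nlinarith
  linarith

theorem exists_le_neg_one_add_and_forall_neg_le (hη₀ : 0 ≤ η)
    (ha : ∀ z ∈ Y, a z ∈ Set.Icc (-1) η) (hη : η ≤ 1 / 2)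
    (hmul : ∀ y ∈ Y, ∀ z ∈ Y, y ≠ z → a y * a z ≤ η) (hsum : 1 - θ ≤ ∑ z ∈ Y, a z ^ 2)
    (hθ : θ + (#Y - 1) * η ≤ 7 / 16) :
    ∃ y ∈ Y, a y ≤ -1 + θ + (#Y - 1) * (4 / 3 * η) ^ 2 ∧
      ∀ z ∈ Y, z ≠ y → -(4 / 3 * η) ≤ a z := by
  have ha_le : ∀ z ∈ Y, a z ≤ η := fun z hz ↦ (ha z hz).2
  obtain ⟨y, hy, hay⟩ := exists_le_neg_three_quarters ha_le hη hmul hsum hθ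
  exact ⟨y, hy,
    le_neg_one_add_of_le_neg_three_quarters hη₀ hy (ha y hy).1 hay ha_le (hmul y hy) hsum,
    fun z hz hzy ↦ neg_le_of_mul_le hη₀ hay (hmul y hy z hz hzy.symm)⟩

end DominantTerm

section Frame

theorem exists_orthonormalBasis_apply_eq {𝕜 E : Type*} [RCLike 𝕜] [NormedAddCommGroup E]
    [InnerProductSpace 𝕜 E] [FiniteDimensional 𝕜 E] {v : E} (hv : ‖v‖ = 1) :
    ∃ (b : OrthonormalBasis (Fin (finrank 𝕜 E)) 𝕜 E) (k : Fin (finrank 𝕜 E)), b k = v := by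
  have : Nontrivial E := ⟨v, 0, by rintro rfl; simp at hv⟩
  let k : Fin (finrank 𝕜 E) := ⟨0, finrank_pos⟩
  have hortho : Orthonormal 𝕜 (({k} : Set (Fin (finrank 𝕜 E))).domRestrict fun _ ↦ v) :=
    ⟨fun _ ↦ hv, fun i j hij ↦ absurd (Subsingleton.elim i j) hij⟩
  obtain ⟨b, hb⟩ := hortho.exists_orthonormalBasis_extension_of_card_eq (by simp)
  exact ⟨b, k, hb k rfl⟩

variable {E : Type*} [NormedAddCommGroup E] [InnerProductSpace ℝ E]

theorem norm_sq_sum_smul {ι : Type*} (I : Finset ι) (c : ι → ℝ) (f : ι → E) :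
    ‖∑ i ∈ I, c i • f i‖ ^ 2 = ∑ i ∈ I, ∑ j ∈ I, c i * c j * ⟪f i, f j⟫ := by
  simp only [← real_inner_self_eq_norm_sq, sum_inner, inner_sum, real_inner_smul_left,
    real_inner_smul_right]
  refine sum_congr rfl fun i _ ↦ sum_congr rfl fun j _ ↦ ?_
  rw [real_inner_comm]
  ring

theorem sum_inner_sq_le_of_norm_sq_sum_smul_le {ι : Type*} {I : Finset ι} {f : ι → E} {K : ℝ}
    (hK : 0 ≤ K) (h : ∀ c : ι → ℝ, ‖∑ i ∈ I, c i • f i‖ ^ 2 ≤ K * ∑ i ∈ I, c i ^ 2) (v : E) :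
    ∑ i ∈ I, ⟪f i, v⟫ ^ 2 ≤ K * ‖v‖ ^ 2 := by
  set q := ∑ i ∈ I, ⟪f i, v⟫ ^ 2
  set w := ∑ i ∈ I, ⟪f i, v⟫ • f i with hw
  have hwv : ⟪w, v⟫ = q := by simp only [hw, sum_inner, real_inner_smul_left, ← sq, q]
  have hq : 0 ≤ q := by positivity
  have hmul : q * q ≤ K * ‖v‖ ^ 2 * q :=
    calc q * q = ⟪w, v⟫ ^ 2 := by rw [hwv, sq]
      _ ≤ (‖w‖ * ‖v‖) ^ 2 := by
        rw [← sq_abs]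
        gcongr
        exact abs_real_inner_le_norm w v
      _ = ‖w‖ ^ 2 * ‖v‖ ^ 2 := mul_pow ..
      _ ≤ K * q * ‖v‖ ^ 2 := by gcongr; exact h _
      _ = K * ‖v‖ ^ 2 * q := by ring
  rcases hq.eq_or_lt with hq | hq
  · rw [← hq]
    positivity
  · exact le_of_mul_le_mul_right hmul hq

theorem sum_sum_inner_sq_orthonormalBasis {ι κ : Type*} [Fintype κ] (I : Finset ι) (f : ι → E)
    (b : OrthonormalBasis κ ℝ E) :
    ∑ k, ∑ i ∈ I, ⟪f i, b k⟫ ^ 2 = ∑ i ∈ I, ‖f i‖ ^ 2 := by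
  rw [sum_comm]
  refine sum_congr rfl fun i _ ↦ ?_
  simpa only [Real.norm_eq_abs, sq_abs] using b.sum_sq_norm_inner_left (f i)

theorem sum_norm_sq_le_finrank_mul [FiniteDimensional ℝ E] {ι : Type*} {I : Finset ι} {f : ι → E}
    {K : ℝ} (h : ∀ v, ∑ i ∈ I, ⟪f i, v⟫ ^ 2 ≤ K * ‖v‖ ^ 2) :
    ∑ i ∈ I, ‖f i‖ ^ 2 ≤ finrank ℝ E * K := by
  rw [← sum_sum_inner_sq_orthonormalBasis I f (stdOrthonormalBasis ℝ E)]
  simpa using sum_le_sum fun k (_ : k ∈ univ) ↦ h (stdOrthonormalBasis ℝ E k)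

theorem sum_norm_sq_sub_mul_norm_sq_le [FiniteDimensional ℝ E] {ι : Type*} {I : Finset ι}
    {f : ι → E} {K : ℝ} (h : ∀ v, ∑ i ∈ I, ⟪f i, v⟫ ^ 2 ≤ K * ‖v‖ ^ 2) (v : E) :
    (∑ i ∈ I, ‖f i‖ ^ 2 - (finrank ℝ E - 1) * K) * ‖v‖ ^ 2 ≤ ∑ i ∈ I, ⟪f i, v⟫ ^ 2 := by
  rcases eq_or_ne v 0 with rfl | hv
  · simp
  obtain ⟨b, k, hbk⟩ := exists_orthonormalBasis_apply_eq (𝕜 := ℝ) (norm_smul_inv_norm (𝕜 := ℝ) hv)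
  have hle : ∑ i ∈ I, ‖f i‖ ^ 2 ≤ ∑ i ∈ I, ⟪f i, b k⟫ ^ 2 + (finrank ℝ E - 1) * K := by
    rw [← sum_sum_inner_sq_orthonormalBasis I f b]
    simpa using sum_le_add_card_sub_one_mul (f := fun k ↦ ∑ i ∈ I, ⟪f i, b k⟫ ^ 2) (t := K)
      (mem_univ k) fun j _ _ ↦ by simpa using h (b j)
  have hvk : v = ‖v‖ • b k := by simp [hbk, hv]
  calc _ ≤ (∑ i ∈ I, ⟪f i, b k⟫ ^ 2) * ‖v‖ ^ 2 := by gcongr; linarith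
    _ = ∑ i ∈ I, ⟪f i, ‖v‖ • b k⟫ ^ 2 := by
      simp only [real_inner_smul_right, mul_pow, sum_mul, mul_comm (‖v‖ ^ 2)]
    _ = ∑ i ∈ I, ⟪f i, v⟫ ^ 2 := by rw [← hvk]

/-- A finite set of vectors that is a tight frame with constant `A` up to an error `θ`, i.e. a frame
with bounds `A - θ` and `A + θ`. -/
def IsNearlyTightFrame (X : Finset E) (A θ : ℝ) : Prop :=
  ∀ v, |∑ z ∈ X, ⟪z, v⟫ ^ 2 - A * ‖v‖ ^ 2| ≤ θ * ‖v‖ ^ 2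

theorem IsNearlyTightFrame.abs_sum_inner_mul_inner_sub_le {X : Finset E} {A θ : ℝ}
    (hX : IsNearlyTightFrame X A θ) (x y : E) :
    |∑ z ∈ X, ⟪z, x⟫ * ⟪z, y⟫ - A * ⟪x, y⟫| ≤ θ * (‖x‖ ^ 2 + ‖y‖ ^ 2) / 2 := by
  have hpolar : 4 * ∑ z ∈ X, ⟪z, x⟫ * ⟪z, y⟫ =
      ∑ z ∈ X, ⟪z, x + y⟫ ^ 2 - ∑ z ∈ X, ⟪z, x - y⟫ ^ 2 := by
    rw [← sum_sub_distrib, mul_sum]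
    refine sum_congr rfl fun z _ ↦ ?_
    rw [inner_add_right, inner_sub_right]
    ring
  have hadd := abs_le.1 (hX (x + y))
  have hsub := abs_le.1 (hX (x - y))
  rw [norm_add_sq_real] at hadd
  rw [norm_sub_sq_real] at hsub
  rw [abs_le]
  constructor <;> linarith

end Frame

/-- A spherical `s`-code: finitely many unit vectors with pairwise inner products at most `s`. -/
structure IsSphericalCode {E : Type*} [NormedAddCommGroup E] [InnerProductSpace ℝ E]
    (X : Finset E) (s : ℝ) : Prop where
  norm_eq_one : ∀ x ∈ X, ‖x‖ = 1
  inner_le : ∀ x ∈ X, ∀ y ∈ X, x ≠ y → ⟪x, y⟫ ≤ s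

theorem isSphericalCode_sin_of_le_arccos {E : Type*} [NormedAddCommGroup E]
    [InnerProductSpace ℝ E] {X : Finset E} {r : ℝ}
    (hr : r ∈ Set.Ico (-(Real.pi / 2)) (Real.pi / 2)) (hnorm : ∀ x ∈ X, ‖x‖ = 1)
    (hdist : ∀ x ∈ X, ∀ y ∈ X, x ≠ y → Real.pi / 2 - r ≤ Real.arccos ⟪x, y⟫) :
    IsSphericalCode X (Real.sin r) :=
  ⟨hnorm, fun x hx y hy hxy ↦ (pi_div_two_sub_le_arccos_iff hr).1 (hdist x hx y hy hxy)⟩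

namespace IsSphericalCode

variable {E : Type*} [NormedAddCommGroup E] [InnerProductSpace ℝ E] {X : Finset E}
  {s θ η : ℝ} {x y z : E}

theorem neg_one_le_inner (hX : IsSphericalCode X s) (hx : x ∈ X) (hy : y ∈ X) : -1 ≤ ⟪x, y⟫ := by
  have h := abs_real_inner_le_norm x y
  rw [hX.norm_eq_one x hx, hX.norm_eq_one y hy, mul_one] at h
  exact (abs_le.1 h).1

theorem inner_mem_Icc (hX : IsSphericalCode X s) (hx : x ∈ X) (hy : y ∈ X) (hxy : x ≠ y) :
    ⟪x, y⟫ ∈ Set.Icc (-1) s :=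
  ⟨hX.neg_one_le_inner hx hy, hX.inner_le x hx y hy hxy⟩

theorem sum_norm_sq (hX : IsSphericalCode X s) : ∑ z ∈ X, ‖z‖ ^ 2 = #X := by
  rw [sum_congr rfl fun z hz ↦ by rw [hX.norm_eq_one z hz]]
  simp

theorem norm_sq_sum_smul_le (hX : IsSphericalCode X s) (hs : 0 ≤ s) (c : E → ℝ) :
    ‖∑ z ∈ X, c z • z‖ ^ 2 ≤ (2 + 2 * #X * s) * ∑ z ∈ X, c z ^ 2 := by
  classical
  have hterm : ∀ x ∈ X, ∀ y ∈ X, (c x * c y + |c x * c y|) * ⟪x, y⟫ ≤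
      (if x = y then 2 * c x ^ 2 else 0) + 2 * s * |c x * c y| := by
    intro x hx y hy
    split_ifs with hxy
    · subst hxy
      rw [real_inner_self_eq_norm_sq, hX.norm_eq_one x hx, abs_mul_self]
      nlinarith [mul_nonneg hs (mul_self_nonneg (c x))]
    · rw [zero_add]
      exact add_abs_mul_le hs (hX.inner_le x hx y hy hxy)
  calc ‖∑ z ∈ X, c z • z‖ ^ 2
    _ ≤ ‖∑ z ∈ X, c z • z‖ ^ 2 + ‖∑ z ∈ X, |c z| • z‖ ^ 2 := by simp
    _ = ∑ x ∈ X, ∑ y ∈ X, (c x * c y + |c x * c y|) * ⟪x, y⟫ := by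
      simp only [norm_sq_sum_smul, ← sum_add_distrib, add_mul, abs_mul]
    _ ≤ ∑ x ∈ X, ∑ y ∈ X, ((if x = y then 2 * c x ^ 2 else 0) + 2 * s * |c x * c y|) :=
      sum_le_sum fun x hx ↦ sum_le_sum fun y hy ↦ hterm x hx y hy
    _ = 2 * ∑ z ∈ X, c z ^ 2 + 2 * s * (∑ z ∈ X, |c z|) ^ 2 := by
      rw [sq (∑ z ∈ X, |c z|), sum_mul_sum]
      simp +contextual [sum_add_distrib, mul_sum, abs_mul]
    _ ≤ 2 * ∑ z ∈ X, c z ^ 2 + 2 * s * (#X * ∑ z ∈ X, c z ^ 2) := by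
      gcongr
      simpa using sq_sum_le_card_mul_sum_sq (s := X) (f := fun z ↦ |c z|)
    _ = (2 + 2 * #X * s) * ∑ z ∈ X, c z ^ 2 := by ring

theorem sum_inner_sq_le (hX : IsSphericalCode X s) (hs : 0 ≤ s) (v : E) :
    ∑ z ∈ X, ⟪z, v⟫ ^ 2 ≤ (2 + 2 * #X * s) * ‖v‖ ^ 2 :=
  sum_inner_sq_le_of_norm_sq_sum_smul_le (by positivity) (hX.norm_sq_sum_smul_le hs) v

theorem card_le_two_mul_finrank [FiniteDimensional ℝ E] (hX : IsSphericalCode X s) (hs : 0 ≤ s)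
    (hsmall : 2 * finrank ℝ E * (2 * finrank ℝ E + 1) * s < 1) : #X ≤ 2 * finrank ℝ E := by
  have htrace : (#X : ℝ) ≤ finrank ℝ E * (2 + 2 * #X * s) := by
    simpa only [hX.sum_norm_sq] using sum_norm_sq_le_finrank_mul (hX.sum_inner_sq_le hs)
  by_contra! hcard
  have hcard' : (2 * finrank ℝ E + 1 : ℝ) ≤ #X := by exact_mod_cast hcard
  have hpos : 0 ≤ 1 - 2 * finrank ℝ E * s := by nlinarith [(finrank ℝ E).cast_nonneg (α := ℝ)]
  linarith [mul_le_mul_of_nonneg_right hcard' hpos]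

theorem isNearlyTightFrame [FiniteDimensional ℝ E] (hX : IsSphericalCode X s) (hs : 0 ≤ s)
    (hd : 2 ≤ finrank ℝ E) (hcard : #X = 2 * finrank ℝ E) :
    IsNearlyTightFrame X 2 (4 * finrank ℝ E * (finrank ℝ E - 1) * s) := by
  intro v
  have hcard' : (#X : ℝ) = 2 * finrank ℝ E := by exact_mod_cast hcard
  have hd' : (2 : ℝ) ≤ finrank ℝ E := by exact_mod_cast hd
  have hupper := hX.sum_inner_sq_le hs
  have hlower := sum_norm_sq_sub_mul_norm_sq_le hupper v
  rw [hX.sum_norm_sq] at hlower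
  rw [hcard'] at hupper hlower
  have herror : 4 * finrank ℝ E * 1 * s ≤ 4 * finrank ℝ E * (finrank ℝ E - 1) * s := by
    gcongr
    linarith
  rw [abs_le]
  constructor
  · linarith
  · linarith [hupper v, mul_le_mul_of_nonneg_right herror (sq_nonneg ‖v‖)]

theorem inner_mul_inner_le (hX : IsSphericalCode X s) (hframe : IsNearlyTightFrame X 2 θ)
    (hs : 0 ≤ s) (hx : x ∈ X) (hy : y ∈ X) (hz : z ∈ X) (hxy : x ≠ y) (hxz : x ≠ z)
    (hyz : y ≠ z) : ⟪x, y⟫ * ⟪x, z⟫ ≤ θ + (#X - 3) * s := by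
  classical
  have hpolar := (abs_le.1 (hframe.abs_sum_inner_mul_inner_sub_le y z)).2
  have hsub : {x, y, z} ⊆ X := by simp [insert_subset_iff, hx, hy, hz]
  have hthree : #{x, y, z} = 3 := card_eq_three.2 ⟨x, y, z, hxy, hxz, hyz, rfl⟩
  have hrest : (#X - 3) * -s ≤ ∑ w ∈ X \ {x, y, z}, ⟪w, y⟫ * ⟪w, z⟫ := by
    have h := card_nsmul_le_sum (X \ {x, y, z}) (fun w ↦ ⟪w, y⟫ * ⟪w, z⟫) (-s) fun w hw ↦ by
      simp only [mem_sdiff, mem_insert, mem_singleton, not_or] at hw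
      obtain ⟨hwX, -, hwy, hwz⟩ := hw
      exact neg_le_mul_of_mem_Icc hs (hX.inner_mem_Icc hwX hy hwy) (hX.inner_mem_Icc hwX hz hwz)
    rwa [nsmul_eq_mul, cast_card_sdiff hsub, hthree] at h
  have htriple : ∑ w ∈ {x, y, z}, ⟪w, y⟫ * ⟪w, z⟫ = ⟪x, y⟫ * ⟪x, z⟫ + 2 * ⟪y, z⟫ := by
    rw [sum_insert (by simp [hxy, hxz]), sum_pair hyz, real_inner_self_eq_norm_sq,
      real_inner_self_eq_norm_sq, hX.norm_eq_one y hy, hX.norm_eq_one z hz, real_inner_comm y z]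
    ring
  rw [← sum_sdiff hsub, htriple, hX.norm_eq_one y hy, hX.norm_eq_one z hz] at hpolar
  linarith

theorem one_sub_le_sum_erase_inner_sq [DecidableEq E] (hX : IsSphericalCode X s)
    (hframe : IsNearlyTightFrame X 2 θ) (hx : x ∈ X) :
    1 - θ ≤ ∑ z ∈ X.erase x, ⟪x, z⟫ ^ 2 := by
  have h := (abs_le.1 (hframe x)).1
  simp only [real_inner_comm x] at h
  rw [← add_sum_erase _ _ hx, real_inner_self_eq_norm_sq, hX.norm_eq_one x hx] at h
  linarith

theorem exists_opposite (hX : IsSphericalCode X s) (hframe : IsNearlyTightFrame X 2 θ)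
    (hs : 0 ≤ s) (hsη : s ≤ η) (hη : θ + (#X - 3) * s ≤ η) (hη' : η ≤ 1 / 2)
    (hθ : θ + (#X - 2) * η ≤ 7 / 16) (hx : x ∈ X) :
    ∃ y ∈ X, x ≠ y ∧ ⟪x, y⟫ ≤ -1 + θ + (#X - 2) * (4 / 3 * η) ^ 2 ∧
      ∀ z ∈ X, x ≠ z → z ≠ y → -(4 / 3 * η) ≤ ⟪x, z⟫ := by
  classical
  have hcard_erase : (#(X.erase x) : ℝ) - 1 = #X - 2 := by
    rw [cast_card_erase_of_mem hx]
    ring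
  have hmem : ∀ z ∈ X.erase x, ⟪x, z⟫ ∈ Set.Icc (-1) η := fun z hz ↦
    Set.Icc_subset_Icc_right hsη
      (hX.inner_mem_Icc hx (mem_of_mem_erase hz) (ne_of_mem_erase hz).symm)
  have hmul : ∀ y ∈ X.erase x, ∀ z ∈ X.erase x, y ≠ z → ⟪x, y⟫ * ⟪x, z⟫ ≤ η :=
    fun y hy z hz hyz ↦
      (hX.inner_mul_inner_le hframe hs hx (mem_of_mem_erase hy) (mem_of_mem_erase hz)
        (ne_of_mem_erase hy).symm (ne_of_mem_erase hz).symm hyz).trans hη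
  obtain ⟨y, hy, hxy, hothers⟩ := exists_le_neg_one_add_and_forall_neg_le (hs.trans hsη) hmem hη'
    hmul (hX.one_sub_le_sum_erase_inner_sq hframe hx) (by rwa [hcard_erase])
  rw [hcard_erase] at hxy
  exact ⟨y, mem_of_mem_erase hy, (ne_of_mem_erase hy).symm, hxy,
    fun z hz hxz hzy ↦ hothers z (mem_erase.2 ⟨hxz.symm, hz⟩) hzy⟩

theorem exists_opposite_of_card_eq {d : ℕ} (hX : IsSphericalCode X s)
    (hframe : IsNearlyTightFrame X 2 (4 * d * (d - 1) * s)) (hcard : #X = 2 * d) (hd : 2 ≤ d)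
    (hs : s ∈ Set.Icc 0 (1 / (32 * (d : ℝ) ^ 4))) (hx : x ∈ X) :
    ∃ y ∈ X, x ≠ y ∧ ⟪x, y⟫ ≤ -1 + 1 / (4 * (d : ℝ) ^ 2) ∧
      ∀ z ∈ X, x ≠ z → z ≠ y → -(8 * d * (d - 1) * s) ≤ ⟪x, z⟫ := by
  obtain ⟨hs₀, hs₁⟩ := hs
  have hd' : (2 : ℝ) ≤ d := by exact_mod_cast hd
  have hd₀ : (0 : ℝ) < d := by linarith
  have hcard' : (#X : ℝ) = 2 * d := by exact_mod_cast hcard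
  have hsd : 0 ≤ s * (d - 2) := mul_nonneg hs₀ (by linarith)
  have hsd' : 0 ≤ s * (d - 2) * (d - 2) := mul_nonneg hsd (by linarith)
  have hscale : 4 * (d : ℝ) ^ 2 * s ≤ 1 / (8 * (d : ℝ) ^ 2) :=
    mul_sq_mul_le_one_div (by norm_num) (by norm_num) (by norm_num) hd₀ hs₁
  have hscale' := one_div_mul_sq_le (c := 8) (by norm_num) hd'
  have hθ : 4 * d * (d - 1) * s ≤ 1 / (8 * (d : ℝ) ^ 2) := by linarith
  obtain ⟨η, hη⟩ : ∃ η, η = 4 * d * (d - 1) * s + (2 * d - 3) * s := ⟨_, rfl⟩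
  have hsη : s ≤ η := by linarith
  have hη₁ : η ≤ 1 / (8 * (d : ℝ) ^ 2) := by linarith
  have hη₂ : 4 / 3 * η ≤ 8 * d * (d - 1) * s := by linarith
  obtain ⟨y, hy, hxy, hopposite, hothers⟩ := hX.exists_opposite hframe hs₀ hsη
    (by rw [hcard', hη]) (by linarith)
    (by linarith [hcard' ▸ two_mul_sub_two_mul_le hd₀ (hs₀.trans hsη) hη₁]) hx
  rw [hcard'] at hopposite
  exact ⟨y, hy, hxy, by linarith [add_mul_sq_le_one_div hd₀ (hs₀.trans hsη) hη₁ hθ],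
    fun z hz hxz hzy ↦ by linarith [hothers z hz hxz hzy, hη₂]⟩

end IsSphericalCode

theorem crosspolytope_inner_dichotomy_general {E : Type*} [NormedAddCommGroup E]
    [InnerProductSpace ℝ E] {d : ℕ} (hdim : finrank ℝ E = d) (hd : 2 ≤ d) {s : ℝ}
    (hs : s ∈ Set.Icc 0 (1 / (32 * (d : ℝ) ^ 4))) {X : Finset E} (hcard : 2 * d ≤ #X)
    (hX : IsSphericalCode X s) :
    (∀ x ∈ X, ∀ y ∈ X, x ≠ y →
      ((-1 ≤ ⟪x, y⟫ ∧ ⟪x, y⟫ ≤ -1 + 1 / (4 * (d : ℝ) ^ 2)) ∨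
        (-(8 * d * (d - 1) * s) ≤ ⟪x, y⟫ ∧ ⟪x, y⟫ ≤ s))) ∧
    ∀ x ∈ X, ∃! y, y ∈ X ∧ ⟪x, y⟫ ≤ -3 / 4 := by
  subst hdim
  have : FiniteDimensional ℝ E := .of_finrank_pos (by omega)
  have hd' : (2 : ℝ) ≤ finrank ℝ E := by exact_mod_cast hd
  have hquarter := one_div_mul_sq_le (c := 4) (by norm_num) hd'
  have hscale := eight_mul_sq_mul_le hd' hs.2
  have hsd : 0 ≤ s * finrank ℝ E := mul_nonneg hs.1 (by positivity)
  have hsd' : 0 ≤ s * finrank ℝ E * (finrank ℝ E - 2) := mul_nonneg hsd (by linarith)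
  have hcard_eq := (hX.card_le_two_mul_finrank hs.1 (by linarith)).antisymm hcard
  have hframe := hX.isNearlyTightFrame hs.1 hd hcard_eq
  have hopposite := fun x hx ↦ hX.exists_opposite_of_card_eq hframe hcard_eq hd hs (x := x) hx
  refine ⟨fun x hx y hy hxy ↦ ?_, fun x hx ↦ ?_⟩
  · obtain ⟨o, -, -, hxo, hothers⟩ := hopposite x hx
    rcases eq_or_ne y o with rfl | hyo
    · exact .inl ⟨hX.neg_one_le_inner hx hy, hxo⟩
    · exact .inr ⟨hothers y hy hxy hyo, hX.inner_le x hx y hy hxy⟩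
  · obtain ⟨o, ho, -, hxo, hothers⟩ := hopposite x hx
    refine ⟨o, ⟨ho, by linarith⟩, fun y ⟨hy, hxy⟩ ↦ by_contra fun hyo ↦ ?_⟩
    have hne : x ≠ y := by
      rintro rfl
      norm_num [real_inner_self_eq_norm_sq, hX.norm_eq_one x hx] at hxy
    linarith [hothers y hy hne hyo]

/-- Inner product dichotomy for near-optimal crosspolytope packings: if at least `2d`
unit vectors in `ℝ^d` have pairwise spherical distances at least `π/2 - 2ε` with
`0 < ε < 1/(64 d⁴)` and `s = sin 2ε`, then any two distinct vectors have inner product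
either in `[-1, -1 + 1/(4d²)]` or in `[-8d(d-1)s, s]`, and each vector has exactly one
opposite vector (inner product at most `-3/4`). -/
theorem crosspolytope_inner_dichotomy (d : ℕ) (hd : 2 ≤ d) (ε : ℝ)
    (hε0 : 0 < ε) (hε1 : ε < 1 / (64 * (d : ℝ) ^ 4))
    (X : Finset (EuclideanSpace ℝ (Fin d)))
    (hXcard : 2 * d ≤ X.card)
    (hXunit : ∀ x ∈ X, ‖x‖ = 1)
    (hdist : ∀ x ∈ X, ∀ y ∈ X, x ≠ y →
      Real.pi / 2 - 2 * ε ≤ Real.arccos ⟪x, y⟫) :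
    (∀ x ∈ X, ∀ y ∈ X, x ≠ y →
      ((-1 ≤ ⟪x, y⟫ ∧ ⟪x, y⟫ ≤ -1 + 1 / (4 * (d : ℝ) ^ 2)) ∨
       (-(8 * (d : ℝ) * ((d : ℝ) - 1) * Real.sin (2 * ε)) ≤ ⟪x, y⟫ ∧
        ⟪x, y⟫ ≤ Real.sin (2 * ε)))) ∧
    (∀ x ∈ X, ∃! y : EuclideanSpace ℝ (Fin d), y ∈ X ∧ ⟪x, y⟫ ≤ -3 / 4) := by
  have hc := one_div_mul_pow_four_le_one (Nat.one_le_cast.2 (one_le_two.trans hd) : (1 : ℝ) ≤ d)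
  have hε : 2 * ε ∈ Set.Icc 0 (1 / (32 * (d : ℝ) ^ 4)) := ⟨by linarith, by
    linarith [show 1 / (64 * (d : ℝ) ^ 4) = 1 / (32 * (d : ℝ) ^ 4) / 2 by ring]⟩
  have hpi := Real.pi_gt_three
  exact crosspolytope_inner_dichotomy_general finrank_euclideanSpace_fin hd
    (sin_mem_Icc hε (by linarith)) hXcard
    (isSphericalCode_sin_of_le_arccos ⟨by linarith, by linarith [hε.2]⟩ hXunit hdist)
end

section
/- Let d ≥ 2, let 0 < ε < 1/(64·d⁴), set s = sin(2ε), and let X ⊂ S^{d−1} be a finite set with |X| ≥ 2d such that the spherical distance δ(x,y) ≥ π/2 − 2ε for all distinct x, y ∈ X. If x, y ∈ X satisfy ⟨x, y⟩ ≤ −3/4, then δ(y, −x) ≤ 32·d²·(d−1)·s. -/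
open scoped RealInnerProductSpace

/-!
Let `S = ∑ v, v ⊗ v` be the frame operator of `2d` vectors of the configuration. For unit vectors,

  `∑_{v ≠ w} (⟪v, w⟫ + ⟪v, w⟫²) = ‖∑ v, v‖² + ‖S - 2‖²`  (Frobenius norm),

and each summand on the left is at most `s + s²`. Hence `‖S - 2‖² ≤ 4d²(s + s²)`, and no summand is
much below zero: every inner product is either `O(d²s)` or within `O(d²s)` of `-1`.
Let `x`, `y` be a pair of the second kind and put `e = x + y`. Every other vector `z` is nearly
orthogonal to both `x` and `y`, so `⟪e, z⟫ = O(d²s)`. Since `S` is close to `2`, the sum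
`∑ v, ⟪v, e⟫²` is at least `7/4 ‖e‖²`, while `x` and `y` contribute only `‖e‖⁴/2` to it, so the
remaining `2d - 2` terms bound `‖e‖²`. This improves the bound `‖e‖ = O(d √s)` given by
`⟪x, y⟫` alone to one linear in `s`.
-/

variable {E : Type*} [NormedAddCommGroup E] [InnerProductSpace ℝ E]

section Trace

variable {ι : Type*} [Fintype ι] {T : E →ₗ[ℝ] E}

lemma trace_mul_self_eq_sum_sq_norm (hT : T.IsSymmetric) (b : OrthonormalBasis ι ℝ E) :
    LinearMap.trace ℝ E (T * T) = ∑ i, ‖T (b i)‖ ^ 2 := by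
  rw [LinearMap.trace_eq_sum_inner _ b]
  refine Finset.sum_congr rfl fun i _ => ?_
  rw [Module.End.mul_apply, ← hT, real_inner_self_eq_norm_sq]

variable [FiniteDimensional ℝ E]

lemma trace_mul_self_nonneg (hT : T.IsSymmetric) : 0 ≤ LinearMap.trace ℝ E (T * T) := by
  rw [trace_mul_self_eq_sum_sq_norm hT (stdOrthonormalBasis ℝ E)]
  positivity

lemma sq_norm_apply_le_trace_mul_self (hT : T.IsSymmetric) (x : E) :
    ‖T x‖ ^ 2 ≤ LinearMap.trace ℝ E (T * T) * ‖x‖ ^ 2 := by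
  let b := stdOrthonormalBasis ℝ E
  calc ‖T x‖ ^ 2 = ∑ i, ⟪T (b i), x⟫ ^ 2 := by simp only [hT _ x, b.sum_sq_inner_right]
    _ ≤ ∑ i, ‖T (b i)‖ ^ 2 * ‖x‖ ^ 2 := Finset.sum_le_sum fun i _ => by
      rw [← mul_pow]
      exact sq_le_sq.2 ((abs_real_inner_le_norm _ _).trans (le_abs_self _))
    _ = LinearMap.trace ℝ E (T * T) * ‖x‖ ^ 2 := by
      rw [trace_mul_self_eq_sum_sq_norm hT b, Finset.sum_mul]

lemma trace_sub_smul_one_mul_self (T : E →ₗ[ℝ] E) (c : ℝ) :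
    LinearMap.trace ℝ E ((T - c • 1) * (T - c • 1)) =
      LinearMap.trace ℝ E (T * T) - 2 * c * LinearMap.trace ℝ E T +
        c ^ 2 * Module.finrank ℝ E := by
  simp only [sub_mul, mul_sub, smul_mul_assoc, mul_smul_comm, one_mul, mul_one, map_sub, map_smul,
    LinearMap.trace_one, smul_eq_mul]
  ring

end Trace

section Frame

open InnerProductSpace

/-- The frame operator `x ↦ ∑ v ∈ Y, ⟪v, x⟫ • v` of a finite set of vectors. -/
noncomputable def frameOperator (Y : Finset E) : E →ₗ[ℝ] E :=
  ∑ v ∈ Y, (rankOne ℝ v v : E →ₗ[ℝ] E)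

/-- The squared Frobenius distance from the frame operator of `Y` to `c` times the identity, written
as a trace; it measures how far `Y` is from being a tight frame with frame constant `c`. -/
noncomputable def tightnessDefect (Y : Finset E) (c : ℝ) : ℝ :=
  LinearMap.trace ℝ E ((frameOperator Y - c • 1) * (frameOperator Y - c • 1))

variable (Y : Finset E) (c : ℝ)

lemma isSymmetric_frameOperator_sub_smul_one : (frameOperator Y - c • 1).IsSymmetric := by
  refine LinearMap.IsSymmetric.sub ?_ (LinearMap.IsSymmetric.one.smul (by simp))
  exact Finset.sum_induction _ LinearMap.IsSymmetric (fun _ _ => LinearMap.IsSymmetric.add)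
    LinearMap.IsSymmetric.zero fun v _ => isSymmetric_rankOne_self v

lemma inner_frameOperator_apply_self (x : E) :
    ⟪frameOperator Y x, x⟫ = ∑ v ∈ Y, ⟪v, x⟫ ^ 2 := by
  simp only [frameOperator, LinearMap.sum_apply, ContinuousLinearMap.coe_coe, rankOne_apply,
    sum_inner, real_inner_smul_left, sq]

variable [FiniteDimensional ℝ E]

lemma trace_frameOperator : LinearMap.trace ℝ E (frameOperator Y) = ∑ v ∈ Y, ‖v‖ ^ 2 := by
  simp only [frameOperator, map_sum, trace_rankOne, real_inner_self_eq_norm_sq]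

lemma trace_frameOperator_mul_self :
    LinearMap.trace ℝ E (frameOperator Y * frameOperator Y) =
      ∑ v ∈ Y, ∑ w ∈ Y, ⟪v, w⟫ ^ 2 := by
  simp only [frameOperator, Finset.sum_mul_sum, map_sum, Module.End.mul_eq_comp,
    ← ContinuousLinearMap.toLinearMap_comp, rankOne_comp_rankOne,
    ContinuousLinearMap.toLinearMap_smul, map_smul, trace_rankOne, smul_eq_mul]
  refine Finset.sum_congr rfl fun v _ => Finset.sum_congr rfl fun w _ => ?_
  rw [real_inner_comm v w, sq]

lemma tightnessDefect_nonneg : 0 ≤ tightnessDefect Y c :=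
  trace_mul_self_nonneg (isSymmetric_frameOperator_sub_smul_one Y c)

lemma tightnessDefect_eq :
    tightnessDefect Y c = ∑ v ∈ Y, ∑ w ∈ Y, ⟪v, w⟫ ^ 2 - 2 * c * ∑ v ∈ Y, ‖v‖ ^ 2 +
      c ^ 2 * Module.finrank ℝ E := by
  rw [tightnessDefect, trace_sub_smul_one_mul_self, trace_frameOperator_mul_self,
    trace_frameOperator]

variable {Y c}

lemma sub_mul_sq_norm_le_sum_sq_inner {r : ℝ} (hr : 0 ≤ r) (hY : tightnessDefect Y c ≤ r ^ 2)
    (x : E) : (c - r) * ‖x‖ ^ 2 ≤ ∑ v ∈ Y, ⟪v, x⟫ ^ 2 := by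
  set T := frameOperator Y - c • 1 with hT
  have hTx : ‖T x‖ ≤ r * ‖x‖ := by
    refine le_of_sq_le_sq ?_ (by positivity)
    calc ‖T x‖ ^ 2 ≤ tightnessDefect Y c * ‖x‖ ^ 2 :=
          sq_norm_apply_le_trace_mul_self (isSymmetric_frameOperator_sub_smul_one Y c) x
      _ ≤ (r * ‖x‖) ^ 2 := by rw [mul_pow]; gcongr
  have hinner : ⟪T x, x⟫ = ∑ v ∈ Y, ⟪v, x⟫ ^ 2 - c * ‖x‖ ^ 2 := by
    rw [hT, LinearMap.sub_apply, LinearMap.smul_apply, Module.End.one_apply, inner_sub_left,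
      inner_frameOperator_apply_self, real_inner_smul_left, real_inner_self_eq_norm_sq]
  have hlower : -(r * ‖x‖ * ‖x‖) ≤ ⟪T x, x⟫ :=
    (neg_le_neg (by gcongr)).trans (abs_le.1 (abs_real_inner_le_norm (T x) x)).1
  linarith

end Frame

lemma sum_sum_eq_sum_add_sum_offDiag {ι M : Type*} [AddCommMonoid M] (Y : Finset ι)
    (f : ι → ι → M) :
    ∑ v ∈ Y, ∑ w ∈ Y, f v w = ∑ v ∈ Y, f v v + ∑ p ∈ Y.offDiag, f p.1 p.2 := by
  classical
  rw [← Finset.sum_product', ← Finset.diag_union_offDiag,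
    Finset.sum_union Y.disjoint_diag_offDiag, Finset.sum_diag]

lemma sum_offDiag_inner_add_sq_inner [FiniteDimensional ℝ E] {Y : Finset E}
    (hY : ∀ v ∈ Y, ‖v‖ = 1) :
    ∑ p ∈ Y.offDiag, (⟪p.1, p.2⟫ + ⟪p.1, p.2⟫ ^ 2) =
      ‖∑ v ∈ Y, v‖ ^ 2 + tightnessDefect Y 2 + 2 * (Y.card - 2 * Module.finrank ℝ E) := by
  have hsum_norm : ∑ v ∈ Y, ‖v‖ ^ 2 = Y.card := by simp +contextual [hY]
  have hsum_inner : ‖∑ v ∈ Y, v‖ ^ 2 = Y.card + ∑ p ∈ Y.offDiag, ⟪p.1, p.2⟫ := by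
    rw [← real_inner_self_eq_norm_sq, sum_inner]
    simp only [inner_sum, sum_sum_eq_sum_add_sum_offDiag, real_inner_self_eq_norm_sq, hsum_norm]
  have hsum_sq : ∑ v ∈ Y, ∑ w ∈ Y, ⟪v, w⟫ ^ 2 = Y.card + ∑ p ∈ Y.offDiag, ⟪p.1, p.2⟫ ^ 2 := by
    rw [sum_sum_eq_sum_add_sum_offDiag]
    simp +contextual [hY]
  rw [tightnessDefect_eq, hsum_inner, hsum_sq, hsum_norm, Finset.sum_add_distrib]
  ring

lemma finrank_pos_of_norm_eq_one [FiniteDimensional ℝ E] {x : E} (hx : ‖x‖ = 1) :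
    0 < Module.finrank ℝ E :=
  Module.finrank_pos_iff_exists_ne_zero.2 ⟨x, norm_ne_zero_iff.1 (by simp [hx])⟩

lemma sqrt_natCast_le_self (n : ℕ) : √(n : ℝ) ≤ n :=
  Real.sqrt_le_iff.2 ⟨n.cast_nonneg, by exact_mod_cast Nat.le_self_pow two_ne_zero n⟩

lemma arccos_inner_le_norm_sub {x y : E} (hx : ‖x‖ = 1) (hy : ‖y‖ = 1) :
    Real.arccos ⟪x, y⟫ ≤ Real.pi / 2 * ‖x - y‖ := by
  set θ := Real.arccos ⟪x, y⟫
  obtain ⟨hneg, hle⟩ := real_inner_mem_Icc_of_norm_eq_one hx hy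
  have hcos : ⟪x, y⟫ ≤ 1 - 2 / Real.pi ^ 2 * θ ^ 2 := by
    rw [← Real.cos_arccos hneg hle]
    exact Real.cos_le_one_sub_mul_cos_sq
      (by rw [abs_of_nonneg (Real.arccos_nonneg _)]; exact Real.arccos_le_pi _)
  refine le_of_sq_le_sq ?_ (by positivity)
  calc θ ^ 2 = (Real.pi / 2) ^ 2 * (2 * (2 / Real.pi ^ 2 * θ ^ 2)) := by field_simp
    _ ≤ (Real.pi / 2) ^ 2 * ‖x - y‖ ^ 2 := by
      gcongr
      rw [norm_sub_sq_real, hx, hy]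
      linarith
    _ = (Real.pi / 2 * ‖x - y‖) ^ 2 := by ring

local notation "dim" => (Module.finrank ℝ E : ℝ)

/-- A finite set of unit vectors whose distinct members have inner product at most `s`. -/
structure IsSphericalCode_s15 (Y : Finset E) (s : ℝ) : Prop where
  norm_eq_one : ∀ v ∈ Y, ‖v‖ = 1
  inner_le : ∀ v ∈ Y, ∀ w ∈ Y, v ≠ w → ⟪v, w⟫ ≤ s

lemma isSphericalCode_sin {X : Finset E} {ε : ℝ} (hε0 : 0 ≤ ε) (hε : 4 * ε < Real.pi)
    (hX : ∀ x ∈ X, ‖x‖ = 1)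
    (hdist : ∀ x ∈ X, ∀ y ∈ X, x ≠ y → Real.pi / 2 - 2 * ε ≤ Real.arccos ⟪x, y⟫) :
    IsSphericalCode_s15 X (Real.sin (2 * ε)) where
  norm_eq_one := hX
  inner_le v hv w hw hvw := by
    rw [← Real.arcsin_le_iff_le_sin' ⟨by linarith, by linarith⟩]
    have := hdist v hv w hw hvw
    rw [Real.arccos] at this
    linarith

namespace IsSphericalCode_s15

variable {X Y : Finset E} {s : ℝ} {x y z : E}

lemma subset (hX : IsSphericalCode_s15 X s) (hYX : Y ⊆ X) : IsSphericalCode_s15 Y s where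
  norm_eq_one v hv := hX.norm_eq_one v (hYX hv)
  inner_le v hv w hw := hX.inner_le v (hYX hv) w (hYX hw)

lemma inner_add_sq_inner_le (hY : IsSphericalCode_s15 Y s) (hs : 0 ≤ s) (hx : x ∈ Y) (hy : y ∈ Y)
    (hxy : x ≠ y) : ⟪x, y⟫ + ⟪x, y⟫ ^ 2 ≤ s + s ^ 2 := by
  have hneg : -1 ≤ ⟪x, y⟫ :=
    (real_inner_mem_Icc_of_norm_eq_one (hY.norm_eq_one x hx) (hY.norm_eq_one y hy)).1
  nlinarith [hY.inner_le x hx y hy hxy]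

lemma inner_add_self_left (hY : IsSphericalCode_s15 Y s) (hx : x ∈ Y) (hy : y ∈ Y) :
    ⟪x, x + y⟫ = ‖x + y‖ ^ 2 / 2 := by
  rw [norm_add_sq_real, inner_add_right, real_inner_self_eq_norm_sq, hY.norm_eq_one x hx,
    hY.norm_eq_one y hy]
  ring

variable [FiniteDimensional ℝ E]

lemma one_le_finrank (hY : IsSphericalCode_s15 Y s) (hx : x ∈ Y) : 1 ≤ dim := by
  exact_mod_cast finrank_pos_of_norm_eq_one (hY.norm_eq_one x hx)

lemma tightnessDefect_add_le (hY : IsSphericalCode_s15 Y s) (hs : 0 ≤ s) (hx : x ∈ Y) (hy : y ∈ Y)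
    (hxy : x ≠ y) :
    tightnessDefect Y 2 + 2 * (Y.card - 2 * dim) + 2 * (s + s ^ 2 - (⟪x, y⟫ + ⟪x, y⟫ ^ 2)) ≤
      Y.card * (Y.card - 1) * (s + s ^ 2) := by
  classical
  let gap : E × E → ℝ := fun p => s + s ^ 2 - (⟪p.1, p.2⟫ + ⟪p.1, p.2⟫ ^ 2)
  have hpair : 2 * (s + s ^ 2 - (⟪x, y⟫ + ⟪x, y⟫ ^ 2)) ≤ ∑ p ∈ Y.offDiag, gap p := by
    have hgap : ∀ p ∈ Y.offDiag, 0 ≤ gap p := fun p hp => by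
      obtain ⟨h₁, h₂, hne⟩ := Finset.mem_offDiag.1 hp
      exact sub_nonneg.2 (hY.inner_add_sq_inner_le hs h₁ h₂ hne)
    calc 2 * (s + s ^ 2 - (⟪x, y⟫ + ⟪x, y⟫ ^ 2)) = gap (x, y) + gap (y, x) := by
          simp only [gap, real_inner_comm x y]
          ring
      _ ≤ ∑ p ∈ Y.offDiag, gap p :=
          Finset.add_le_sum hgap (by simp [hx, hy, hxy]) (by simp [hx, hy, hxy.symm])
            (by simp [hxy])
  have hcard : (Y.offDiag.card : ℝ) = Y.card * (Y.card - 1) := by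
    rw [Finset.offDiag_card, Nat.cast_sub (Nat.le_mul_self _)]
    push_cast
    ring
  rw [Finset.sum_sub_distrib, sum_offDiag_inner_add_sq_inner hY.norm_eq_one, Finset.sum_const,
    nsmul_eq_mul, hcard] at hpair
  linarith [sq_nonneg ‖∑ v ∈ Y, v‖]

lemma tightnessDefect_le (hY : IsSphericalCode_s15 Y s) (hs : 0 ≤ s) (hcard : Y.card = 2 * dim)
    (hx : x ∈ Y) (hy : y ∈ Y) (hxy : x ≠ y) : tightnessDefect Y 2 ≤ 4 * dim ^ 2 * (s + s ^ 2) := by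
  have := hY.tightnessDefect_add_le hs hx hy hxy
  rw [hcard] at this
  nlinarith [hY.inner_add_sq_inner_le hs hx hy hxy, hY.one_le_finrank hx, sq_nonneg s]

lemma neg_inner_add_sq_inner_le (hY : IsSphericalCode_s15 Y s) (hs : 0 ≤ s)
    (hcard : Y.card = 2 * dim) (hx : x ∈ Y) (hy : y ∈ Y) (hxy : x ≠ y) :
    -(⟪x, y⟫ + ⟪x, y⟫ ^ 2) ≤ 2 * dim ^ 2 * (s + s ^ 2) := by
  have := hY.tightnessDefect_add_le hs hx hy hxy
  rw [hcard] at this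
  nlinarith [tightnessDefect_nonneg Y 2, hY.one_le_finrank hx, sq_nonneg s]

lemma le_sq_finrank_mul (hY : IsSphericalCode_s15 Y s) (hs : 0 ≤ s) (hx : x ∈ Y) : s ≤ dim ^ 2 * s :=
  le_mul_of_one_le_left hs (one_le_pow₀ (hY.one_le_finrank hx))

end IsSphericalCode_s15

/-- A spherical code with `2d` members in dimension `d` whose inner products exceed those of the
vertices `±eᵢ` of the cross-polytope by at most `s ≤ 1 / (128 d²)`. -/
structure IsNearCrossPolytope (Y : Finset E) (s : ℝ) : Prop extends IsSphericalCode_s15 Y s where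
  card_eq : Y.card = 2 * Module.finrank ℝ E
  nonneg : 0 ≤ s
  sq_finrank_mul_le : (Module.finrank ℝ E : ℝ) ^ 2 * s ≤ 1 / 128

namespace IsNearCrossPolytope

variable {Y : Finset E} {s : ℝ} {x y z : E}

lemma card_eq_cast (hY : IsNearCrossPolytope Y s) : Y.card = 2 * dim := by
  exact_mod_cast hY.card_eq

lemma ne_of_inner_lt (hY : IsNearCrossPolytope Y s) (hopp : ⟪x, y⟫ < -(3 * (dim ^ 2 * s))) :
    x ≠ y := by
  rintro rfl
  have : 0 ≤ dim ^ 2 * s := mul_nonneg (sq_nonneg _) hY.nonneg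
  linarith [real_inner_self_nonneg (x := x)]

variable [FiniteDimensional ℝ E]

lemma inner_le_or_le_inner (hY : IsNearCrossPolytope Y s) (hx : x ∈ Y) (hy : y ∈ Y) (hxy : x ≠ y) :
    ⟪x, y⟫ ≤ -1 + 3 * (dim ^ 2 * s) ∨ -(3 * (dim ^ 2 * s)) ≤ ⟪x, y⟫ := by
  have hs := hY.nonneg
  have hsmall := hY.sq_finrank_mul_le
  have hs_le := hY.le_sq_finrank_mul hs hx
  have hquad : -(⟪x, y⟫ + ⟪x, y⟫ ^ 2) ≤ 2 * (dim ^ 2 * s) * (1 + s) :=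
    (hY.neg_inner_add_sq_inner_le hs hY.card_eq_cast hx hy hxy).trans_eq (by ring)
  set δ := dim ^ 2 * s
  have hprod : 0 ≤ (⟪x, y⟫ - (-1 + 3 * δ)) * (⟪x, y⟫ - -(3 * δ)) := by nlinarith
  rcases mul_nonneg_iff.1 hprod with ⟨-, h⟩ | ⟨h, -⟩
  · exact Or.inr (sub_nonneg.1 h)
  · exact Or.inl (sub_nonpos.1 h)

lemma sq_norm_add_le (hY : IsNearCrossPolytope Y s) (hx : x ∈ Y) (hy : y ∈ Y)
    (hopp : ⟪x, y⟫ < -(3 * (dim ^ 2 * s))) : ‖x + y‖ ^ 2 ≤ 6 * (dim ^ 2 * s) := by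
  have hinner : ⟪x, y⟫ ≤ -1 + 3 * (dim ^ 2 * s) :=
    (hY.inner_le_or_le_inner hx hy (hY.ne_of_inner_lt hopp)).resolve_right hopp.not_ge
  rw [norm_add_sq_real, hY.norm_eq_one x hx, hY.norm_eq_one y hy]
  linarith

lemma neg_le_inner_of_opposite (hY : IsNearCrossPolytope Y s) (hx : x ∈ Y) (hy : y ∈ Y)
    (hopp : ⟪x, y⟫ < -(3 * (dim ^ 2 * s))) (hz : z ∈ Y) (hzx : z ≠ x) (hzy : z ≠ y) :
    -(3 * (dim ^ 2 * s)) ≤ ⟪z, x⟫ := by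
  have hsmall := hY.sq_finrank_mul_le
  refine (hY.inner_le_or_le_inner hz hx hzx).resolve_left (not_le.2 ?_)
  have hnorm : ‖x + y‖ ≤ 1 / 4 :=
    le_of_sq_le_sq (by linarith [hY.sq_norm_add_le hx hy hopp]) (by norm_num)
  have hadd : -‖x + y‖ ≤ ⟪z, x + y⟫ := by
    have := (abs_le.1 (abs_real_inner_le_norm z (x + y))).1
    rwa [hY.norm_eq_one z hz, one_mul] at this
  rw [inner_add_right] at hadd
  linarith [hY.inner_le z hz y hy hzy, hY.le_sq_finrank_mul hY.nonneg hx]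

lemma abs_inner_add_le (hY : IsNearCrossPolytope Y s) (hx : x ∈ Y) (hy : y ∈ Y)
    (hopp : ⟪x, y⟫ < -(3 * (dim ^ 2 * s))) (hz : z ∈ Y) (hzx : z ≠ x) (hzy : z ≠ y) :
    |⟪z, x + y⟫| ≤ 6 * (dim ^ 2 * s) := by
  have hzx_lower := hY.neg_le_inner_of_opposite hx hy hopp hz hzx hzy
  have hzy_lower := hY.neg_le_inner_of_opposite hy hx (by rwa [real_inner_comm]) hz hzy hzx
  have hs_le := hY.le_sq_finrank_mul hY.nonneg hx
  rw [inner_add_right, abs_le]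
  constructor <;> linarith [hY.inner_le z hz x hx hzx, hY.inner_le z hz y hy hzy]

lemma sum_sq_inner_add_le (hY : IsNearCrossPolytope Y s) (hx : x ∈ Y) (hy : y ∈ Y)
    (hopp : ⟪x, y⟫ < -(3 * (dim ^ 2 * s))) :
    ∑ v ∈ Y, ⟪v, x + y⟫ ^ 2 ≤
      ‖x + y‖ ^ 4 / 2 + 2 * (dim - 1) * (6 * (dim ^ 2 * s)) ^ 2 := by
  classical
  have hxy := hY.ne_of_inner_lt hopp
  have hsub : {x, y} ⊆ Y := Finset.insert_subset hx (Finset.singleton_subset_iff.2 hy)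
  have hothers : ∑ v ∈ Y \ {x, y}, ⟪v, x + y⟫ ^ 2 ≤
      (Y \ {x, y}).card • (6 * (dim ^ 2 * s)) ^ 2 :=
    Finset.sum_le_card_nsmul _ _ _ fun z hz => by
      simp only [Finset.mem_sdiff, Finset.mem_insert, Finset.mem_singleton, not_or] at hz
      obtain ⟨hzY, hzx, hzy⟩ := hz
      exact sq_le_sq.2 ((hY.abs_inner_add_le hx hy hopp hzY hzx hzy).trans (le_abs_self _))
  have hcard_others : ((Y \ {x, y}).card : ℝ) = 2 * (dim - 1) := by
    rw [Finset.cast_card_sdiff hsub, hY.card_eq_cast, Finset.card_pair hxy]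
    push_cast
    ring
  rw [nsmul_eq_mul, hcard_others] at hothers
  have hx_term := hY.inner_add_self_left hx hy
  have hy_term := hY.inner_add_self_left hy hx
  rw [add_comm y x] at hy_term
  rw [← Finset.sum_sdiff hsub, Finset.sum_pair hxy, hx_term, hy_term]
  linarith

lemma norm_add_le (hY : IsNearCrossPolytope Y s) (hx : x ∈ Y) (hy : y ∈ Y)
    (hopp : ⟪x, y⟫ < -(3 * (dim ^ 2 * s))) :
    ‖x + y‖ ≤ 7 * √(dim - 1) * (dim ^ 2 * s) := by
  have hdim : 0 ≤ dim - 1 := sub_nonneg.2 (hY.one_le_finrank hx)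
  have hs := hY.nonneg
  have hsmall := hY.sq_finrank_mul_le
  have hs_le := hY.le_sq_finrank_mul hs hx
  have hdefect : tightnessDefect Y 2 ≤ (1 / 4) ^ 2 := by
    nlinarith [hY.tightnessDefect_le hs hY.card_eq_cast hx hy (hY.ne_of_inner_lt hopp)]
  have hlower := sub_mul_sq_norm_le_sum_sq_inner (by norm_num) hdefect (x + y)
  have hupper := hY.sum_sq_inner_add_le hx hy hopp
  have hnorm : ‖x + y‖ ^ 2 ≤ 1 / 16 := by linarith [hY.sq_norm_add_le hx hy hopp]
  have hquartic : ‖x + y‖ ^ 4 ≤ 1 / 16 * ‖x + y‖ ^ 2 := by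
    calc ‖x + y‖ ^ 4 = ‖x + y‖ ^ 2 * ‖x + y‖ ^ 2 := by ring
      _ ≤ 1 / 16 * ‖x + y‖ ^ 2 := by gcongr
  refine le_of_sq_le_sq ?_ (by positivity)
  rw [mul_pow, mul_pow, Real.sq_sqrt hdim]
  linarith [mul_nonneg hdim (sq_nonneg (dim ^ 2 * s))]

end IsNearCrossPolytope

lemma IsSphericalCode_s15.arccos_inner_neg_le [FiniteDimensional ℝ E] {X : Finset E} {s : ℝ} {x y : E}
    (hX : IsSphericalCode_s15 X s) (hs : 0 ≤ s) (hcard : 2 * Module.finrank ℝ E ≤ X.card)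
    (hsmall : dim ^ 2 * s ≤ 1 / 128) (hx : x ∈ X) (hy : y ∈ X)
    (hopp : ⟪x, y⟫ < -(3 * (dim ^ 2 * s))) :
    Real.arccos ⟪y, -x⟫ ≤ 14 * √(dim - 1) * (dim ^ 2 * s) := by
  classical
  have hxy : x ≠ y := by
    rintro rfl
    linarith [real_inner_self_nonneg (x := x), hX.le_sq_finrank_mul hs hx]
  obtain ⟨Y, hxyY, hYX, hYcard⟩ := Finset.exists_subsuperset_card_eq
    (Finset.insert_subset hx (Finset.singleton_subset_iff.2 hy))
    (by have := finrank_pos_of_norm_eq_one (hX.norm_eq_one x hx)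
        rw [Finset.card_pair hxy]
        lia) hcard
  have hnorm : ‖x + y‖ ≤ 7 * √(dim - 1) * (dim ^ 2 * s) :=
    IsNearCrossPolytope.norm_add_le ⟨hX.subset hYX, hYcard, hs, hsmall⟩ (hxyY (by simp))
      (hxyY (by simp)) hopp
  calc Real.arccos ⟪y, -x⟫ ≤ Real.pi / 2 * ‖y - -x‖ :=
        arccos_inner_le_norm_sub (hX.norm_eq_one y hy) (by rw [norm_neg, hX.norm_eq_one x hx])
    _ ≤ 2 * ‖x + y‖ := by
      rw [sub_neg_eq_add, add_comm y]
      gcongr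
      linarith [Real.pi_le_four]
    _ ≤ 14 * √(dim - 1) * (dim ^ 2 * s) := by linarith

theorem opposite_nearly_antipodal_general [FiniteDimensional ℝ E] {ε : ℝ} (hε0 : 0 ≤ ε)
    (hε1 : ε ≤ 1 / (256 * (Module.finrank ℝ E : ℝ) ^ 2)) {X : Finset E}
    (hXcard : 2 * Module.finrank ℝ E ≤ X.card) (hXunit : ∀ x ∈ X, ‖x‖ = 1)
    (hdist : ∀ x ∈ X, ∀ y ∈ X, x ≠ y → Real.pi / 2 - 2 * ε ≤ Real.arccos ⟪x, y⟫)
    {x y : E} (hx : x ∈ X) (hy : y ∈ X) (hopp : ⟪x, y⟫ ≤ -1 / 32) :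
    Real.arccos ⟪y, -x⟫ ≤ 32 * (Module.finrank ℝ E : ℝ) ^ 2 * ((Module.finrank ℝ E : ℝ) - 1) *
      Real.sin (2 * ε) := by
  set d := Module.finrank ℝ E
  have hd : 0 < d := finrank_pos_of_norm_eq_one (hXunit x hx)
  have hd_sq : (1 : ℝ) ≤ (d : ℝ) ^ 2 := one_le_pow₀ (by exact_mod_cast hd)
  have hεd : ε * (256 * (d : ℝ) ^ 2) ≤ 1 := (le_div_iff₀ (by positivity)).1 hε1
  have hε_small : ε ≤ 1 / 256 := by nlinarith
  have hX := isSphericalCode_sin hε0 (by linarith [Real.pi_gt_three]) hXunit hdist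
  have hsin_nonneg : 0 ≤ Real.sin (2 * ε) :=
    Real.sin_nonneg_of_nonneg_of_le_pi (by linarith) (by linarith [Real.pi_gt_three])
  have hsmall : (d : ℝ) ^ 2 * Real.sin (2 * ε) ≤ 1 / 128 := by
    nlinarith [Real.sin_le (by linarith : 0 ≤ 2 * ε)]
  have hsqrt : √((d : ℝ) - 1) ≤ d - 1 := by
    simpa only [Nat.cast_pred hd] using sqrt_natCast_le_self (d - 1)
  calc Real.arccos ⟪y, -x⟫ ≤ 14 * √((d : ℝ) - 1) * ((d : ℝ) ^ 2 * Real.sin (2 * ε)) :=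
        hX.arccos_inner_neg_le hsin_nonneg hXcard hsmall hx hy (by linarith)
    _ ≤ 32 * ((d : ℝ) - 1) * ((d : ℝ) ^ 2 * Real.sin (2 * ε)) := by
      gcongr
      norm_num
    _ = 32 * (d : ℝ) ^ 2 * ((d : ℝ) - 1) * Real.sin (2 * ε) := by ring

/-- Opposite vectors are nearly antipodal: if at least `2d` unit vectors in `ℝ^d` have
pairwise spherical distances at least `π/2 - 2ε` with `0 < ε < 1/(64 d⁴)` and
`s = sin 2ε`, and `x, y ∈ X` satisfy `⟨x,y⟩ ≤ -3/4`, then `δ(y, -x) ≤ 32 d² (d-1) s`. -/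
theorem opposite_nearly_antipodal (d : ℕ) (hd : 2 ≤ d) (ε : ℝ)
    (hε0 : 0 < ε) (hε1 : ε < 1 / (64 * (d : ℝ) ^ 4))
    (X : Finset (EuclideanSpace ℝ (Fin d)))
    (hXcard : 2 * d ≤ X.card)
    (hXunit : ∀ x ∈ X, ‖x‖ = 1)
    (hdist : ∀ x ∈ X, ∀ y ∈ X, x ≠ y →
      Real.pi / 2 - 2 * ε ≤ Real.arccos ⟪x, y⟫)
    (x y : EuclideanSpace ℝ (Fin d)) (hx : x ∈ X) (hy : y ∈ X)
    (hopp : ⟪x, y⟫ ≤ -3 / 4) :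
    Real.arccos ⟪y, -x⟫ ≤ 32 * (d : ℝ) ^ 2 * ((d : ℝ) - 1) * Real.sin (2 * ε) := by
  have hε : ε ≤ 1 / (256 * (d : ℝ) ^ 2) := by
    have hd_sq : (2 : ℝ) ^ 2 ≤ (d : ℝ) ^ 2 := by gcongr; exact_mod_cast hd
    exact hε1.le.trans (one_div_le_one_div_of_le (by positivity) (by nlinarith))
  simpa using opposite_nearly_antipodal_general hε0.le (by simpa using hε) (by simpa using hXcard)
    hXunit hdist hx hy (hopp.trans (by norm_num))
end

section
/- Let d ≥ 3, let φ ∈ (0, π/4], and let ε ∈ (0, sin φ/(16·√(d−1))). Let u_0, …, u_d be unit vectors in ℝ^d such that u_1, …, u_{d−1} span a (d−1)-dimensional linear subspace L of ℝ^d and u_0 and u_d lie strictly on opposite sides of L. Suppose there exist unit vectors v_0, …, v_{d−1} with pairwise spherical distances δ(v_i, v_j) = 2φ and δ(u_i, v_i) ≤ ε for i = 0, …, d−1, and unit vectors w_1, …, w_d with pairwise spherical distances δ(w_i, w_j) = 2φ and δ(u_i, w_i) ≤ ε for i = 1, …, d. Then there exists a unit vector v_d with v_d ≠ v_0 such that v_1,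 …, v_d have pairwise spherical distances 2φ (i.e. v_1, …, v_{d−1}, v_d are vertices of a regular spherical simplex of edge length 2φ) and δ(u_d, v_d) ≤ (16·√(d−1)/ sin φ)·ε. -/
open scoped RealInnerProductSpace

/-!
Let `K` be the span of the facet `v₁, …, v_{d-1}`; the new vertex is the reflection of `v₀` in `K`.
Write an apex of a regular simplex as its projection onto the span of the opposite facet plus its
altitude. The projection is `a ∑ vᵢ` with `0 ≤ a ≤ 1 / (d - 1)`, so replacing the facet `v` by the
`2ε`-close facet `w` moves it by at most `2ε`. The altitudes over both facets have the same length,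
at most `1`, and it remains to compare their directions with the unit normal `m` of the separating
hyperplane.

The facet is nearly orthogonal to `m`, and `(1 - c) ∑ αᵢ² ≤ ‖∑ αᵢ vᵢ‖²` for `c = cos 2φ ≥ 0`, so the
projection of `m` onto `K` has norm at most `√(d - 1) ε / (√2 sin φ)`. Since `Kᗮ` is a line, `m` is
close to one of its two unit vectors, and the side on which `v₀` lies decides to which. If `ε` is
too large to read off that side, then the claimed bound exceeds `π`.
-/

open Module Submodule Set

section UnitVectors

variable {E : Type*} [NormedAddCommGroup E] [InnerProductSpace ℝ E] {x y : E}

lemma norm_sub_eq_two_mul_sin_half_arccos_inner (hx : ‖x‖ = 1) (hy : ‖y‖ = 1) :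
    ‖x - y‖ = 2 * Real.sin (Real.arccos ⟪x, y⟫ / 2) := by
  obtain ⟨hl, hr⟩ := real_inner_mem_Icc_of_norm_eq_one hx hy
  have hsin : 0 ≤ Real.sin (Real.arccos ⟪x, y⟫ / 2) :=
    Real.sin_nonneg_of_nonneg_of_le_pi (by linarith [Real.arccos_nonneg ⟪x, y⟫])
      (by linarith [Real.arccos_le_pi ⟪x, y⟫, Real.pi_pos])
  have hcos : ⟪x, y⟫ = 1 - 2 * Real.sin (Real.arccos ⟪x, y⟫ / 2) ^ 2 := by
    rw [Real.sin_sq_eq_half_sub, mul_div_cancel₀ _ two_ne_zero, Real.cos_arccos hl hr]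
    ring
  rw [← sq_eq_sq₀ (norm_nonneg _) (by positivity), norm_sub_sq_real, hx, hy]
  linarith

lemma norm_sub_le_arccos_inner (hx : ‖x‖ = 1) (hy : ‖y‖ = 1) :
    ‖x - y‖ ≤ Real.arccos ⟪x, y⟫ := by
  have h := Real.sin_le (x := Real.arccos ⟪x, y⟫ / 2) (by linarith [Real.arccos_nonneg ⟪x, y⟫])
  rw [norm_sub_eq_two_mul_sin_half_arccos_inner hx hy]
  linarith

lemma arccos_inner_le_pi_div_two_mul_norm_sub (hx : ‖x‖ = 1) (hy : ‖y‖ = 1) :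
    Real.arccos ⟪x, y⟫ ≤ Real.pi / 2 * ‖x - y‖ := by
  have h := Real.mul_le_sin (x := Real.arccos ⟪x, y⟫ / 2)
    (by linarith [Real.arccos_nonneg ⟪x, y⟫]) (by linarith [Real.arccos_le_pi ⟪x, y⟫])
  rw [norm_sub_eq_two_mul_sin_half_arccos_inner hx hy]
  calc Real.arccos ⟪x, y⟫
      = Real.pi * (2 / Real.pi * (Real.arccos ⟪x, y⟫ / 2)) := by field_simp
    _ ≤ Real.pi * Real.sin (Real.arccos ⟪x, y⟫ / 2) := by gcongr
    _ = _ := by ring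

lemma inner_eq_cos_of_arccos_inner_eq {θ : ℝ} (hx : ‖x‖ = 1) (hy : ‖y‖ = 1)
    (h : Real.arccos ⟪x, y⟫ = θ) : ⟪x, y⟫ = Real.cos θ := by
  obtain ⟨hl, hr⟩ := real_inner_mem_Icc_of_norm_eq_one hx hy
  rw [← h, Real.cos_arccos hl hr]

lemma abs_inner_sub_inner_le {ε : ℝ} {m : E} (hm : ‖m‖ = 1) (hxy : ‖x - y‖ ≤ ε) :
    |⟪x, m⟫ - ⟪y, m⟫| ≤ ε := by
  rw [← inner_sub_left]
  exact (abs_real_inner_le_norm _ _).trans (by rwa [hm, mul_one])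

end UnitVectors

section Line

variable {E : Type*} [NormedAddCommGroup E] [InnerProductSpace ℝ E] {K : Submodule ℝ E}
  [K.HasOrthogonalProjection] {m y : E}

lemma inner_sq_eq_of_finrank_eq_one (hK : finrank ℝ K = 1) (hy : y ∈ K) :
    ⟪y, m⟫ ^ 2 = ‖y‖ ^ 2 * ‖K.starProjection m‖ ^ 2 := by
  obtain rfl | hy0 := eq_or_ne y 0
  · simp
  obtain ⟨k, hk⟩ := (finrank_eq_one_iff_of_nonzero' (⟨y, hy⟩ : K) (by simpa using hy0)).mp hK
    ⟨K.starProjection m, K.starProjection_apply_mem m⟩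
  have hk : k • y = K.starProjection m := congrArg Subtype.val hk
  have hinner : ⟪y, m⟫ = k * ‖y‖ ^ 2 := by
    rw [← starProjection_eq_self_iff.mpr hy, inner_starProjection_left_eq_right, ← hk,
      starProjection_eq_self_iff.mpr hy, inner_smul_right, real_inner_self_eq_norm_sq]
  rw [hinner, ← hk, norm_smul, mul_pow, mul_pow, Real.norm_eq_abs, sq_abs]
  ring

lemma norm_sub_norm_smul_sq_le (hK : finrank ℝ Kᗮ = 1) (hm : ‖m‖ = 1) (hy : y ∈ Kᗮ)
    (hym : 0 ≤ ⟪y, m⟫) :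
    ‖y - ‖y‖ • m‖ ^ 2 ≤ 2 * ‖y‖ ^ 2 * ‖K.starProjection m‖ ^ 2 := by
  have hpyth := norm_sq_eq_add_norm_sq_starProjection m K
  have hsq := inner_sq_eq_of_finrank_eq_one hK hy (m := m)
  have hle : ⟪y, m⟫ ≤ ‖y‖ := by simpa [hm] using real_inner_le_norm y m
  have hexpand : ‖y - ‖y‖ • m‖ ^ 2 = 2 * (‖y‖ ^ 2 - ‖y‖ * ⟪y, m⟫) := by
    rw [norm_sub_sq_real, inner_smul_right, norm_smul, hm, norm_norm]
    ring
  have hproj : ‖y‖ ^ 2 * ‖K.starProjection m‖ ^ 2 = ‖y‖ ^ 2 - ⟪y, m⟫ ^ 2 := by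
    rw [hm] at hpyth
    rw [hsq, ← mul_one_sub]
    congr 1
    linarith
  rw [hexpand, mul_assoc, hproj]
  linarith [mul_le_mul_of_nonneg_right hle hym]

end Line

section Angle

variable {φ : ℝ}

lemma sin_pos_of_le_pi_div_four (hφ₀ : 0 < φ) (hφ : φ ≤ Real.pi / 4) : 0 < Real.sin φ :=
  Real.sin_pos_of_pos_of_lt_pi hφ₀ (by linarith [Real.pi_pos])

lemma cos_two_mul_nonneg_of_le_pi_div_four (hφ₀ : 0 ≤ φ) (hφ : φ ≤ Real.pi / 4) :
    0 ≤ Real.cos (2 * φ) :=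
  Real.cos_nonneg_of_neg_pi_div_two_le_of_le (by linarith [Real.pi_pos]) (by linarith)

lemma one_sub_cos_two_mul (φ : ℝ) : 1 - Real.cos (2 * φ) = 2 * Real.sin φ ^ 2 := by
  rw [Real.sin_sq_eq_half_sub]
  ring

lemma cos_two_mul_lt_one_of_sin_ne_zero (hφ : Real.sin φ ≠ 0) : Real.cos (2 * φ) < 1 := by
  rw [← sub_pos, one_sub_cos_two_mul]
  positivity

lemma add_four_mul_sq_lt_two_mul_sq {n σ ε : ℝ} (hn : 1 ≤ n) (hσ : 0 < σ) (hε : 0 ≤ ε)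
    (h : √n / σ * ε < 1 / 2) : (n + 4) * ε ^ 2 < 2 * σ ^ 2 := by
  have hn0 : 0 ≤ n := zero_le_one.trans hn
  have hnε : n * ε ^ 2 < (1 / 2 * σ) ^ 2 := by
    calc n * ε ^ 2 = (√n / σ * ε * σ) ^ 2 := by
          rw [div_mul_eq_mul_div, div_mul_cancel₀ _ hσ.ne', mul_pow, Real.sq_sqrt hn0]
      _ < (1 / 2 * σ) ^ 2 := by gcongr
  linarith [le_mul_of_one_le_left (sq_nonneg ε) hn, pow_pos hσ 2]

end Angle

section FacetCoeff

/-- The coefficient `a` for which `a • ∑ i, p i` is the orthogonal projection of an apex of a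
regular spherical simplex onto the span of its opposite facet `p`, where `p` has `n` vertices and
the edges have cosine `c`. -/
noncomputable def facetCoeff (n : ℕ) (c : ℝ) : ℝ := c / (1 - c + n * c)

variable {n : ℕ} {c : ℝ}

lemma facetCoeff_nonneg (hc₀ : 0 ≤ c) (hc₁ : c ≤ 1) : 0 ≤ facetCoeff n c :=
  div_nonneg hc₀ (add_nonneg (sub_nonneg.mpr hc₁) (by positivity))

lemma facetCoeff_mul_cancel (hc₀ : 0 ≤ c) (hc₁ : c < 1) :
    facetCoeff n c * (1 - c + n * c) = c :=
  div_mul_cancel₀ _ (add_pos_of_pos_of_nonneg (sub_pos.mpr hc₁) (by positivity)).ne'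

lemma natCast_mul_facetCoeff_le_one (hc₀ : 0 ≤ c) (hc₁ : c ≤ 1) : n * facetCoeff n c ≤ 1 := by
  have hden : 0 ≤ 1 - c + n * c := add_nonneg (sub_nonneg.mpr hc₁) (by positivity)
  rw [facetCoeff, ← mul_div_assoc]
  exact div_le_one_of_le₀ (by linarith) hden

end FacetCoeff

section RegularSimplex

variable {ι E : Type*} [NormedAddCommGroup E] [InnerProductSpace ℝ E]

/-- The points `p i` are the vertices of a regular spherical simplex. Its edge length is recorded
through its cosine `c`, the common inner product of distinct vertices. -/
structure IsRegularSphericalSimplex (p : ι → E) (c : ℝ) : Prop where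
  norm_eq_one : ∀ i, ‖p i‖ = 1
  inner_eq : ∀ i j, i ≠ j → ⟪p i, p j⟫ = c

/-- The unit vector `x` completes the facet `p` to a regular spherical simplex whose edge length has
cosine `c`. -/
structure IsApex (p : ι → E) (c : ℝ) (x : E) : Prop where
  norm_eq_one : ‖x‖ = 1
  inner_eq : ∀ i, ⟪p i, x⟫ = c

/-- The component of `x` orthogonal to the span of the facet `p`, which is the altitude from the
apex `x` in the Euclidean simplex with vertices `0`, `p i` and `x`. -/
noncomputable def altitude (p : ι → E) [(span ℝ (range p)).HasOrthogonalProjection] (x : E) : E :=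
  (span ℝ (range p))ᗮ.starProjection x

variable {p q : ι → E} {c ε δ : ℝ} {m x y : E}

lemma IsRegularSphericalSimplex.of_arccos_inner_eq {θ : ℝ} (hp : ∀ i, ‖p i‖ = 1)
    (h : ∀ i j, i ≠ j → Real.arccos ⟪p i, p j⟫ = θ) :
    IsRegularSphericalSimplex p (Real.cos θ) where
  norm_eq_one := hp
  inner_eq i j hij := inner_eq_cos_of_arccos_inner_eq (hp i) (hp j) (h i j hij)

lemma IsApex.of_arccos_inner_eq {θ : ℝ} (hp : ∀ i, ‖p i‖ = 1) (hx : ‖x‖ = 1)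
    (h : ∀ i, Real.arccos ⟪p i, x⟫ = θ) : IsApex p (Real.cos θ) x where
  norm_eq_one := hx
  inner_eq i := inner_eq_cos_of_arccos_inner_eq (hp i) hx (h i)

lemma mem_orthogonal_span_range (h : ∀ i, ⟪p i, x⟫ = 0) : x ∈ (span ℝ (range p))ᗮ := by
  have hortho : span ℝ (range p) ⟂ span ℝ {x} := isOrtho_span.mpr <| by
    rintro _ ⟨i, rfl⟩ _ rfl
    exact h i
  exact hortho.symm (mem_span_singleton_self x)

section Projection

variable [(span ℝ (range p)).HasOrthogonalProjection]

lemma altitude_mem_orthogonal : altitude p x ∈ (span ℝ (range p))ᗮ :=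
  starProjection_apply_mem _ x

lemma altitude_eq_sub : altitude p x = x - (span ℝ (range p)).starProjection x :=
  starProjection_orthogonal_val x

lemma reflection_eq_starProjection_sub_altitude :
    (span ℝ (range p)).reflection x = (span ℝ (range p)).starProjection x - altitude p x := by
  rw [Submodule.reflection_apply, altitude_eq_sub, two_smul]
  abel

lemma norm_sq_eq_norm_starProjection_sq_add_norm_altitude_sq :
    ‖x‖ ^ 2 = ‖(span ℝ (range p)).starProjection x‖ ^ 2 + ‖altitude p x‖ ^ 2 :=
  norm_sq_eq_add_norm_sq_starProjection x _

namespace IsApex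

lemma norm_altitude_le_one (hx : IsApex p c x) : ‖altitude p x‖ ≤ 1 :=
  (norm_starProjection_apply_le _ _).trans_eq hx.norm_eq_one

lemma reflection (hx : IsApex p c x) : IsApex p c ((span ℝ (range p)).reflection x) where
  norm_eq_one := by rw [LinearIsometryEquiv.norm_map, hx.norm_eq_one]
  inner_eq i := by
    rw [← reflection_mem_subspace_eq_self (subset_span (mem_range_self i) : p i ∈ span ℝ (range p)),
      LinearIsometryEquiv.inner_map_map, hx.inner_eq]

end IsApex

end Projection

section Fintype

variable [Fintype ι]

namespace IsRegularSphericalSimplex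

lemma inner_sum_smul (hp : IsRegularSphericalSimplex p c) (i : ι) (α : ι → ℝ) :
    ⟪p i, ∑ j, α j • p j⟫ = (1 - c) * α i + c * ∑ j, α j := by
  classical
  have hterm (j : ι) : ⟪p i, α j • p j⟫ = (if i = j then (1 - c) * α j else 0) + c * α j := by
    rw [inner_smul_right]
    split_ifs with hij
    · rw [← hij, real_inner_self_eq_norm_sq, hp.norm_eq_one]
      ring
    · rw [hp.inner_eq i j hij]
      ring
  simp [inner_sum, hterm, Finset.sum_add_distrib, Finset.mul_sum]

lemma mul_sum_sq_le_norm_sum_smul_sq (hp : IsRegularSphericalSimplex p c) (hc₀ : 0 ≤ c)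
    (α : ι → ℝ) : (1 - c) * ∑ i, α i ^ 2 ≤ ‖∑ i, α i • p i‖ ^ 2 := by
  have hgram : ‖∑ i, α i • p i‖ ^ 2 = (1 - c) * ∑ i, α i ^ 2 + c * (∑ i, α i) ^ 2 := by
    rw [← real_inner_self_eq_norm_sq, sum_inner, sq (∑ i, α i), Finset.sum_mul, Finset.mul_sum,
      Finset.mul_sum, ← Finset.sum_add_distrib]
    refine Finset.sum_congr rfl fun i _ ↦ ?_
    rw [real_inner_smul_left, hp.inner_sum_smul]
    ring
  rw [hgram]
  exact le_add_of_nonneg_right (by positivity)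

variable [(span ℝ (range p)).HasOrthogonalProjection]

lemma mul_norm_starProjection_sq_le (hp : IsRegularSphericalSimplex p c) (hc₀ : 0 ≤ c)
    (hc₁ : c ≤ 1) (m : E) :
    (1 - c) * ‖(span ℝ (range p)).starProjection m‖ ^ 2 ≤ ∑ i, ⟪p i, m⟫ ^ 2 := by
  set z := (span ℝ (range p)).starProjection m with hz
  obtain ⟨α, hα⟩ := mem_span_range_iff_exists_fun ℝ |>.mp <|
    (span ℝ (range p)).starProjection_apply_mem m
  rw [← hz] at hα
  have hzm : ‖z‖ ^ 2 = ∑ i, α i * ⟪p i, m⟫ := by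
    have hzz : ⟪z, m⟫ = ‖z‖ ^ 2 := re_inner_starProjection_eq_normSq (span ℝ (range p)) m
    rw [← hzz, ← hα, sum_inner]
    simp only [real_inner_smul_left]
  have hlow : (1 - c) * ∑ i, α i ^ 2 ≤ ‖z‖ ^ 2 := hα ▸ hp.mul_sum_sq_le_norm_sum_smul_sq hc₀ α
  have : 0 ≤ 1 - c := sub_nonneg.mpr hc₁
  obtain hz0 | hzpos := (sq_nonneg ‖z‖).eq_or_lt
  · rw [← hz0, mul_zero]
    positivity
  refine le_of_mul_le_mul_right ?_ hzpos
  calc (1 - c) * ‖z‖ ^ 2 * ‖z‖ ^ 2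
      = (1 - c) * (∑ i, α i * ⟪p i, m⟫) ^ 2 := by rw [← hzm]; ring
    _ ≤ (1 - c) * ((∑ i, α i ^ 2) * ∑ i, ⟪p i, m⟫ ^ 2) := by
      gcongr
      exact Finset.sum_mul_sq_le_sq_mul_sq _ _ _
    _ = ((1 - c) * ∑ i, α i ^ 2) * ∑ i, ⟪p i, m⟫ ^ 2 := by ring
    _ ≤ ‖z‖ ^ 2 * ∑ i, ⟪p i, m⟫ ^ 2 := by gcongr
    _ = (∑ i, ⟪p i, m⟫ ^ 2) * ‖z‖ ^ 2 := mul_comm _ _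

lemma mul_norm_starProjection_sq_le_card_mul_sq (hp : IsRegularSphericalSimplex p c) (hc₀ : 0 ≤ c)
    (hc₁ : c ≤ 1) (hpm : ∀ i, |⟪p i, m⟫| ≤ ε) :
    (1 - c) * ‖(span ℝ (range p)).starProjection m‖ ^ 2 ≤ Fintype.card ι * ε ^ 2 :=
  calc _ ≤ ∑ i, ⟪p i, m⟫ ^ 2 := hp.mul_norm_starProjection_sq_le hc₀ hc₁ m
    _ ≤ ∑ _i : ι, ε ^ 2 := Finset.sum_le_sum fun i _ ↦ sq_le_sq.mpr <| (hpm i).trans (le_abs_self ε)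
    _ = Fintype.card ι * ε ^ 2 := by simp

end IsRegularSphericalSimplex

namespace IsApex

variable [(span ℝ (range p)).HasOrthogonalProjection]

lemma starProjection_eq (hp : IsRegularSphericalSimplex p c) (hc₀ : 0 ≤ c) (hc₁ : c < 1)
    (hx : IsApex p c x) :
    (span ℝ (range p)).starProjection x = facetCoeff (Fintype.card ι) c • ∑ i, p i := by
  refine eq_starProjection_of_mem_orthogonal
    (smul_mem _ _ <| sum_mem fun i _ ↦ subset_span <| mem_range_self i)
    (mem_orthogonal_span_range fun i ↦ ?_)
  have hsum := hp.inner_sum_smul i fun _ ↦ 1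
  simp only [one_smul, mul_one, Finset.sum_const, Finset.card_univ, nsmul_eq_mul] at hsum
  rw [inner_sub_right, inner_smul_right, hx.inner_eq, hsum, mul_comm c,
    facetCoeff_mul_cancel hc₀ hc₁, sub_self]

lemma norm_altitude_sq (hp : IsRegularSphericalSimplex p c) (hc₀ : 0 ≤ c) (hc₁ : c < 1)
    (hx : IsApex p c x) :
    ‖altitude p x‖ ^ 2 = 1 - Fintype.card ι * facetCoeff (Fintype.card ι) c * c := by
  have hpyth := norm_sq_eq_norm_starProjection_sq_add_norm_altitude_sq (p := p) (x := x)
  have hproj : ‖(span ℝ (range p)).starProjection x‖ ^ 2 =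
      Fintype.card ι * facetCoeff (Fintype.card ι) c * c := by
    have hself : ⟪(span ℝ (range p)).starProjection x, x⟫ =
        ‖(span ℝ (range p)).starProjection x‖ ^ 2 :=
        re_inner_starProjection_eq_normSq (span ℝ (range p)) x
    rw [← hself, hx.starProjection_eq hp hc₀ hc₁, real_inner_smul_left, sum_inner]
    simp only [hx.inner_eq, Finset.sum_const, Finset.card_univ, nsmul_eq_mul]
    ring
  rw [hx.norm_eq_one] at hpyth
  linarith

end IsApex

end Fintype

section Finite

variable [Finite ι]

lemma IsRegularSphericalSimplex.linearIndependent (hp : IsRegularSphericalSimplex p c)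
    (hc₀ : 0 ≤ c) (hc₁ : c < 1) : LinearIndependent ℝ p := by
  cases nonempty_fintype ι
  refine Fintype.linearIndependent_iff.mpr fun α hα i ↦ ?_
  have hle := hp.mul_sum_sq_le_norm_sum_smul_sq hc₀ α
  rw [hα, norm_zero, zero_pow two_ne_zero] at hle
  have hsum : ∑ i, α i ^ 2 = 0 :=
    le_antisymm (nonpos_of_mul_nonpos_right hle (sub_pos.mpr hc₁)) (by positivity)
  exact pow_eq_zero_iff two_ne_zero |>.mp <|
    (Finset.sum_eq_zero_iff_of_nonneg fun _ _ ↦ sq_nonneg _).mp hsum i (Finset.mem_univ i)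

section OneFacet

variable [(span ℝ (range p)).HasOrthogonalProjection]

lemma IsApex.one_sub_le_norm_altitude_sq (hp : IsRegularSphericalSimplex p c) (hc₀ : 0 ≤ c)
    (hc₁ : c < 1) (hx : IsApex p c x) :
    1 - c ≤ ‖altitude p x‖ ^ 2 := by
  cases nonempty_fintype ι
  rw [hx.norm_altitude_sq hp hc₀ hc₁]
  linarith [mul_le_mul_of_nonneg_right
    (natCast_mul_facetCoeff_le_one (n := Fintype.card ι) hc₀ hc₁.le) hc₀]

lemma IsApex.reflection_ne (hp : IsRegularSphericalSimplex p c) (hc₀ : 0 ≤ c) (hc₁ : c < 1)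
    (hx : IsApex p c x) : (span ℝ (range p)).reflection x ≠ x := by
  intro h
  have hle := hx.one_sub_le_norm_altitude_sq hp hc₀ hc₁
  rw [altitude_eq_sub, starProjection_eq_self_iff.mpr ((reflection_eq_self_iff x).mp h),
    sub_self, norm_zero] at hle
  linarith

lemma IsApex.neg_two_mul_le_inner_altitude (hp : IsRegularSphericalSimplex p c) (hc₀ : 0 ≤ c)
    (hc₁ : c < 1) (hx : IsApex p c x) (hε : 0 ≤ ε) (hpm : ∀ i, ⟪p i, m⟫ ≤ ε)
    (hxm : -ε ≤ ⟪x, m⟫) : -(2 * ε) ≤ ⟪altitude p x, m⟫ := by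
  cases nonempty_fintype ι
  have hsum : ∑ i, ⟪p i, m⟫ ≤ Fintype.card ι * ε := by
    simpa using Finset.sum_le_card_nsmul Finset.univ _ ε fun i _ ↦ hpm i
  have hproj : ⟪(span ℝ (range p)).starProjection x, m⟫ ≤ ε := by
    rw [hx.starProjection_eq hp hc₀ hc₁, real_inner_smul_left, sum_inner]
    calc _ ≤ facetCoeff (Fintype.card ι) c * (Fintype.card ι * ε) :=
          mul_le_mul_of_nonneg_left hsum (facetCoeff_nonneg hc₀ hc₁.le)
      _ = Fintype.card ι * facetCoeff (Fintype.card ι) c * ε := by ring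
      _ ≤ ε := mul_le_of_le_one_left hε (natCast_mul_facetCoeff_le_one hc₀ hc₁.le)
  rw [altitude_eq_sub, inner_sub_left]
  linarith

end OneFacet

section TwoFacets

variable [(span ℝ (range p)).HasOrthogonalProjection] [(span ℝ (range q)).HasOrthogonalProjection]

lemma norm_starProjection_sub_le (hp : IsRegularSphericalSimplex p c)
    (hq : IsRegularSphericalSimplex q c) (hc₀ : 0 ≤ c) (hc₁ : c < 1) (hx : IsApex p c x)
    (hy : IsApex q c y) (hδ : 0 ≤ δ) (hqp : ∀ i, ‖q i - p i‖ ≤ δ) :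
    ‖(span ℝ (range q)).starProjection y - (span ℝ (range p)).starProjection x‖ ≤ δ := by
  cases nonempty_fintype ι
  rw [hx.starProjection_eq hp hc₀ hc₁, hy.starProjection_eq hq hc₀ hc₁, ← smul_sub,
    ← Finset.sum_sub_distrib, norm_smul, Real.norm_of_nonneg (facetCoeff_nonneg hc₀ hc₁.le)]
  calc facetCoeff (Fintype.card ι) c * ‖∑ i, (q i - p i)‖
      ≤ facetCoeff (Fintype.card ι) c * (Fintype.card ι * δ) := by
        refine mul_le_mul_of_nonneg_left ?_ (facetCoeff_nonneg hc₀ hc₁.le)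
        simpa using norm_sum_le_of_le Finset.univ fun i _ ↦ hqp i
    _ = Fintype.card ι * facetCoeff (Fintype.card ι) c * δ := by ring
    _ ≤ δ := mul_le_of_le_one_left hδ (natCast_mul_facetCoeff_le_one hc₀ hc₁.le)

lemma norm_altitude_eq (hp : IsRegularSphericalSimplex p c) (hq : IsRegularSphericalSimplex q c)
    (hc₀ : 0 ≤ c) (hc₁ : c < 1) (hx : IsApex p c x) (hy : IsApex q c y) :
    ‖altitude p x‖ = ‖altitude q y‖ := by
  cases nonempty_fintype ι
  rw [← sq_eq_sq₀ (norm_nonneg _) (norm_nonneg _), hx.norm_altitude_sq hp hc₀ hc₁,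
    hy.norm_altitude_sq hq hc₀ hc₁]

end TwoFacets

end Finite

variable [Fintype ι]

section Altitude

variable [FiniteDimensional ℝ E]

lemma IsRegularSphericalSimplex.finrank_orthogonal_span_range (hp : IsRegularSphericalSimplex p c)
    (hc₀ : 0 ≤ c) (hc₁ : c < 1) {k : ℕ} (hE : finrank ℝ E = Fintype.card ι + k) :
    finrank ℝ (span ℝ (range p))ᗮ = k :=
  finrank_add_finrank_orthogonal' <| by
    rw [finrank_span_eq_card (hp.linearIndependent hc₀ hc₁), hE]

lemma IsApex.inner_altitude_nonneg (hE : finrank ℝ E = Fintype.card ι + 1)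
    (hp : IsRegularSphericalSimplex p c) (hc₀ : 0 ≤ c) (hc₁ : c < 1) (hx : IsApex p c x)
    (hm : ‖m‖ = 1) (hε : 0 ≤ ε) (hεc : (Fintype.card ι + 4) * ε ^ 2 < 1 - c)
    (hpm : ∀ i, |⟪p i, m⟫| ≤ ε) (hxm : -ε ≤ ⟪x, m⟫) :
    0 ≤ ⟪altitude p x, m⟫ := by
  have hK : finrank ℝ (span ℝ (range p))ᗮ = 1 := hp.finrank_orthogonal_span_range hc₀ hc₁ hE
  have hlow := hx.neg_two_mul_le_inner_altitude hp hc₀ hc₁ hε (fun i ↦ (abs_le.mp (hpm i)).2) hxm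
  have hproj := hp.mul_norm_starProjection_sq_le_card_mul_sq hc₀ hc₁.le hpm
  have hpyth := norm_sq_eq_norm_starProjection_sq_add_norm_altitude_sq (p := p) (x := m)
  have hsq : (1 - c) * ‖altitude p m‖ ^ 2 ≤ ⟪altitude p x, m⟫ ^ 2 := by
    rw [inner_sq_eq_of_finrank_eq_one hK altitude_mem_orthogonal]
    exact mul_le_mul_of_nonneg_right (hx.one_sub_le_norm_altitude_sq hp hc₀ hc₁) (sq_nonneg _)
  by_contra! hneg
  have hup : ⟪altitude p x, m⟫ ^ 2 ≤ (2 * ε) ^ 2 := sq_le_sq' hlow (by linarith)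
  have hsplit : (1 - c) * ‖altitude p m‖ ^ 2 =
      (1 - c) - (1 - c) * ‖(span ℝ (range p)).starProjection m‖ ^ 2 := by
    rw [hm] at hpyth
    rw [← mul_one_sub]
    congr 1
    linarith
  linarith

lemma IsApex.mul_norm_altitude_sub_sq_le (hE : finrank ℝ E = Fintype.card ι + 1)
    (hp : IsRegularSphericalSimplex p c) (hc₀ : 0 ≤ c) (hc₁ : c < 1) (hx : IsApex p c x)
    (hm : ‖m‖ = 1) (hε : 0 ≤ ε) (hεc : (Fintype.card ι + 4) * ε ^ 2 < 1 - c)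
    (hpm : ∀ i, |⟪p i, m⟫| ≤ ε) (hxm : -ε ≤ ⟪x, m⟫) :
    (1 - c) * ‖altitude p x - ‖altitude p x‖ • m‖ ^ 2 ≤ 2 * Fintype.card ι * ε ^ 2 := by
  have hK : finrank ℝ (span ℝ (range p))ᗮ = 1 := hp.finrank_orthogonal_span_range hc₀ hc₁ hE
  have : 0 ≤ 1 - c := sub_nonneg.mpr hc₁.le
  have hside := hx.inner_altitude_nonneg hE hp hc₀ hc₁ hm hε hεc hpm hxm
  calc (1 - c) * ‖altitude p x - ‖altitude p x‖ • m‖ ^ 2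
      ≤ (1 - c) * (2 * ‖altitude p x‖ ^ 2 * ‖(span ℝ (range p)).starProjection m‖ ^ 2) := by
        gcongr
        exact norm_sub_norm_smul_sq_le hK hm altitude_mem_orthogonal hside
    _ ≤ (1 - c) * (2 * 1 ^ 2 * ‖(span ℝ (range p)).starProjection m‖ ^ 2) := by
        gcongr
        exact hx.norm_altitude_le_one
    _ = 2 * ((1 - c) * ‖(span ℝ (range p)).starProjection m‖ ^ 2) := by ring
    _ ≤ 2 * Fintype.card ι * ε ^ 2 := by
        linarith [hp.mul_norm_starProjection_sq_le_card_mul_sq hc₀ hc₁.le hpm]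

lemma IsApex.norm_altitude_sub_le (hE : finrank ℝ E = Fintype.card ι + 1)
    (hp : IsRegularSphericalSimplex p c) (hc₀ : 0 ≤ c) (hc₁ : c < 1) (hx : IsApex p c x)
    (hm : ‖m‖ = 1) (hε : 0 ≤ ε) (hεc : (Fintype.card ι + 4) * ε ^ 2 < 1 - c)
    (hpm : ∀ i, |⟪p i, m⟫| ≤ ε) (hxm : -ε ≤ ⟪x, m⟫) :
    ‖altitude p x - ‖altitude p x‖ • m‖ ≤ √(2 * Fintype.card ι / (1 - c)) * ε := by
  have hc : 0 < 1 - c := sub_pos.mpr hc₁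
  refine (sq_le_sq₀ (norm_nonneg _) (by positivity)).mp ?_
  rw [mul_pow, Real.sq_sqrt (by positivity), div_mul_eq_mul_div, le_div_iff₀' hc]
  exact hx.mul_norm_altitude_sub_sq_le hE hp hc₀ hc₁ hm hε hεc hpm hxm

lemma norm_altitude_add_altitude_le (hE : finrank ℝ E = Fintype.card ι + 1)
    (hp : IsRegularSphericalSimplex p c) (hq : IsRegularSphericalSimplex q c) (hc₀ : 0 ≤ c)
    (hc₁ : c < 1) (hx : IsApex p c x) (hy : IsApex q c y) (hm : ‖m‖ = 1) (hε : 0 ≤ ε)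
    (hεc : (Fintype.card ι + 4) * ε ^ 2 < 1 - c) (hpm : ∀ i, |⟪p i, m⟫| ≤ ε)
    (hqm : ∀ i, |⟪q i, m⟫| ≤ ε) (hxm : -ε ≤ ⟪x, m⟫) (hym : ⟪y, m⟫ ≤ ε) :
    ‖altitude q y + altitude p x‖ ≤ 2 * (√(2 * Fintype.card ι / (1 - c)) * ε) := by
  have hx' := hx.norm_altitude_sub_le hE hp hc₀ hc₁ hm hε hεc hpm hxm
  have hy' := hy.norm_altitude_sub_le (m := -m) hE hq hc₀ hc₁ (by rwa [norm_neg]) hε hεc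
    (by simpa using hqm) (by simpa using hym)
  calc ‖altitude q y + altitude p x‖
      = ‖(altitude q y - ‖altitude q y‖ • -m) + (altitude p x - ‖altitude p x‖ • m)‖ := by
        rw [norm_altitude_eq hp hq hc₀ hc₁ hx hy, smul_neg]
        congr 1
        abel
    _ ≤ _ := (norm_add_le_of_le hy' hx').trans_eq (two_mul _).symm

lemma norm_sub_reflection_le (hE : finrank ℝ E = Fintype.card ι + 1)
    (hp : IsRegularSphericalSimplex p c) (hq : IsRegularSphericalSimplex q c) (hc₀ : 0 ≤ c)
    (hc₁ : c < 1) (hx : IsApex p c x) (hy : IsApex q c y) (hδ : 0 ≤ δ)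
    (hqp : ∀ i, ‖q i - p i‖ ≤ δ) (hm : ‖m‖ = 1) (hε : 0 ≤ ε)
    (hεc : (Fintype.card ι + 4) * ε ^ 2 < 1 - c) (hpm : ∀ i, |⟪p i, m⟫| ≤ ε)
    (hqm : ∀ i, |⟪q i, m⟫| ≤ ε) (hxm : -ε ≤ ⟪x, m⟫) (hym : ⟪y, m⟫ ≤ ε) :
    ‖y - (span ℝ (range p)).reflection x‖ ≤ δ + 2 * (√(2 * Fintype.card ι / (1 - c)) * ε) := by
  have hy_eq : y = (span ℝ (range q)).starProjection y + altitude q y := by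
    rw [altitude_eq_sub, add_sub_cancel]
  calc ‖y - (span ℝ (range p)).reflection x‖
      = ‖((span ℝ (range q)).starProjection y - (span ℝ (range p)).starProjection x) +
          (altitude q y + altitude p x)‖ := by
        rw [reflection_eq_starProjection_sub_altitude]
        nth_rw 1 [hy_eq]
        congr 1
        abel
    _ ≤ _ := norm_add_le_of_le (norm_starProjection_sub_le hp hq hc₀ hc₁ hx hy hδ hqp)
        (norm_altitude_add_altitude_le hE hp hq hc₀ hc₁ hx hy hm hε hεc hpm hqm hxm hym)

end Altitude

section Stability

variable [FiniteDimensional ℝ E] [Nonempty ι] {φ : ℝ} {u : ι → E} {u₀ u₁ z : E}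

lemma arccos_inner_reflection_le (hE : finrank ℝ E = Fintype.card ι + 1)
    (hφ : φ ∈ Ioc 0 (Real.pi / 4)) (hp : IsRegularSphericalSimplex p (Real.cos (2 * φ)))
    (hq : IsRegularSphericalSimplex q (Real.cos (2 * φ))) (hx : IsApex p (Real.cos (2 * φ)) x)
    (hy : IsApex q (Real.cos (2 * φ)) y) (hqp : ∀ i, ‖q i - p i‖ ≤ 2 * ε) (hm : ‖m‖ = 1)
    (hpm : ∀ i, |⟪p i, m⟫| ≤ ε) (hqm : ∀ i, |⟪q i, m⟫| ≤ ε) (hxm : -ε ≤ ⟪x, m⟫)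
    (hym : ⟪y, m⟫ ≤ ε) (hz : ‖z‖ = 1) (hzy : ‖z - y‖ ≤ ε) :
    Real.arccos ⟪z, (span ℝ (range p)).reflection x⟫ ≤
      8 * √(Fintype.card ι) / Real.sin φ * ε := by
  have hσ := sin_pos_of_le_pi_div_four hφ.1 hφ.2
  have hε : 0 ≤ ε := (norm_nonneg _).trans hzy
  have hn : (1 : ℝ) ≤ Fintype.card ι := mod_cast Fintype.card_pos
  set η := √(Fintype.card ι) / Real.sin φ * ε
  have hη8 : 8 * √(Fintype.card ι) / Real.sin φ * ε = 8 * η := by ring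
  rw [hη8]
  obtain hlarge | hsmall := le_or_gt (1 / 2) η
  · linarith [Real.arccos_le_pi ⟪z, (span ℝ (range p)).reflection x⟫, Real.pi_le_four]
  have hεη : ε ≤ η := le_mul_of_one_le_left hε <|
    (one_le_div hσ).mpr <| (Real.sin_le_one φ).trans (Real.one_le_sqrt.mpr hn)
  have hsqrt : √(2 * Fintype.card ι / (1 - Real.cos (2 * φ))) * ε = η := by
    rw [one_sub_cos_two_mul, mul_div_mul_left _ _ two_ne_zero, Real.sqrt_div' _ (sq_nonneg _),
      Real.sqrt_sq hσ.le]
  have hεc : (Fintype.card ι + 4) * ε ^ 2 < 1 - Real.cos (2 * φ) :=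
    (add_four_mul_sq_lt_two_mul_sq hn hσ hε hsmall).trans_eq (one_sub_cos_two_mul φ).symm
  have hchord : ‖z - (span ℝ (range p)).reflection x‖ ≤ 5 * η := by
    have hreflection := norm_sub_reflection_le hE hp hq
      (cos_two_mul_nonneg_of_le_pi_div_four hφ.1.le hφ.2)
      (cos_two_mul_lt_one_of_sin_ne_zero hσ.ne') hx hy (by positivity) hqp hm hε hεc hpm hqm hxm hym
    rw [hsqrt] at hreflection
    linarith [norm_sub_le_norm_sub_add_norm_sub z y ((span ℝ (range p)).reflection x)]
  calc Real.arccos ⟪z, (span ℝ (range p)).reflection x⟫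
      ≤ Real.pi / 2 * ‖z - (span ℝ (range p)).reflection x‖ :=
        arccos_inner_le_pi_div_two_mul_norm_sub hz hx.reflection.norm_eq_one
    _ ≤ 3.2 / 2 * (5 * η) := by
        gcongr
        linarith [Real.pi_lt_d2]
    _ = 8 * η := by ring

lemma arccos_inner_reflection_le_of_separated (hE : finrank ℝ E = Fintype.card ι + 1)
    (hφ : φ ∈ Ioc 0 (Real.pi / 4)) (hp : IsRegularSphericalSimplex p (Real.cos (2 * φ)))
    (hq : IsRegularSphericalSimplex q (Real.cos (2 * φ))) (hx : IsApex p (Real.cos (2 * φ)) x)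
    (hy : IsApex q (Real.cos (2 * φ)) y) (hu : ∀ i, ‖u i‖ = 1) (hu₀ : ‖u₀‖ = 1) (hu₁ : ‖u₁‖ = 1)
    (hup : ∀ i, Real.arccos ⟪u i, p i⟫ ≤ ε) (huq : ∀ i, Real.arccos ⟪u i, q i⟫ ≤ ε)
    (hux : Real.arccos ⟪u₀, x⟫ ≤ ε) (huy : Real.arccos ⟪u₁, y⟫ ≤ ε) (hm : m ≠ 0)
    (hmu : ∀ i, ⟪m, u i⟫ = 0) (hmu₀ : 0 ≤ ⟪m, u₀⟫) (hmu₁ : ⟪m, u₁⟫ ≤ 0) :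
    Real.arccos ⟪u₁, (span ℝ (range p)).reflection x⟫ ≤
      8 * √(Fintype.card ι) / Real.sin φ * ε := by
  wlog hm1 : ‖m‖ = 1 generalizing m
  · refine this (m := ‖m‖⁻¹ • m) (by simpa) (fun i ↦ ?_) ?_ ?_ (norm_smul_inv_norm hm)
    · rw [real_inner_smul_left, hmu, mul_zero]
    · rw [real_inner_smul_left]
      positivity
    · rw [real_inner_smul_left]
      exact mul_nonpos_of_nonneg_of_nonpos (by positivity) hmu₁
  replace hup (i : ι) := (norm_sub_le_arccos_inner (hu i) (hp.norm_eq_one i)).trans (hup i)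
  replace huq (i : ι) := (norm_sub_le_arccos_inner (hu i) (hq.norm_eq_one i)).trans (huq i)
  replace hux := (norm_sub_le_arccos_inner hu₀ hx.norm_eq_one).trans hux
  replace huy := (norm_sub_le_arccos_inner hu₁ hy.norm_eq_one).trans huy
  have hqp (i : ι) : ‖q i - p i‖ ≤ 2 * ε := by
    linarith [norm_sub_le_norm_sub_add_norm_sub (q i) (u i) (p i), hup i,
      norm_sub_rev (q i) (u i) ▸ huq i]
  have hpm (i : ι) : |⟪p i, m⟫| ≤ ε := by
    simpa [real_inner_comm m, hmu] using abs_inner_sub_inner_le hm1 (hup i)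
  have hqm (i : ι) : |⟪q i, m⟫| ≤ ε := by
    simpa [real_inner_comm m, hmu] using abs_inner_sub_inner_le hm1 (huq i)
  rw [real_inner_comm] at hmu₀ hmu₁
  have hxm : -ε ≤ ⟪x, m⟫ := by linarith [(abs_le.mp (abs_inner_sub_inner_le hm1 hux)).2]
  have hym : ⟪y, m⟫ ≤ ε := by linarith [(abs_le.mp (abs_inner_sub_inner_le hm1 huy)).1]
  exact arccos_inner_reflection_le hE hφ hp hq hx hy hqp hm1 hpm hqm hxm hym hu₁ huy

end Stability

end RegularSimplex

theorem close_simplices_general {E : Type*} [NormedAddCommGroup E] [InnerProductSpace ℝ E] {d : ℕ}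
    (hd : 2 ≤ d) (hE : finrank ℝ E = d) {φ : ℝ} (hφ : φ ∈ Ioc (0 : ℝ) (Real.pi / 4)) {ε : ℝ}
    {u : Fin (d + 1) → E} (hu : ∀ i, ‖u i‖ = 1)
    (hsep : ∃ m ∈ (span ℝ (u '' {i : Fin (d + 1) | 1 ≤ (i : ℕ) ∧ (i : ℕ) ≤ d - 1}))ᗮ,
      m ≠ 0 ∧ 0 ≤ ⟪m, u 0⟫ ∧ ⟪m, u (Fin.last d)⟫ ≤ 0)
    {v : Fin (d + 1) → E} (hvunit : ∀ i : Fin (d + 1), (i : ℕ) < d → ‖v i‖ = 1)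
    (hvreg : ∀ i j : Fin (d + 1), (i : ℕ) < d → (j : ℕ) < d → i ≠ j →
      Real.arccos ⟪v i, v j⟫ = 2 * φ)
    (huv : ∀ i : Fin (d + 1), (i : ℕ) < d → Real.arccos ⟪u i, v i⟫ ≤ ε)
    {w : Fin (d + 1) → E} (hwunit : ∀ i : Fin (d + 1), 1 ≤ (i : ℕ) → ‖w i‖ = 1)
    (hwreg : ∀ i j : Fin (d + 1), 1 ≤ (i : ℕ) → 1 ≤ (j : ℕ) → i ≠ j →
      Real.arccos ⟪w i, w j⟫ = 2 * φ)
    (huw : ∀ i : Fin (d + 1), 1 ≤ (i : ℕ) → Real.arccos ⟪u i, w i⟫ ≤ ε) :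
    ∃ x : E, ‖x‖ = 1 ∧ x ≠ v 0 ∧
      (∀ i : Fin (d + 1), 1 ≤ (i : ℕ) → (i : ℕ) ≤ d - 1 → Real.arccos ⟪v i, x⟫ = 2 * φ) ∧
      Real.arccos ⟪u (Fin.last d), x⟫ ≤ 8 * √(d - 1) / Real.sin φ * ε := by
  obtain ⟨m, hm, hm0, hmu₀, hmu₁⟩ := hsep
  have : FiniteDimensional ℝ E := FiniteDimensional.of_finrank_pos (by omega)
  obtain ⟨n, rfl⟩ : ∃ n, d = n + 1 := ⟨d - 1, by omega⟩
  have : NeZero n := ⟨by omega⟩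
  let e (i : Fin n) : Fin (n + 2) := i.castSucc.succ
  have he_inj {i j : Fin n} (hij : i ≠ j) : e i ≠ e j := by simpa [e] using hij
  have he_pos (i : Fin n) : 1 ≤ (e i : ℕ) := by simp [e]
  have he_lt (i : Fin n) : (e i : ℕ) < n + 1 := by simp [e]
  have hvnorm (i : Fin n) : ‖v (e i)‖ = 1 := hvunit _ (he_lt i)
  have hwnorm (i : Fin n) : ‖w (e i)‖ = 1 := hwunit _ (he_pos i)
  have hp : IsRegularSphericalSimplex (v ∘ e) (Real.cos (2 * φ)) := .of_arccos_inner_eq hvnorm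
    fun i j hij ↦ hvreg _ _ (he_lt i) (he_lt j) (he_inj hij)
  have hq : IsRegularSphericalSimplex (w ∘ e) (Real.cos (2 * φ)) := .of_arccos_inner_eq hwnorm
    fun i j hij ↦ hwreg _ _ (he_pos i) (he_pos j) (he_inj hij)
  have hx : IsApex (v ∘ e) (Real.cos (2 * φ)) (v 0) := .of_arccos_inner_eq hvnorm
    (hvunit 0 (by simp)) fun i ↦ hvreg _ _ (he_lt i) (by simp) (Fin.succ_ne_zero _)
  have hy : IsApex (w ∘ e) (Real.cos (2 * φ)) (w (Fin.last _)) := .of_arccos_inner_eq hwnorm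
    (hwunit _ (by simp)) fun i ↦ hwreg _ _ (he_pos i) (by simp) (Fin.ne_of_lt (he_lt i))
  have hmu (i : Fin n) : ⟪m, u (e i)⟫ = 0 := (mem_orthogonal' _ m).mp hm _ <|
    subset_span ⟨e i, ⟨he_pos i, Nat.le_of_lt_succ (he_lt i)⟩, rfl⟩
  have hne := hx.reflection_ne hp (cos_two_mul_nonneg_of_le_pi_div_four hφ.1.le hφ.2)
    (cos_two_mul_lt_one_of_sin_ne_zero (sin_pos_of_le_pi_div_four hφ.1 hφ.2).ne')
  refine ⟨_, hx.reflection.norm_eq_one, hne, fun i hi hin ↦ ?_, ?_⟩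
  · obtain ⟨j, rfl⟩ : ∃ j, e j = i := ⟨⟨i - 1, by omega⟩, Fin.ext (by simp [e]; omega)⟩
    exact (congrArg Real.arccos (hx.reflection.inner_eq j)).trans
      (Real.arccos_cos (by linarith [hφ.1]) (by linarith [hφ.2, Real.pi_pos]))
  · simpa using arccos_inner_reflection_le_of_separated (by simpa using hE) hφ hp hq hx hy
      (fun i ↦ hu (e i)) (hu 0) (hu _) (fun i ↦ huv _ (he_lt i)) (fun i ↦ huw _ (he_pos i))
      (huv 0 (by simp)) (huw _ (by simp)) hm0 hmu hmu₀ hmu₁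

/-- Gluing of close-to-regular Delone simplices: let `u_0, …, u_d` be unit vectors in
`ℝ^d` such that `u_1, …, u_{d-1}` span a `(d-1)`-dimensional subspace `L` strictly
separating `u_0` and `u_d`. If `u_0, …, u_{d-1}` are within `ε` of the vertices
`v_0, …, v_{d-1}` of a regular spherical simplex of edge length `2φ`, and
`u_1, …, u_d` are within `ε` of the vertices `w_1, …, w_d` of another one, then there
is a vertex `v_d ≠ v_0` completing `v_1, …, v_{d-1}` to a regular spherical simplex
of edge length `2φ` with `δ(u_d, v_d) ≤ (16√(d-1)/sin φ)·ε`. -/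
theorem close_simplices (d : ℕ) (hd : 3 ≤ d)
    (φ : ℝ) (hφ : φ ∈ Set.Ioc (0 : ℝ) (Real.pi / 4))
    (ε : ℝ) (hε : ε ∈ Set.Ioo (0 : ℝ) (Real.sin φ / (16 * Real.sqrt ((d : ℝ) - 1))))
    (u : Fin (d + 1) → EuclideanSpace ℝ (Fin d))
    (hu : ∀ i, ‖u i‖ = 1)
    (L : Submodule ℝ (EuclideanSpace ℝ (Fin d)))
    (hL : L = Submodule.span ℝ (u '' {i : Fin (d + 1) | 1 ≤ (i : ℕ) ∧ (i : ℕ) ≤ d - 1}))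
    (hLrank : Module.finrank ℝ L = d - 1)
    (hsep : ∃ w : EuclideanSpace ℝ (Fin d), w ∈ Lᗮ ∧ w ≠ 0 ∧
      0 < ⟪w, u 0⟫ ∧ ⟪w, u (Fin.last d)⟫ < 0)
    (v : Fin (d + 1) → EuclideanSpace ℝ (Fin d))
    (hvunit : ∀ i : Fin (d + 1), (i : ℕ) < d → ‖v i‖ = 1)
    (hvreg : ∀ i j : Fin (d + 1), (i : ℕ) < d → (j : ℕ) < d → i ≠ j →
      Real.arccos ⟪v i, v j⟫ = 2 * φ)
    (huv : ∀ i : Fin (d + 1), (i : ℕ) < d → Real.arccos ⟪u i, v i⟫ ≤ ε)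
    (w : Fin (d + 1) → EuclideanSpace ℝ (Fin d))
    (hwunit : ∀ i : Fin (d + 1), 1 ≤ (i : ℕ) → ‖w i‖ = 1)
    (hwreg : ∀ i j : Fin (d + 1), 1 ≤ (i : ℕ) → 1 ≤ (j : ℕ) → i ≠ j →
      Real.arccos ⟪w i, w j⟫ = 2 * φ)
    (huw : ∀ i : Fin (d + 1), 1 ≤ (i : ℕ) → Real.arccos ⟪u i, w i⟫ ≤ ε) :
    ∃ vd : EuclideanSpace ℝ (Fin d), ‖vd‖ = 1 ∧ vd ≠ v 0 ∧
      (∀ i : Fin (d + 1), 1 ≤ (i : ℕ) → (i : ℕ) ≤ d - 1 →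
        Real.arccos ⟪v i, vd⟫ = 2 * φ) ∧
      Real.arccos ⟪u (Fin.last d), vd⟫ ≤ (16 * Real.sqrt ((d : ℝ) - 1) / Real.sin φ) * ε := by
  subst hL
  obtain ⟨m, hm, hm0, hmu₀, hmu₁⟩ := hsep
  obtain ⟨x, hx, hxv, hvx, hux⟩ := close_simplices_general (by omega) finrank_euclideanSpace_fin hφ
    hu ⟨m, hm, hm0, hmu₀.le, hmu₁.le⟩ hvunit hvreg huv hwunit hwreg huw
  have hσ := sin_pos_of_le_pi_div_four hφ.1 hφ.2
  exact ⟨x, hx, hxv, hvx, hux.trans <| by gcongr; exacts [hε.1.le, by norm_num]⟩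
end

section
/- Let a > 0 and let T ⊂ ℝ² be a triangle (the convex hull of three affinely independent points) such that every side of T has Euclidean length at least a and the circumcenter of T (the center of the circle passing through the three vertices) lies in T. Then the area of T is at least (√3/4)·a². -/
/-!
A triangle containing its circumcenter has no obtuse angle: if the angle at `y` were obtuse, the
triangle would lie strictly beyond the circumcenter in the direction of the midpoint of `x` and `z`.
Hence the largest angle `θ` satisfies `π / 3 ≤ θ ≤ π / 2`, so that `√3 / 2 ≤ sin θ`, and the area is
half of `sin θ` times the product of the two sides meeting at that angle.
-/

open MeasureTheory EuclideanGeometry Module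
open scoped Real RealInnerProductSpace Pointwise

lemma sqrt_three_div_two_le_sin {θ : ℝ} (h₁ : π / 3 ≤ θ) (h₂ : θ ≤ 2 * π / 3) :
    √3 / 2 ≤ Real.sin θ := by
  rw [← Real.cos_pi_div_six, ← Real.cos_sub_pi_div_two, ← Real.cos_abs (θ - π / 2)]
  have hle : |θ - π / 2| ≤ π / 6 := abs_le.2 ⟨by linarith, by linarith⟩
  exact Real.cos_le_cos_of_nonneg_of_le_pi (abs_nonneg _) (by linarith [Real.pi_pos]) hle

lemma convexHull_zero_pair {𝕜 M : Type*} [Field 𝕜] [LinearOrder 𝕜] [IsStrictOrderedRing 𝕜]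
    [AddCommGroup M] [Module 𝕜 M] (u v : M) :
    convexHull 𝕜 {0, u, v} = {w | ∃ s t : 𝕜, 0 ≤ s ∧ 0 ≤ t ∧ s + t ≤ 1 ∧ s • u + t • v = w} := by
  refine Set.Subset.antisymm (convexHull_min ?_ ?_) ?_
  · rintro _ (rfl | rfl | rfl)
    · exact ⟨0, 0, by simp⟩
    · exact ⟨1, 0, by simp⟩
    · exact ⟨0, 1, by simp⟩
  · rintro _ ⟨s₁, t₁, hs₁, ht₁, hst₁, rfl⟩ _ ⟨s₂, t₂, hs₂, ht₂, hst₂, rfl⟩ a b ha hb hab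
    refine ⟨a * s₁ + b * s₂, a * t₁ + b * t₂, by positivity, by positivity, ?_, by module⟩
    calc a * s₁ + b * s₂ + (a * t₁ + b * t₂) = a * (s₁ + t₁) + b * (s₂ + t₂) := by ring
      _ ≤ a * 1 + b * 1 := by gcongr
      _ = 1 := by rw [mul_one, mul_one, hab]
  · rintro _ ⟨s, t, hs, ht, hst, rfl⟩
    have hmem := (convex_convexHull 𝕜 {0, u, v}).sum_mem (t := Finset.univ)
      (w := ![1 - s - t, s, t]) (z := ![0, u, v])
      (by simpa [Fin.forall_fin_succ, hs, ht] using le_sub_iff_add_le'.2 hst)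
      (by simp only [Fin.sum_univ_three, Matrix.cons_val]; ring)
      fun i _ ↦ subset_convexHull 𝕜 _ (by fin_cases i <;> simp)
    simpa [Fin.sum_univ_three] using hmem

lemma volume_prod_setOf_nonneg_add_le_one :
    volume {q : ℝ × ℝ | 0 ≤ q.1 ∧ 0 ≤ q.2 ∧ q.1 + q.2 ≤ 1} = ENNReal.ofReal (1 / 2) := by
  set T := {q : ℝ × ℝ | 0 ≤ q.1 ∧ 0 ≤ q.2 ∧ q.1 + q.2 ≤ 1}
  have hmeas : MeasurableSet T := by measurability
  have hslice (s : ℝ) : volume (Prod.mk s ⁻¹' T) =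
      (Set.Icc 0 1).indicator (fun s ↦ ENNReal.ofReal (1 - s)) s := by
    by_cases hs : s ∈ Set.Icc (0 : ℝ) 1
    · have : Prod.mk s ⁻¹' T = Set.Icc 0 (1 - s) := by
        ext t
        simp [T, hs.1, le_sub_iff_add_le']
      rw [this, Set.indicator_of_mem hs, Real.volume_Icc, sub_zero]
    · have : Prod.mk s ⁻¹' T = ∅ :=
        Set.eq_empty_of_forall_notMem fun t ⟨h0s, h0t, hst⟩ ↦ hs ⟨h0s, by linarith⟩
      rw [this, Set.indicator_of_notMem hs, measure_empty]
  have hint : ∫ s in Set.Icc (0 : ℝ) 1, (1 - s) = 1 / 2 := by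
    rw [integral_Icc_eq_integral_Ioc, ← intervalIntegral.integral_of_le zero_le_one,
      intervalIntegral.integral_sub (by simp) (by simp)]
    norm_num
  rw [Measure.volume_eq_prod, Measure.prod_apply hmeas, lintegral_congr hslice,
    lintegral_indicator measurableSet_Icc, ← hint, ofReal_integral_eq_lintegral_ofReal]
  · exact Continuous.integrableOn_Icc (by fun_prop)
  · filter_upwards [ae_restrict_mem measurableSet_Icc] with s hs using sub_nonneg.2 hs.2

lemma volume_euclideanSpace_setOf_nonneg_add_le_one :
    volume {q : EuclideanSpace ℝ (Fin 2) | 0 ≤ q 0 ∧ 0 ≤ q 1 ∧ q 0 + q 1 ≤ 1} =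
      ENNReal.ofReal (1 / 2) := by
  have hcoords := (volume_preserving_finTwoArrow ℝ).comp
    (EuclideanSpace.volume_preserving_symm_measurableEquiv_toLp (Fin 2))
  have hmeas : MeasurableSet {q : ℝ × ℝ | 0 ≤ q.1 ∧ 0 ≤ q.2 ∧ q.1 + q.2 ≤ 1} := by measurability
  rw [← volume_prod_setOf_nonneg_add_le_one]
  exact hcoords.measure_preimage hmeas.nullMeasurableSet

section InnerProductSpace

variable {E : Type*} [NormedAddCommGroup E] [InnerProductSpace ℝ E]

lemma normDet_constr_pair (u v : E) :
    ((EuclideanSpace.basisFun (Fin 2) ℝ).toBasis.constr ℝ ![u, v]).normDet =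
      ‖u‖ * ‖v‖ * Real.sin (InnerProductGeometry.angle u v) := by
  set f := (EuclideanSpace.basisFun (Fin 2) ℝ).toBasis.constr ℝ ![u, v] with hf
  have hbasis (i : Fin 2) : f (EuclideanSpace.basisFun (Fin 2) ℝ i) = ![u, v] i := by
    rw [hf, ← OrthonormalBasis.coe_toBasis, Basis.constr_basis]
  have hsq : f.normDet ^ 2 = ⟪u, u⟫ * ⟪v, v⟫ - ⟪u, v⟫ * ⟪u, v⟫ := by
    have hgram := f.normDet_sq_eq_det_gram (EuclideanSpace.basisFun (Fin 2) ℝ)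
    simpa only [hbasis, Matrix.det_fin_two, Matrix.gram_apply, Matrix.cons_val_zero,
      Matrix.cons_val_one, real_inner_comm u v, RCLike.ofReal_real_eq_id, id] using hgram
  rw [mul_comm, InnerProductGeometry.sin_angle_mul_norm_mul_norm, ← hsq,
    Real.sqrt_sq f.normDet_nonneg]

section Area

variable [MeasurableSpace E] [BorelSpace E]

lemma euclideanHausdorffMeasure_convexHull_zero_pair (u v : E) :
    μHE[2] (convexHull ℝ {0, u, v}) =
      ENNReal.ofReal (‖u‖ * ‖v‖ * Real.sin (InnerProductGeometry.angle u v) / 2) := by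
  set f := (EuclideanSpace.basisFun (Fin 2) ℝ).toBasis.constr ℝ ![u, v] with hf
  set T := {q : EuclideanSpace ℝ (Fin 2) | 0 ≤ q 0 ∧ 0 ≤ q 1 ∧ q 0 + q 1 ≤ 1}
  have himage : convexHull ℝ {0, u, v} = f '' T := by
    have hf_apply (q : EuclideanSpace ℝ (Fin 2)) : f q = q 0 • u + q 1 • v := by
      simp [hf, Basis.constr_apply_fintype]
    rw [convexHull_zero_pair]
    ext w
    constructor
    · rintro ⟨s, t, hs, ht, hst, rfl⟩
      exact ⟨!₂[s, t], ⟨hs, ht, hst⟩, hf_apply _⟩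
    · rintro ⟨q, ⟨h0, h1, hle⟩, rfl⟩
      exact ⟨q 0, q 1, h0, h1, hle, (hf_apply q).symm⟩
  have hscale : μHE[2] (f '' T) = ENNReal.ofReal f.normDet * volume T := by
    simpa only [finrank_euclideanSpace_fin] using
      f.euclideanHausdorffMeasure_image_eq_normDet_mul_volume T
  rw [himage, hscale, normDet_constr_pair, volume_euclideanSpace_setOf_nonneg_add_le_one,
    ← ENNReal.ofReal_mul' (by norm_num), mul_one_div]

theorem euclideanHausdorffMeasure_convexHull_triple (x y z : E) :
    μHE[2] (convexHull ℝ {x, y, z}) =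
      ENNReal.ofReal (dist x y * dist z y * Real.sin (∠ x y z) / 2) := by
  have htranslate : convexHull ℝ {x, y, z} = y +ᵥ convexHull ℝ {0, x - y, z - y} := by
    rw [← convexHull_vadd]
    simp [Set.vadd_set_insert, Set.insert_comm]
  rw [htranslate, measure_vadd, euclideanHausdorffMeasure_convexHull_zero_pair, dist_eq_norm,
    dist_eq_norm, EuclideanGeometry.angle, vsub_eq_sub, vsub_eq_sub]

lemma le_euclideanHausdorffMeasure_convexHull_triple {a : ℝ} (ha : 0 ≤ a) {x y z : E}
    (hxy : a ≤ dist x y) (hzy : a ≤ dist z y) (h₁ : π / 3 ≤ ∠ x y z) (h₂ : ∠ x y z ≤ 2 * π / 3) :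
    ENNReal.ofReal (√3 / 4 * a ^ 2) ≤ μHE[2] (convexHull ℝ {x, y, z}) := by
  rw [euclideanHausdorffMeasure_convexHull_triple]
  refine ENNReal.ofReal_le_ofReal ?_
  calc √3 / 4 * a ^ 2 = a * a * (√3 / 2) / 2 := by ring
    _ ≤ dist x y * dist z y * Real.sin (∠ x y z) / 2 := by
      gcongr
      exact sqrt_three_div_two_le_sin h₁ h₂

end Area

lemma angle_le_pi_div_two_of_mem_convexHull {x y z c : E} (hxy : dist c x = dist c y)
    (hyz : dist c y = dist c z) (hc : c ∈ convexHull ℝ {x, y, z}) : ∠ x y z ≤ π / 2 := by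
  suffices 0 ≤ ⟪x - y, z - y⟫ from
    Real.arccos_le_pi_div_two.2 (div_nonneg this (by positivity))
  by_contra! hobtuse
  have hyx : ‖y - c‖ = ‖x - c‖ := by rw [← dist_eq_norm', ← dist_eq_norm', hxy]
  have hzx : ‖z - c‖ = ‖x - c‖ := by rw [← hyx, ← dist_eq_norm', ← dist_eq_norm', hyz]
  set m := (x - c) + (z - c)
  have hm_sq : ‖m‖ ^ 2 / 2 = ‖x - c‖ ^ 2 + ⟪x - c, z - c⟫ := by
    rw [norm_add_sq_real, hzx]
    ring
  have hx : ⟪m, x - c⟫ = ‖m‖ ^ 2 / 2 := by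
    rw [hm_sq, inner_add_left, real_inner_self_eq_norm_sq, real_inner_comm]
  have hz : ⟪m, z - c⟫ = ‖m‖ ^ 2 / 2 := by
    rw [hm_sq, inner_add_left, real_inner_self_eq_norm_sq, hzx, add_comm]
  have hy : ‖m‖ ^ 2 / 2 < ⟪m, y - c⟫ := by
    have hexpand : ⟪x - y, z - y⟫ = ‖m‖ ^ 2 / 2 - ⟪m, y - c⟫ := by
      rw [hm_sq, ← hyx, inner_add_left, ← sub_sub_sub_cancel_right x y c,
        ← sub_sub_sub_cancel_right z y c, inner_sub_left (x - c),
        inner_sub_right _ (z - c), inner_sub_right _ (z - c),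
        real_inner_self_eq_norm_sq, real_inner_comm (z - c) (y - c)]
      ring
    linarith
  have hhull : convexHull ℝ {x, y, z} ⊆ {p | ‖m‖ ^ 2 / 2 + ⟪m, c⟫ ≤ ⟪m, p⟫} := by
    refine convexHull_min ?_ (convex_halfSpace_ge (innerₛₗ ℝ m).isLinear _)
    simp only [inner_sub_right] at hx hy hz
    rintro _ (rfl | rfl | rfl) <;> simp only [Set.mem_ofPred_eq] <;> linarith
  have hm_zero : m = 0 := by
    have : ‖m‖ ^ 2 / 2 + ⟪m, c⟫ ≤ ⟪m, c⟫ := hhull hc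
    rw [← norm_eq_zero, ← sq_eq_zero_iff]
    exact le_antisymm (by linarith) (sq_nonneg _)
  simp [hm_zero] at hy

lemma exists_pi_div_three_le_angle {V P : Type*} [NormedAddCommGroup V] [InnerProductSpace ℝ V]
    [MetricSpace P] [NormedAddTorsor V P] (x y z : P) :
    π / 3 ≤ ∠ x y z ∨ π / 3 ≤ ∠ y z x ∨ π / 3 ≤ ∠ z x y := by
  by_contra! h
  obtain rfl | hne := eq_or_ne y x
  · linarith [angle_self_left y z, Real.pi_pos]
  · linarith [angle_add_angle_add_angle_eq_pi z hne]

theorem triangle_area_bound_general [MeasurableSpace E] [BorelSpace E] {a : ℝ} (ha : 0 ≤ a)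
    (p : Fin 3 → E) (hside : ∀ i j : Fin 3, i ≠ j → a ≤ dist (p i) (p j)) {c : E}
    (hc1 : dist c (p 0) = dist c (p 1)) (hc2 : dist c (p 1) = dist c (p 2))
    (hcT : c ∈ convexHull ℝ (Set.range p)) :
    ENNReal.ofReal (√3 / 4 * a ^ 2) ≤ μHE[2] (convexHull ℝ (Set.range p)) := by
  have hbound (i j k : Fin 3) (hij : i ≠ j) (hkj : k ≠ j)
      (hcover : ∀ l, l = i ∨ l = j ∨ l = k) (hangle : π / 3 ≤ ∠ (p i) (p j) (p k)) :
      ENNReal.ofReal (√3 / 4 * a ^ 2) ≤ μHE[2] (convexHull ℝ (Set.range p)) := by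
    have hrange : Set.range p = {p i, p j, p k} := by
      refine Set.Subset.antisymm (Set.range_subset_iff.2 fun l ↦ ?_)
        (by simp [Set.insert_subset_iff])
      obtain rfl | rfl | rfl := hcover l <;> simp
    have hcirc (l : Fin 3) : dist c (p l) = dist c (p 0) := by
      fin_cases l <;> simp [hc1, hc2]
    have hle_right : ∠ (p i) (p j) (p k) ≤ π / 2 :=
      angle_le_pi_div_two_of_mem_convexHull ((hcirc i).trans (hcirc j).symm)
        ((hcirc j).trans (hcirc k).symm) (hrange ▸ hcT)
    rw [hrange]
    exact le_euclideanHausdorffMeasure_convexHull_triple ha (hside i j hij) (hside k j hkj) hangle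
      (by linarith [Real.pi_pos])
  obtain h | h | h := exists_pi_div_three_le_angle (p 0) (p 1) (p 2)
  · exact hbound 0 1 2 (by decide) (by decide) (by decide) h
  · exact hbound 1 2 0 (by decide) (by decide) (by decide) h
  · exact hbound 2 0 1 (by decide) (by decide) (by decide) h

end InnerProductSpace

/-- A triangle in `ℝ²` whose sides all have length at least `a` and which contains its
circumcenter has area at least `(√3/4)·a²`. -/
theorem triangle_area_bound (a : ℝ) (ha : 0 < a)
    (p : Fin 3 → EuclideanSpace ℝ (Fin 2))
    (hind : AffineIndependent ℝ p)
    (hside : ∀ i j : Fin 3, i ≠ j → a ≤ dist (p i) (p j))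
    (c : EuclideanSpace ℝ (Fin 2))
    (hc1 : dist c (p 0) = dist c (p 1))
    (hc2 : dist c (p 1) = dist c (p 2))
    (hcT : c ∈ convexHull ℝ (Set.range p)) :
    ENNReal.ofReal (Real.sqrt 3 / 4 * a ^ 2) ≤
      MeasureTheory.volume (convexHull ℝ (Set.range p)) := by
  rw [← EuclideanSpace.euclideanHausdorffMeasure_eq_volume]
  exact triangle_area_bound_general ha.le p hside hc1 hc2 hcT
end

section
/- Let x, y, v be unit vectors in ℝ³, let 0 < ψ < R < π/2, and suppose the spherical distances satisfy δ(x, y) ≥ 2ψ and δ(x, v) = δ(y, v) = R. Let x̄ = x − ⟨x,v⟩·v and ȳ = y − ⟨y,v⟩·v be the components of x and y orthogonal to v, and let ω be the angle between x̄ and ȳ (so cos ω = ⟨x̄, ȳ⟩/(‖x̄‖·‖ȳ‖)). Then: (i) cos ω ≤ 1 − 2·sin²ψ/sin²R; (ii) if moreover ψ = φ − ε and R ≤ r + γ·ε where ψ < φ < r < π/2 − γ·ε and γ > 1 and ε > 0, then cos ω ≤ 1 − 2·sin²φ/sin²r + 4·γ·ε/sin²r. -/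
open scoped RealInnerProductSpace

/-!
The spherical law of cosines in the isosceles triangle with legs `R` and base `δ` reads
`cos ω = 1 - 2 sin²(δ/2) / sin²R`, which gives (i) because `ψ ≤ δ/2 ≤ π/2`.

For (ii), put `q = sin²ψ / sin²R`. Since `-1 ≤ cos ω ≤ 1 - 2q`, we have `0 ≤ q ≤ 1`. As `sin²` is
1-Lipschitz, `sin²φ ≤ sin²ψ + ε = q sin²R + ε ≤ q (sin²r + γε) + ε ≤ q sin²r + (ε + γε)`, so
replacing `q` by `sin²φ / sin²r` in (i) costs at most `2 (ε + γε) / sin²r`.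
-/

open Real InnerProductGeometry

theorem abs_sin_sq_sub_sin_sq_le (a b : ℝ) : |sin a ^ 2 - sin b ^ 2| ≤ |a - b| := by
  have half_angle : sin a ^ 2 - sin b ^ 2 = (cos (2 * b) - cos (2 * a)) / 2 := by
    rw [sin_sq_eq_half_sub, sin_sq_eq_half_sub]
    ring
  calc |sin a ^ 2 - sin b ^ 2| = |cos (2 * b) - cos (2 * a)| / 2 := by
        rw [half_angle, abs_div, abs_two]
    _ ≤ |2 * b - 2 * a| / 2 := div_le_div_of_nonneg_right (abs_cos_sub_cos_le _ _) zero_le_two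
    _ = |a - b| := by rw [← mul_sub, abs_mul, abs_two, abs_sub_comm]; ring

theorem sin_sq_le_sin_sq_add {a b η : ℝ} (ha : 0 ≤ a) (hb : b ≤ π / 2) (hη : 0 ≤ η)
    (hab : a ≤ b + η) : sin a ^ 2 ≤ sin b ^ 2 + η := by
  rcases le_total a b with h | h
  · have sin_a_nonneg : 0 ≤ sin a := sin_nonneg_of_nonneg_of_le_pi ha (by linarith)
    have sin_le : sin a ≤ sin b := sin_le_sin_of_le_of_le_pi_div_two (by linarith) hb h
    exact le_add_of_le_of_nonneg (by gcongr) hη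
  · have lipschitz := (le_abs_self _).trans (abs_sin_sq_sub_sin_sq_le a b)
    rw [abs_of_nonneg (sub_nonneg.2 h)] at lipschitz
    linarith

theorem div_le_div_add_div_of_le_add {𝕜 : Type*} [Field 𝕜] [LinearOrder 𝕜] [IsStrictOrderedRing 𝕜]
    {a b c d ε η : 𝕜} (hc : 0 ≤ c) (hd : 0 < d) (hb : 0 < b) (hη : 0 ≤ η) (hcd : c / d ≤ 1)
    (hac : a ≤ c + ε) (hdb : d ≤ b + η) : a / b ≤ c / d + (ε + η) / b := by
  rw [← sub_le_iff_le_add, ← sub_div, div_le_iff₀ hb, sub_le_iff_le_add]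
  calc a ≤ c + ε := hac
    _ = c / d * d + ε := by rw [div_mul_cancel₀ _ hd.ne']
    _ ≤ c / d * (b + η) + ε := by gcongr
    _ = c / d * b + (ε + c / d * η) := by ring
    _ ≤ c / d * b + (ε + η) := by gcongr; exact mul_le_of_le_one_left hη hcd

section SphericalTriangle

variable {E : Type*} [NormedAddCommGroup E] [InnerProductSpace ℝ E] {x y v : E}

theorem arccos_inner_eq_angle (hx : ‖x‖ = 1) (hy : ‖y‖ = 1) : arccos ⟪x, y⟫ = angle x y := by
  rw [angle, hx, hy, mul_one, div_one]

theorem inner_sub_inner_smul_sub_inner_smul (x y : E) (hv : ‖v‖ = 1) :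
    ⟪x - ⟪x, v⟫ • v, y - ⟪y, v⟫ • v⟫ = ⟪x, y⟫ - ⟪x, v⟫ * ⟪y, v⟫ := by
  simp only [inner_sub_left, inner_sub_right, real_inner_smul_left, real_inner_smul_right,
    real_inner_comm y v, inner_self_eq_one_of_norm_eq_one hv]
  ring

theorem norm_sub_inner_smul (x : E) (hv : ‖v‖ = 1) :
    ‖x - ⟪x, v⟫ • v‖ = ‖x‖ * sin (angle x v) := by
  have sq_eq : ‖x - ⟪x, v⟫ • v‖ ^ 2 = (‖x‖ * sin (angle x v)) ^ 2 := by
    rw [← real_inner_self_eq_norm_sq, inner_sub_inner_smul_sub_inner_smul x x hv,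
      real_inner_self_eq_norm_sq, ← cos_angle_mul_norm_mul_norm x v, hv, mul_pow, sin_sq]
    ring
  exact (sq_eq_sq₀ (norm_nonneg _) (mul_nonneg (norm_nonneg _) (sin_angle_nonneg _ _))).1 sq_eq

theorem spherical_law_of_cosines (hx : x ≠ 0) (hy : y ≠ 0) (hv : ‖v‖ = 1) :
    cos (angle x y) = cos (angle x v) * cos (angle y v) +
      sin (angle x v) * sin (angle y v) * cos (angle (x - ⟪x, v⟫ • v) (y - ⟪y, v⟫ • v)) := by
  refine mul_right_cancel₀ (mul_ne_zero (norm_ne_zero_iff.2 hx) (norm_ne_zero_iff.2 hy)) ?_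
  calc cos (angle x y) * (‖x‖ * ‖y‖) = ⟪x, y⟫ := cos_angle_mul_norm_mul_norm x y
    _ = ⟪x, v⟫ * ⟪y, v⟫ + ⟪x - ⟪x, v⟫ • v, y - ⟪y, v⟫ • v⟫ := by
        rw [inner_sub_inner_smul_sub_inner_smul x y hv, add_sub_cancel]
    _ = cos (angle x v) * (‖x‖ * ‖v‖) * (cos (angle y v) * (‖y‖ * ‖v‖)) +
          cos (angle (x - ⟪x, v⟫ • v) (y - ⟪y, v⟫ • v)) *
            (‖x - ⟪x, v⟫ • v‖ * ‖y - ⟪y, v⟫ • v‖) := by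
        simp only [cos_angle_mul_norm_mul_norm]
    _ = _ := by
        rw [norm_sub_inner_smul x hv, norm_sub_inner_smul y hv, hv]
        ring

theorem cos_angle_sub_inner_smul_of_isosceles {R : ℝ} (hx : x ≠ 0) (hy : y ≠ 0) (hv : ‖v‖ = 1)
    (hR : sin R ≠ 0) (hxv : angle x v = R) (hyv : angle y v = R) :
    cos (angle (x - ⟪x, v⟫ • v) (y - ⟪y, v⟫ • v)) =
      1 - 2 * sin (angle x y / 2) ^ 2 / sin R ^ 2 := by
  have law := spherical_law_of_cosines hx hy hv
  rw [hxv, hyv] at law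
  rw [eq_sub_iff_add_eq, ← eq_sub_iff_add_eq', div_eq_iff (pow_ne_zero 2 hR), sin_sq_eq_half_sub,
    mul_div_cancel₀ _ two_ne_zero, law]
  linear_combination -sin_sq_add_cos_sq R

theorem cos_angle_sub_inner_smul_le {ψ R : ℝ} (hx : x ≠ 0) (hy : y ≠ 0) (hv : ‖v‖ = 1)
    (hψ : 0 ≤ ψ) (hR : sin R ≠ 0) (hxy : 2 * ψ ≤ angle x y)
    (hxv : angle x v = R) (hyv : angle y v = R) :
    cos (angle (x - ⟪x, v⟫ • v) (y - ⟪y, v⟫ • v)) ≤ 1 - 2 * sin ψ ^ 2 / sin R ^ 2 := by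
  have angle_le := angle_le_pi x y
  have sin_nonneg : 0 ≤ sin ψ := sin_nonneg_of_nonneg_of_le_pi hψ (by linarith)
  have sin_le : sin ψ ≤ sin (angle x y / 2) :=
    sin_le_sin_of_le_of_le_pi_div_two (by linarith) (by linarith) (by linarith)
  rw [cos_angle_sub_inner_smul_of_isosceles hx hy hv hR hxv hyv]
  gcongr

theorem circumcenter_angle_general {ψ R : ℝ} (hx : x ≠ 0) (hy : y ≠ 0) (hv : ‖v‖ = 1)
    (hψ : 0 ≤ ψ) (hR0 : 0 < R) (hRπ : R < π) (hxy : 2 * ψ ≤ angle x y)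
    (hxv : angle x v = R) (hyv : angle y v = R) :
    cos (angle (x - ⟪x, v⟫ • v) (y - ⟪y, v⟫ • v)) ≤ 1 - 2 * sin ψ ^ 2 / sin R ^ 2 ∧
    ∀ φ r ε η : ℝ, 0 ≤ ε → 0 ≤ η → 0 ≤ φ → φ ≤ ψ + ε → R ≤ r + η → 0 < r → r ≤ π / 2 →
      cos (angle (x - ⟪x, v⟫ • v) (y - ⟪y, v⟫ • v)) ≤
        1 - 2 * sin φ ^ 2 / sin r ^ 2 + 2 * (ε + η) / sin r ^ 2 := by
  have sin_R_pos : 0 < sin R := sin_pos_of_pos_of_lt_pi hR0 hRπ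
  have bound := cos_angle_sub_inner_smul_le hx hy hv hψ sin_R_pos.ne' hxy hxv hyv
  refine ⟨bound, fun φ r ε η hε hη hφ hφψ hRr hr0 hr => bound.trans ?_⟩
  have sin_r_pos : 0 < sin r := sin_pos_of_pos_of_lt_pi hr0 (by linarith)
  have ratio_le_one : sin ψ ^ 2 / sin R ^ 2 ≤ 1 := by
    linarith [neg_one_le_cos (angle (x - ⟪x, v⟫ • v) (y - ⟪y, v⟫ • v)),
      mul_div_assoc 2 (sin ψ ^ 2) (sin R ^ 2)]
  have sin_φ_sq_le : sin φ ^ 2 ≤ sin ψ ^ 2 + ε :=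
    sin_sq_le_sin_sq_add hφ (by linarith [angle_le_pi x y]) hε hφψ
  have sin_R_sq_le : sin R ^ 2 ≤ sin r ^ 2 + η := sin_sq_le_sin_sq_add hR0.le hr hη hRr
  have ratio_le := div_le_div_add_div_of_le_add (sq_nonneg (sin ψ)) (pow_pos sin_R_pos 2)
    (pow_pos sin_r_pos 2) hη ratio_le_one sin_φ_sq_le sin_R_sq_le
  simp only [mul_div_assoc]
  linarith

end SphericalTriangle

/-- Angle at the circumcenter: if unit vectors `x, y, v ∈ ℝ³` satisfy `δ(x,y) ≥ 2ψ` and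
`δ(x,v) = δ(y,v) = R` with `0 < ψ < R < π/2`, and `ω` is the angle at `v` between the
arcs to `x` and to `y`, then (i) `cos ω ≤ 1 - 2 sin²ψ/sin²R`, and (ii) if `ψ = φ - ε`
and `R ≤ r + γε` with `ψ < φ < r < π/2 - γε`, `γ > 1`, `ε > 0`, then
`cos ω ≤ 1 - 2 sin²φ/sin²r + 4γε/sin²r`. -/
theorem circumcenter_angle (x y v : EuclideanSpace ℝ (Fin 3))
    (hx : ‖x‖ = 1) (hy : ‖y‖ = 1) (hv : ‖v‖ = 1)
    (ψ R : ℝ) (hψ0 : 0 < ψ) (hψR : ψ < R) (hR : R < Real.pi / 2)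
    (hxy : 2 * ψ ≤ Real.arccos ⟪x, y⟫)
    (hxv : Real.arccos ⟪x, v⟫ = R)
    (hyv : Real.arccos ⟪y, v⟫ = R)
    (cosω : ℝ)
    (hcosω : cosω = ⟪x - ⟪x, v⟫ • v, y - ⟪y, v⟫ • v⟫ /
      (‖x - ⟪x, v⟫ • v‖ * ‖y - ⟪y, v⟫ • v‖)) :
    cosω ≤ 1 - 2 * Real.sin ψ ^ 2 / Real.sin R ^ 2 ∧
    (∀ φ r γ ε : ℝ, 0 < ε → 1 < γ → ψ = φ - ε → R ≤ r + γ * ε →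
      ψ < φ → φ < r → r < Real.pi / 2 - γ * ε →
      cosω ≤ 1 - 2 * Real.sin φ ^ 2 / Real.sin r ^ 2 + 4 * γ * ε / Real.sin r ^ 2) := by
  rw [arccos_inner_eq_angle hx hy] at hxy
  rw [arccos_inner_eq_angle hx hv] at hxv
  rw [arccos_inner_eq_angle hy hv] at hyv
  rw [hcosω, ← cos_angle]
  have hx0 : x ≠ 0 := ne_zero_of_norm_ne_zero (hx ▸ one_ne_zero)
  have hy0 : y ≠ 0 := ne_zero_of_norm_ne_zero (hy ▸ one_ne_zero)
  obtain ⟨bound, perturbed⟩ := circumcenter_angle_general hx0 hy0 hv hψ0.le (hψ0.trans hψR)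
    (hR.trans (half_lt_self pi_pos)) hxy hxv hyv
  refine ⟨bound, fun φ r γ ε hε hγ hψ hRr _ hφr hr => ?_⟩
  have hεγ : ε ≤ γ * ε := le_mul_of_one_le_left hε.le hγ.le
  have error_le : 2 * (ε + γ * ε) ≤ 4 * γ * ε := by linarith
  refine (perturbed φ r ε (γ * ε) ?_ ?_ ?_ ?_ hRr ?_ ?_).trans (by gcongr) <;> linarith
end

section
/- Let θ ∈ (0, 1/3) and let u_1, u_2, u_3, u_4 be unit vectors in ℝ³ satisfying ⟨u_i, u_j⟩ ≤ −θ for all i ≠ j. Then the 3-dimensional volume of the convex hull [u_1, u_2, u_3, u_4] is at least √θ/4. -/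
open scoped RealInnerProductSpace

/-!
Let `S = det (1, uᵢ)`, so that the volume of the tetrahedron is `|S| / 6`. Expanding along the
column of ones and applying `det A * det B = det (A * Bᵀ)` to each product of two minors gives
`S² = ∑ i, ∑ j, (adj G) i j`, where `G` is the Gram matrix of the `uᵢ`.

Since `G` has unit diagonal and nonpositive off-diagonal entries, for `{i, j, k, l} = {0, 1, 2, 3}`
every term in the expansion of `(adj G) i j` is nonnegative, and one of them is
`-G i j * (1 - G k l ^ 2) ≥ θ * (1 + G k l)`. The diagonal of `adj G` is nonnegative too, so summing
over `i ≠ j` gives `S² ≥ θ * (8 + ∑ k, ∑ l, G k l) ≥ 8 * θ`, because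
`∑ k, ∑ l, G k l = ‖∑ k, u k‖²`.
-/

open MeasureTheory Matrix
open scoped Nat ENNReal

section OrderSimplex

/-- The order simplex `0 ≤ x₀ ≤ x₁ ≤ ⋯ ≤ 1`, whose images under the permutations of the coordinates
tile the unit cube. It serves as the reference simplex of volume `1 / n!`. -/
def orderSimplex (n : ℕ) : Set (Fin n → ℝ) := {x | Monotone x ∧ x ∈ Set.Icc 0 1}

lemma volume_preimage_comp_perm {ι : Type*} [Fintype ι] (σ : Equiv.Perm ι) (s : Set (ι → ℝ)) :
    volume ((· ∘ σ) ⁻¹' s) = volume s :=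
  (volume_preserving_arrowCongr' σ.symm (MeasurableEquiv.refl ℝ)
    (MeasurePreserving.id _)).measure_preimage_equiv s

lemma Icc_zero_one_subset_iUnion_preimage_orderSimplex (n : ℕ) :
    Set.Icc (0 : Fin n → ℝ) 1 ⊆ ⋃ σ : Equiv.Perm (Fin n), (· ∘ σ) ⁻¹' orderSimplex n := fun x hx ↦
  Set.mem_iUnion.mpr ⟨Tuple.sort x, Tuple.monotone_sort x,
    fun i ↦ hx.1 (Tuple.sort x i), fun i ↦ hx.2 (Tuple.sort x i)⟩

lemma inv_factorial_le_volume_orderSimplex (n : ℕ) : (n ! : ℝ≥0∞)⁻¹ ≤ volume (orderSimplex n) := by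
  have hcube : 1 ≤ (n ! : ℝ≥0∞) * volume (orderSimplex n) := calc
    1 = volume (Set.Icc (0 : Fin n → ℝ) 1) := by simp [Real.volume_Icc_pi]
    _ ≤ ∑ σ : Equiv.Perm (Fin n), volume ((· ∘ σ) ⁻¹' orderSimplex n) :=
      (measure_mono (Icc_zero_one_subset_iUnion_preimage_orderSimplex n)).trans
        (measure_iUnion_fintype_le _ _)
    _ = n ! * volume (orderSimplex n) := by
      simp [volume_preimage_comp_perm, Fintype.card_perm]
  rwa [ENNReal.inv_le_iff_le_mul (fun _ ↦ by simpa using n.factorial_ne_zero) (by simp)]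

variable {n : ℕ} {x : Fin n → ℝ}

lemma vecCons_zero_le_snoc_one (hx : x ∈ orderSimplex n) :
    vecCons 0 x ≤ (Fin.snoc x 1 : Fin (n + 1) → ℝ) := by
  obtain ⟨hmono, h0, h1⟩ := hx
  intro i
  cases i using Fin.lastCases with
  | last =>
    have hle_one (j) : vecCons 0 x j ≤ 1 := by
      cases j using Fin.cases with
      | zero => simp
      | succ k => simpa using h1 k
    simpa using hle_one (Fin.last n)
  | cast m =>
    have hle_of_le (j) (hj : j ≤ m.castSucc) : vecCons 0 x j ≤ x m := by
      cases j using Fin.cases with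
      | zero => simpa using h0 m
      | succ k => simpa using hmono (Fin.succ_le_castSucc_iff.mp hj).le
    simpa using hle_of_le m.castSucc le_rfl

lemma last_add_sum_smul_sub_mem_convexHull {V : Type*} [AddCommGroup V] [Module ℝ V]
    (p : Fin (n + 1) → V) (hx : x ∈ orderSimplex n) :
    p (Fin.last n) + ∑ k, x k • (p k.castSucc - p k.succ) ∈ convexHull ℝ (Set.range p) := by
  let w : Fin (n + 1) → ℝ := (Fin.snoc x 1 : Fin (n + 1) → ℝ) - vecCons 0 x
  have hw_nonneg : 0 ≤ w := sub_nonneg.mpr (vecCons_zero_le_snoc_one hx)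
  have hw_sum : ∑ i, w i = 1 := by
    simp only [w, Pi.sub_apply, Finset.sum_sub_distrib]
    rw [Fin.sum_univ_castSucc, Fin.sum_univ_succ (vecCons 0 x)]
    simp
  have hw_smul : ∑ i, w i • p i = p (Fin.last n) + ∑ k, x k • (p k.castSucc - p k.succ) := by
    simp only [w, Pi.sub_apply, sub_smul, smul_sub, Finset.sum_sub_distrib]
    rw [Fin.sum_univ_castSucc, Fin.sum_univ_succ fun i ↦ vecCons 0 x i • p i]
    simp only [Fin.snoc_castSucc, Fin.snoc_last, cons_val_zero, cons_val_succ, one_smul, zero_smul,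
      zero_add]
    abel
  rw [← hw_smul]
  exact (convex_convexHull ℝ _).sum_mem (fun i _ ↦ hw_nonneg i) hw_sum
    fun i _ ↦ subset_convexHull ℝ _ (Set.mem_range_self i)

end OrderSimplex

section SimplexVolume

/-- The matrix of homogeneous coordinates, with rows `(1, p i)`. -/
def homogeneousMatrix {m n : ℕ} (p : Fin m → Fin n → ℝ) : Matrix (Fin m) (Fin (n + 1)) ℝ :=
  of fun i ↦ vecCons 1 (p i)

/-- The matrix whose rows are the edge vectors `p k - p (k + 1)` of the path through the vertices of
a simplex. -/
def edgeMatrix {n : ℕ} (p : Fin (n + 1) → Fin n → ℝ) : Matrix (Fin n) (Fin n) ℝ :=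
  of fun k ↦ p k.castSucc - p k.succ

variable {n : ℕ}

lemma abs_det_edgeMatrix (p : Fin (n + 1) → Fin n → ℝ) :
    |(edgeMatrix p).det| = |(homogeneousMatrix p).det| := by
  let B : Matrix (Fin (n + 1)) (Fin (n + 1)) ℝ :=
    of (vecCons (vecCons 1 (p 0)) fun k ↦ vecCons 0 (-edgeMatrix p k))
  have hB : (homogeneousMatrix p).det = B.det := by
    refine det_eq_of_forall_row_eq_smul_add_pred (fun _ ↦ 1) (fun j ↦ rfl) fun i j ↦ ?_
    cases j using Fin.cases <;> simp [B, homogeneousMatrix, edgeMatrix]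
  have hminor : B.submatrix Fin.succ Fin.succ = -edgeMatrix p := by ext i j; simp [B]
  rw [hB, det_succ_column_zero, Fin.sum_univ_succ]
  simp [B, hminor, det_neg, abs_mul]

theorem ofReal_abs_det_div_factorial_le_volume_convexHull (p : Fin (n + 1) → Fin n → ℝ) :
    ENNReal.ofReal (|(homogeneousMatrix p).det| / n !) ≤ volume (convexHull ℝ (Set.range p)) := by
  have hsub : (edgeMatrix p)ᵀ.toLin' '' orderSimplex n ⊆
      (p (Fin.last n) + ·) ⁻¹' convexHull ℝ (Set.range p) := by
    rintro _ ⟨x, hx, rfl⟩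
    rw [toLin'_apply, mulVec_transpose, vecMul_eq_sum]
    exact last_add_sum_smul_sub_mem_convexHull p hx
  calc ENNReal.ofReal (|(homogeneousMatrix p).det| / n !)
      = ENNReal.ofReal |(edgeMatrix p).det| * (n ! : ℝ≥0∞)⁻¹ := by
        rw [abs_det_edgeMatrix, ENNReal.ofReal_div_of_pos (by positivity), ENNReal.ofReal_natCast,
          div_eq_mul_inv]
    _ ≤ ENNReal.ofReal |(edgeMatrix p).det| * volume (orderSimplex n) := by
        gcongr
        exact inv_factorial_le_volume_orderSimplex n
    _ = volume ((edgeMatrix p)ᵀ.toLin' '' orderSimplex n) := by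
        rw [Measure.addHaar_image_linearMap, LinearMap.det_toLin', det_transpose]
    _ ≤ volume ((p (Fin.last n) + ·) ⁻¹' convexHull ℝ (Set.range p)) := measure_mono hsub
    _ = volume (convexHull ℝ (Set.range p)) := measure_preimage_add ..

lemma volume_convexHull_range_ofLp {ι κ : Type*} [Fintype κ] (u : ι → EuclideanSpace ℝ κ) :
    volume (convexHull ℝ (Set.range fun i ↦ (u i).ofLp)) = volume (convexHull ℝ (Set.range u)) := by
  let e := WithLp.linearEquiv 2 ℝ (κ → ℝ)
  have himage : convexHull ℝ (Set.range fun i ↦ (u i).ofLp) =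
      WithLp.toLp 2 ⁻¹' convexHull ℝ (Set.range u) := calc
    _ = convexHull ℝ (e '' Set.range u) := by rw [← Set.range_comp]; rfl
    _ = e '' convexHull ℝ (Set.range u) := (e.toLinearMap.image_convexHull _).symm
    _ = WithLp.toLp 2 ⁻¹' convexHull ℝ (Set.range u) := e.toEquiv.image_eq_preimage_symm _
  rw [himage]
  exact (PiLp.volume_preserving_toLp κ).measure_preimage_equiv
    (f := MeasurableEquiv.toLp 2 (κ → ℝ)) _

end SimplexVolume

section Gram

lemma det_mul_det_eq_det_inner {κ : Type*} [Fintype κ] [DecidableEq κ]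
    (v w : κ → EuclideanSpace ℝ κ) :
    det (of fun i ↦ (v i).ofLp) * det (of fun i ↦ (w i).ofLp) = det (of fun i j ↦ ⟪v i, w j⟫) := by
  rw [← det_transpose (of fun i ↦ (w i).ofLp), ← det_mul]
  congr 1
  ext i j
  simp [mul_apply, PiLp.inner_apply, mul_comm]

theorem sq_det_homogeneousMatrix {n : ℕ} (u : Fin (n + 1) → EuclideanSpace ℝ (Fin n)) :
    (homogeneousMatrix fun i ↦ (u i).ofLp).det ^ 2 = ∑ i, ∑ j, (gram ℝ u).adjugate i j := by
  let minor (i : Fin (n + 1)) : ℝ := det (of fun k ↦ (u (i.succAbove k)).ofLp)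
  have hexpand : (homogeneousMatrix fun i ↦ (u i).ofLp).det =
      ∑ i : Fin (n + 1), (-1) ^ (i : ℕ) * minor i := by
    rw [det_succ_column_zero]
    refine Finset.sum_congr rfl fun i _ ↦ ?_
    exact congrArg (· * minor i) (mul_one _)
  rw [hexpand, sq, Finset.sum_mul_sum]
  refine Finset.sum_congr rfl fun i _ ↦ Finset.sum_congr rfl fun j _ ↦ ?_
  calc (-1) ^ (i : ℕ) * minor i * ((-1) ^ (j : ℕ) * minor j)
      = (-1) ^ (j + i : ℕ) * (minor j * minor i) := by ring
    _ = (gram ℝ u).adjugate i j := by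
        rw [det_mul_det_eq_det_inner, adjugate_fin_succ_eq_det_submatrix]
        rfl

end Gram

section Adjugate

lemma adjugate_apply_of_injective {R : Type*} [CommRing R] (A : Matrix (Fin 4) (Fin 4) R)
    {i j k l : Fin 4} (h : Function.Injective ![i, j, k, l]) :
    A.adjugate i j = -A i j * (A k k * A l l - A k l * A l k) +
      A i k * (A k j * A l l - A k l * A l j) + A i l * (A l j * A k k - A l k * A k j) := by
  let e : Equiv.Perm (Fin 4) := Equiv.ofBijective _ (Finite.injective_iff_bijective.mp h)
  have hreindex : A.adjugate i j = (A.submatrix e e).adjugate 0 1 := by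
    rw [adjugate_submatrix_equiv_self]
    rfl
  rw [hreindex, adjugate_fin_succ_eq_det_submatrix, det_fin_three]
  have he : ⇑e = ![i, j, k, l] := rfl
  simp only [submatrix_apply, he, Fin.succAbove, Fin.reduceCastSucc, Fin.reduceSucc, Fin.reduceLT,
    ↓reduceIte, cons_val, Fin.val_zero, Fin.val_one]
  ring

lemma neg_mul_one_sub_sq_le_adjugate_apply {G : Matrix (Fin 4) (Fin 4) ℝ} (hsymm : G.IsSymm)
    (hdiag : ∀ i, G i i = 1) (hoff : ∀ i j, i ≠ j → G i j ≤ 0) {i j k l : Fin 4}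
    (h : Function.Injective ![i, j, k, l]) : -G i j * (1 - G k l ^ 2) ≤ G.adjugate i j := by
  have hik := hoff i k (h.ne (a₁ := 0) (a₂ := 2) (by decide))
  have hil := hoff i l (h.ne (a₁ := 0) (a₂ := 3) (by decide))
  have hkj := hoff k j (h.ne (a₁ := 2) (a₂ := 1) (by decide))
  have hlj := hoff l j (h.ne (a₁ := 3) (a₂ := 1) (by decide))
  have hkl := hoff k l (h.ne (a₁ := 2) (a₂ := 3) (by decide))
  have hk : 0 ≤ G i k * (G k j - G k l * G l j) :=
    mul_nonneg_of_nonpos_of_nonpos hik (by nlinarith)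
  have hl : 0 ≤ G i l * (G l j - G k l * G k j) :=
    mul_nonneg_of_nonpos_of_nonpos hil (by nlinarith)
  rw [adjugate_apply_of_injective G h, hdiag, hdiag, hsymm.apply k l]
  linarith

lemma neg_one_le_apply_of_posSemidef {ι : Type*} {G : Matrix ι ι ℝ} (hG : G.PosSemidef)
    (hdiag : ∀ i, G i i = 1) (k l : ι) : -1 ≤ G k l := by
  have hdet := (hG.submatrix ![k, l]).det_nonneg
  have hsymm : G l k = G k l := hG.isHermitian.apply k l
  simp only [det_fin_two, submatrix_apply, cons_val, hdiag, hsymm] at hdet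
  nlinarith

lemma adjugate_apply_self_nonneg {n : ℕ} {G : Matrix (Fin (n + 1)) (Fin (n + 1)) ℝ}
    (hG : G.PosSemidef) (i : Fin (n + 1)) : 0 ≤ G.adjugate i i := by
  rw [adjugate_fin_succ_eq_det_submatrix, Even.neg_one_pow ⟨_, rfl⟩, one_mul]
  exact (hG.submatrix _).det_nonneg

lemma sum_sum_nonneg_of_posSemidef {ι : Type*} [Fintype ι] {G : Matrix ι ι ℝ}
    (hG : G.PosSemidef) : 0 ≤ ∑ i, ∑ j, G i j := by
  simpa [dotProduct, mulVec] using hG.dotProduct_mulVec_nonneg 1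

theorem eight_mul_le_sum_adjugate {θ : ℝ} (hθ : 0 ≤ θ) {G : Matrix (Fin 4) (Fin 4) ℝ}
    (hG : G.PosSemidef) (hdiag : ∀ i, G i i = 1) (hoff : ∀ i j, i ≠ j → G i j ≤ -θ) :
    8 * θ ≤ ∑ i, ∑ j, G.adjugate i j := by
  have hnonpos (i j) (hij : i ≠ j) : G i j ≤ 0 := (hoff i j hij).trans (neg_nonpos.mpr hθ)
  have hadj (i j k l : Fin 4) (h : Function.Injective ![i, j, k, l]) :
      θ * (1 + G k l) ≤ G.adjugate i j := by
    have hij := hoff i j (h.ne (a₁ := 0) (a₂ := 1) (by decide))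
    have hkl := hnonpos k l (h.ne (a₁ := 2) (a₂ := 3) (by decide))
    have hkl' := neg_one_le_apply_of_posSemidef hG hdiag k l
    calc θ * (1 + G k l) ≤ -G i j * (1 - G k l ^ 2) := by
          apply mul_le_mul <;> nlinarith
      _ ≤ G.adjugate i j :=
          neg_mul_one_sub_sq_le_adjugate_apply hG.isHermitian hdiag hnonpos h
  have hself := adjugate_apply_self_nonneg hG
  have hsum := mul_nonneg hθ (sum_sum_nonneg_of_posSemidef hG)
  simp only [Fin.sum_univ_four, hdiag] at hsum ⊢
  linarith [hself 0, hself 1, hself 2, hself 3,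
    hadj 0 1 2 3 (by decide), hadj 0 2 1 3 (by decide), hadj 0 3 1 2 (by decide),
    hadj 1 0 3 2 (by decide), hadj 1 2 0 3 (by decide), hadj 1 3 0 2 (by decide),
    hadj 2 0 3 1 (by decide), hadj 2 1 3 0 (by decide), hadj 2 3 0 1 (by decide),
    hadj 3 0 2 1 (by decide), hadj 3 1 2 0 (by decide), hadj 3 2 1 0 (by decide)]

end Adjugate

theorem tetrahedron_volume_general {θ : ℝ} (hθ : 0 ≤ θ)
    (u : Fin 4 → EuclideanSpace ℝ (Fin 3)) (hu : ∀ i, ‖u i‖ = 1)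
    (hinner : ∀ i j : Fin 4, i ≠ j → ⟪u i, u j⟫ ≤ -θ) :
    ENNReal.ofReal (√(2 * θ) / 3) ≤ volume (convexHull ℝ (Set.range u)) := by
  have hsq : 8 * θ ≤ (homogeneousMatrix fun i ↦ (u i).ofLp).det ^ 2 := by
    rw [sq_det_homogeneousMatrix]
    exact eight_mul_le_sum_adjugate hθ (posSemidef_gram ℝ u) (by simp [hu]) hinner
  have hdet : 2 * √(2 * θ) ≤ |(homogeneousMatrix fun i ↦ (u i).ofLp).det| := by
    refine (le_abs_self _).trans (sq_le_sq.mp ?_)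
    rw [mul_pow, Real.sq_sqrt (by positivity)]
    linarith
  calc ENNReal.ofReal (√(2 * θ) / 3)
      ≤ ENNReal.ofReal (|(homogeneousMatrix fun i ↦ (u i).ofLp).det| / 3 !) :=
        ENNReal.ofReal_le_ofReal (by rw [show (3 ! : ℝ) = 6 by norm_num]; linarith)
    _ ≤ volume (convexHull ℝ (Set.range fun i ↦ (u i).ofLp)) :=
        ofReal_abs_det_div_factorial_le_volume_convexHull _
    _ = volume (convexHull ℝ (Set.range u)) := volume_convexHull_range_ofLp u

/-- Volume of a well-spread spherical tetrahedron: if `θ ∈ (0, 1/3)` and four unit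
vectors in `ℝ³` have pairwise inner products at most `-θ`, then the volume of their
convex hull is at least `√θ/4`. -/
theorem tetrahedron_volume (θ : ℝ) (hθ : θ ∈ Set.Ioo (0 : ℝ) (1 / 3))
    (u : Fin 4 → EuclideanSpace ℝ (Fin 3))
    (hu : ∀ i, ‖u i‖ = 1)
    (hinner : ∀ i j : Fin 4, i ≠ j → ⟪u i, u j⟫ ≤ -θ) :
    ENNReal.ofReal (Real.sqrt θ / 4) ≤
      MeasureTheory.volume (convexHull ℝ (Set.range u)) := by
  have hsqrt : √θ ≤ √(2 * θ) := Real.sqrt_le_sqrt (by linarith [hθ.1])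
  exact (ENNReal.ofReal_le_ofReal (by linarith [Real.sqrt_nonneg θ])).trans
    (tetrahedron_volume_general hθ.1.le u hu hinner)
end
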